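/- (Lochak–Marco) Define 𝓕_* = Φ^{½(I₁²+I₂²) + cos(2πθ₁)} : 𝔸² → 𝔸². For σ > 0, let q_σ be the smallest positive integer with ⌊ln(q_σ)/(4πσ) + 1⌋ = 1, and for q ≥ q_σ set ν(q, σ) = 2⌊ln(q)/(4πσ) + 1⌋ (an even integer ≥ 2) and f_q(θ₁, θ₂) = (sin πθ₁)^{ν(q,σ)} · (−π^{−1}(2 + sin 2π(θ₂ + 6^{−1}))). Define 𝓕_q = Φ^{q^{−1}f_q} ∘ 𝓕_* : 𝔸² → 𝔸², and for k ∈ ℤ let ξ_{q,k} ∈ 𝔸² be the point with coordinates θ₁ = 1/2, I₁ = 2, θ₂ = 0, I₂ = q^{−1}(k+1). Then there exist a width σ > 0, an integer q₀ and a constant 0 < d < 1 such that for every q ≥ q₀, the diffeomorphism 𝓕_q has a point ζ_q ∈ 𝔸² satisfying |𝓕_q^{kq}(ζ_q) − ξ_{q,k}| ≤ d^{ν(q,σ)} for every k ∈ ℤ. In particular the orbit of ζ_q is wandering, and |𝓕_q^{3q²}(ζ_q) − ζ_q| ≥ 3 − 2d^{ν(q,σ)} ≥ 1. -/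

import Mathlib

open scoped BigOperators
open Real

noncomputable section

/-- The circle `𝕋 = ℝ/ℤ`. -/
abbrev T1 := AddCircle (1 : ℝ)

instance : Fact ((0 : ℝ) < 1) := ⟨one_pos⟩

/-- The annulus `𝔸^N = 𝕋^N × ℝ^N` with angle-action coordinates. -/
abbrev Ann (N : ℕ) := (Fin N → T1) × (Fin N → ℝ)

/-- Projection of the universal cover `ℝ^N × ℝ^N` onto the annulus `𝔸^N`. -/
noncomputable def projAnn (N : ℕ) : ((Fin N → ℝ) × (Fin N → ℝ)) → Ann N :=
  fun x => (fun i => (x.1 i : T1), x.2)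

/-- `Φ` is the complete flow of the Hamiltonian `H` on the annulus `𝔸^N`: it is a
one-parameter family of maps whose orbits lift to curves on the universal cover solving
Hamilton's equations `θ' = ∂H/∂I`, `I' = −∂H/∂θ`.  `Φ 1` is the time-one map `Φ^H`. -/
def IsHamFlow (N : ℕ) (H : Ann N → ℝ) (Φ : ℝ → Ann N → Ann N) : Prop :=
  (∀ x, Φ 0 x = x) ∧ (∀ s t : ℝ, ∀ x, Φ (s + t) x = Φ s (Φ t x)) ∧
    ∀ x : Ann N, ∃ c : ℝ → (Fin N → ℝ) × (Fin N → ℝ),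
      (∀ t, projAnn N (c t) = Φ t x) ∧
      ∀ t : ℝ, ∀ i : Fin N,
        HasDerivAt (fun s => (c s).1 i)
          (fderiv ℝ (H ∘ projAnn N) (c t) ((0 : Fin N → ℝ), Pi.single i 1)) t ∧
        HasDerivAt (fun s => (c s).2 i)
          (-(fderiv ℝ (H ∘ projAnn N) (c t) (Pi.single i 1, (0 : Fin N → ℝ)))) t

/-- The canonical representative in `[0,1)` of a point of the circle. -/
noncomputable def rep (θ : T1) : ℝ := ((AddCircle.equivIco 1 0) θ).1

/-- The function `θ ↦ cos (2πθ)` on the circle. -/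
noncomputable def cosC (θ : T1) : ℝ := Real.cos (2 * Real.pi * rep θ)

/-- The value `sin(πθ)` computed from the canonical representative; its even powers are
well-defined `1`-periodic functions of `θ`. -/
noncomputable def sinHalf (θ : T1) : ℝ := Real.sin (Real.pi * rep θ)

/-- The function `θ ↦ sin (2πθ)` on the circle. -/
noncomputable def sin2C (θ : T1) : ℝ := Real.sin (2 * Real.pi * rep θ)

/-- The a priori unstable Hamiltonian `½(I₁² + I₂²) + cos(2πθ₁)` on `𝔸²`. -/
noncomputable def Hstar : Ann 2 → ℝ :=
  fun z => (1 / 2) * ((z.2 0) ^ 2 + (z.2 1) ^ 2) + cosC (z.1 0)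

/-- The even exponent `ν(q, σ) = 2⌊ln(q)/(4πσ) + 1⌋`. -/
noncomputable def nuExp (σ : ℝ) (q : ℕ) : ℕ :=
  2 * ⌊Real.log q / (4 * Real.pi * σ) + 1⌋₊

/-- The coupling function
`f_q(θ₁, θ₂) = (sin πθ₁)^{ν(q,σ)} · (−π⁻¹(2 + sin 2π(θ₂ + 6⁻¹)))` on `𝔸²`. -/
noncomputable def fqFun (σ : ℝ) (q : ℕ) : Ann 2 → ℝ :=
  fun z => (sinHalf (z.1 0)) ^ (nuExp σ q) *
    (-(Real.pi)⁻¹ * (2 + sin2C (z.1 1 + (((6 : ℝ)⁻¹ : ℝ) : T1))))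

/-- The wandering reference points `ξ_{q,k} = (θ₁ = 1/2, I₁ = 2, θ₂ = 0, I₂ = (k+1)/q)`. -/
noncomputable def xiPt (q : ℕ) (k : ℤ) : Ann 2 :=
  (fun i => if i = 0 then (((1 : ℝ) / 2 : ℝ) : T1) else ((0 : ℝ) : T1),
   fun i => if i = 0 then (2 : ℝ) else (q : ℝ)⁻¹ * ((k : ℝ) + 1))


/-- The phase space of the lifted map, with coordinates `((x, p), (y, J))`. -/
abbrev E4 := (ℝ × ℝ) × (ℝ × ℝ)

/-- Diagonal map. -/
def dg (a b c d : ℝ) (z : E4) : E4 := ((a * z.1.1, b * z.1.2), (c * z.2.1, d * z.2.2))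

lemma E4_norm_le {z : E4} {r : ℝ} :
    ‖z‖ ≤ r ↔ (|z.1.1| ≤ r ∧ |z.1.2| ≤ r) ∧ (|z.2.1| ≤ r ∧ |z.2.2| ≤ r) := by
  rw [Prod.norm_def, max_le_iff, Prod.norm_def, Prod.norm_def, max_le_iff, max_le_iff]
  simp only [Real.norm_eq_abs]

lemma E4_abs_le (z : E4) :
    (|z.1.1| ≤ ‖z‖ ∧ |z.1.2| ≤ ‖z‖) ∧ (|z.2.1| ≤ ‖z‖ ∧ |z.2.2| ≤ ‖z‖) :=
  E4_norm_le.1 le_rfl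

lemma P2_norm_le {z : ℝ × ℝ} {r : ℝ} : ‖z‖ ≤ r ↔ |z.1| ≤ r ∧ |z.2| ≤ r := by
  rw [Prod.norm_def, max_le_iff]
  simp only [Real.norm_eq_abs]

lemma P2_abs_le (z : ℝ × ℝ) : |z.1| ≤ ‖z‖ ∧ |z.2| ≤ ‖z‖ := P2_norm_le.1 le_rfl

section Shadow

/-- The implicit (forward / backward) step. -/
def shadowStep (α₁ γ₁ α₂ γ₂ : ℤ → ℝ) (N : ℤ → E4 → E4) (ζ : ℤ → E4) (n : ℤ) : E4 :=
  ((α₁ (n-1) * (ζ (n-1)).1.1 + (N (n-1) (ζ (n-1))).1.1,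
    γ₁ n * ((ζ (n+1)).1.2 - (N n (ζ n)).1.2)),
   (α₂ (n-1) * (ζ (n-1)).2.1 + (N (n-1) (ζ (n-1))).2.1,
    γ₂ n * ((ζ (n+1)).2.2 - (N n (ζ n)).2.2)))

lemma fwd_est {α θ ε x x' y y' D : ℝ} (ha : |α| ≤ θ) (hx : |x - x'| ≤ D) (hy : |y - y'| ≤ ε * D)
    (hD : 0 ≤ D) : |α * x + y - (α * x' + y')| ≤ (θ + ε) * D := by
  have : α * x + y - (α * x' + y') = α * (x - x') + (y - y') := by ring
  rw [this]
  have h0 : 0 ≤ θ := (abs_nonneg _).trans ha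
  calc _ ≤ |α * (x - x')| + |y - y'| := abs_add_le _ _
    _ ≤ θ * D + ε * D := by
      rw [abs_mul]
      gcongr
    _ = _ := by ring

lemma bwd_est {γ θ ε x x' y y' D : ℝ} (ha : |γ| ≤ θ) (hθ : θ ≤ 1) (hε : 0 ≤ ε)
    (hx : |x - x'| ≤ D) (hy : |y - y'| ≤ ε * D)
    (hD : 0 ≤ D) : |γ * (x - y) - γ * (x' - y')| ≤ (θ + ε) * D := by
  have : γ * (x - y) - γ * (x' - y') = γ * ((x - x') - (y - y')) := by ring
  rw [this, abs_mul]
  have h1 : |(x - x') - (y - y')| ≤ D + ε * D := by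
    calc _ ≤ |x - x'| + |y - y'| := abs_sub _ _
      _ ≤ _ := by gcongr
  have h0 : 0 ≤ θ := (abs_nonneg _).trans ha
  calc _ ≤ θ * (D + ε * D) := by gcongr
    _ ≤ _ := by nlinarith [mul_nonneg hε hD]

lemma shadowStep_lip {α₁ γ₁ α₂ γ₂ : ℤ → ℝ} {N : ℤ → E4 → E4} {θ ε r : ℝ}
    (hα₁ : ∀ n, |α₁ n| ≤ θ) (hγ₁ : ∀ n, |γ₁ n| ≤ θ) (hα₂ : ∀ n, |α₂ n| ≤ θ)
    (hγ₂ : ∀ n, |γ₂ n| ≤ θ) (hθ : θ ≤ 1) (hε : 0 ≤ ε)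
    (hN : ∀ n ζ ζ', ‖ζ‖ ≤ r → ‖ζ'‖ ≤ r → ‖N n ζ - N n ζ'‖ ≤ ε * ‖ζ - ζ'‖)
    {ζ ζ' : ℤ → E4} (h : ∀ n, ‖ζ n‖ ≤ r) (h' : ∀ n, ‖ζ' n‖ ≤ r) {D : ℝ}
    (hD : ∀ n, ‖ζ n - ζ' n‖ ≤ D) (n : ℤ) :
    ‖shadowStep α₁ γ₁ α₂ γ₂ N ζ n - shadowStep α₁ γ₁ α₂ γ₂ N ζ' n‖ ≤ (θ + ε) * D := by
  have hD0 : 0 ≤ D := (norm_nonneg _).trans (hD 0)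
  have e : ∀ n, ‖N n (ζ n) - N n (ζ' n)‖ ≤ ε * D := fun n =>
    (hN n _ _ (h n) (h' n)).trans (by gcongr; exact hD n)
  have e' := fun n => E4_norm_le.1 (e n)
  have d' := fun n => E4_norm_le.1 (hD n)
  rw [E4_norm_le]
  exact ⟨⟨fwd_est (hα₁ _) (d' _).1.1 (e' _).1.1 hD0,
    bwd_est (hγ₁ _) hθ hε (d' _).1.2 (e' _).1.2 hD0⟩,
    fwd_est (hα₂ _) (d' _).2.1 (e' _).2.1 hD0,
    bwd_est (hγ₂ _) hθ hε (d' _).2.2 (e' _).2.2 hD0⟩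

theorem shadow_fix {α₁ γ₁ α₂ γ₂ : ℤ → ℝ} {N : ℤ → E4 → E4} {θ ε r δ : ℝ}
    (hα₁ : ∀ n, |α₁ n| ≤ θ) (hγ₁ : ∀ n, |γ₁ n| ≤ θ) (hα₂ : ∀ n, |α₂ n| ≤ θ)
    (hγ₂ : ∀ n, |γ₂ n| ≤ θ) (hε : 0 ≤ ε) (hr : 0 ≤ r) (hδ : 0 ≤ δ)
    (hN : ∀ n ζ ζ', ‖ζ‖ ≤ r → ‖ζ'‖ ≤ r → ‖N n ζ - N n ζ'‖ ≤ ε * ‖ζ - ζ'‖)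
    (hN0 : ∀ n, ‖N n 0‖ ≤ δ) (hc : θ + ε < 1) (hδr : δ ≤ (1 - θ - ε) * r) :
    ∃ ζ : ℤ → E4, (∀ n, ‖ζ n‖ ≤ r) ∧ shadowStep α₁ γ₁ α₂ γ₂ N ζ = ζ := by
  have hθ0 : 0 ≤ θ := (abs_nonneg _).trans (hα₁ 0)
  have hθ : θ ≤ 1 := by linarith
  have hs0 : ∀ n, ‖shadowStep α₁ γ₁ α₂ γ₂ N 0 n‖ ≤ δ := by
    intro n
    have e' := fun n => E4_norm_le.1 (hN0 n)
    have key : ∀ {γ y : ℝ}, |γ| ≤ θ → |y| ≤ δ → |γ * (0 - y)| ≤ δ := by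
      intro γ y h1 h2
      rw [abs_mul, zero_sub, abs_neg]
      nlinarith [abs_nonneg γ, abs_nonneg y]
    have key' : ∀ {γ y : ℝ}, |y| ≤ δ → |γ * 0 + y| ≤ δ := by
      intro γ y h2
      simpa using h2
    rw [E4_norm_le]
    exact ⟨⟨key' (e' _).1.1, key (hγ₁ _) (e' _).1.2⟩, key' (e' _).2.1, key (hγ₂ _) (e' _).2.2⟩
  have hball : ∀ ζ : ℤ → E4, (∀ n, ‖ζ n‖ ≤ r) → ∀ n, ‖shadowStep α₁ γ₁ α₂ γ₂ N ζ n‖ ≤ r := by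
    intro ζ h n
    have h1 := shadowStep_lip hα₁ hγ₁ hα₂ hγ₂ hθ hε hN h (ζ' := 0) (fun n => by simpa using hr)
      (D := r) (fun n => by simpa using h n) n
    have h2 := hs0 n
    calc _ ≤ ‖shadowStep α₁ γ₁ α₂ γ₂ N ζ n - shadowStep α₁ γ₁ α₂ γ₂ N 0 n‖ +
          ‖shadowStep α₁ γ₁ α₂ γ₂ N 0 n‖ := by
            simpa using norm_add_le (shadowStep α₁ γ₁ α₂ γ₂ N ζ n - shadowStep α₁ γ₁ α₂ γ₂ N 0 n)
              (shadowStep α₁ γ₁ α₂ γ₂ N 0 n)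
      _ ≤ (θ + ε) * r + δ := add_le_add h1 h2
      _ ≤ r := by linarith
  let X := Metric.closedBall (0 : BoundedContinuousFunction ℤ E4) r
  have hX : ∀ f : X, ∀ n, ‖f.1 n‖ ≤ r := fun f n =>
    (f.1.norm_coe_le_norm n).trans (mem_closedBall_zero_iff.1 f.2)
  have : CompleteSpace X := (Metric.isClosed_closedBall).completeSpace_coe
  have : Nonempty X := ⟨⟨0, by simpa [X] using hr⟩⟩
  let S : X → X := fun f =>
    ⟨BoundedContinuousFunction.ofNormedAddCommGroupDiscrete
      (shadowStep α₁ γ₁ α₂ γ₂ N f.1) r (hball _ (hX f)), by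
        simp only [X, mem_closedBall_zero_iff]
        exact (BoundedContinuousFunction.norm_le hr).2 (hball _ (hX f))⟩
  have hS : ContractingWith ⟨θ + ε, by positivity⟩ S := by
    refine ⟨by exact_mod_cast hc, LipschitzWith.of_dist_le_mul ?_⟩
    intro f g
    change dist (S f).1 (S g).1 ≤ (θ + ε) * dist f.1 g.1
    refine (BoundedContinuousFunction.dist_le (by positivity)).2 ?_
    intro n
    rw [dist_eq_norm]
    refine shadowStep_lip hα₁ hγ₁ hα₂ hγ₂ hθ hε hN (hX f) (hX g) ?_ n
    intro n
    rw [← dist_eq_norm]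
    exact BoundedContinuousFunction.dist_coe_le_dist n
  refine ⟨(hS.fixedPoint S).1, hX _, ?_⟩
  have h2 := congrArg (fun f : X => (f.1 : ℤ → E4)) hS.fixedPoint_isFixedPt
  exact h2

/-- Abstract shadowing lemma. -/
theorem shadowing (F : E4 → E4) (b : ℤ → E4) (M Minv : ℤ → E4 →ₗ[ℝ] E4)
    (α₁ β₁ α₂ β₂ : ℤ → ℝ) {θ r m η δ : ℝ}
    (hMM : ∀ n w, M n (Minv n w) = w)
    (hMM' : ∀ n w, Minv n (M n w) = w)
    (hMinv : ∀ n w, ‖Minv n w‖ ≤ m * ‖w‖)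
    (hα₁ : ∀ n, |α₁ n| ≤ θ) (hβ₁ : ∀ n, β₁ n ≠ 0 ∧ |(β₁ n)⁻¹| ≤ θ)
    (hα₂ : ∀ n, |α₂ n| ≤ θ) (hβ₂ : ∀ n, β₂ n ≠ 0 ∧ |(β₂ n)⁻¹| ≤ θ)
    (hm : 0 ≤ m) (hη : 0 ≤ η) (hr : 0 ≤ r) (hδ : 0 ≤ δ)
    (hF : ∀ n ζ ζ', ‖ζ‖ ≤ r → ‖ζ'‖ ≤ r →
      ‖F (b n + M n ζ) - F (b n + M n ζ') -
        M (n+1) (dg (α₁ n) (β₁ n) (α₂ n) (β₂ n) (ζ - ζ'))‖ ≤ η * ‖ζ - ζ'‖)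
    (hb : ∀ n, ‖F (b n) - b (n+1)‖ ≤ δ)
    (hc : θ + m * η < 1) (hδr : m * δ ≤ (1 - θ - m * η) * r) :
    ∃ ζ : ℤ → E4, (∀ n, ‖ζ n‖ ≤ r) ∧
      ∀ n, F (b n + M n (ζ n)) = b (n+1) + M (n+1) (ζ (n+1)) := by
  set N : ℤ → E4 → E4 := fun n ζ => Minv (n+1) (F (b n + M n ζ) - b (n+1)) -
    dg (α₁ n) (β₁ n) (α₂ n) (β₂ n) ζ with hNdef
  have hdg : ∀ a b c d z z', dg a b c d z - dg a b c d z' = dg a b c d (z - z') := by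
    intro a b c d z z'
    simp only [dg, Prod.mk_sub_mk, Prod.fst_sub, Prod.snd_sub, mul_sub]
  obtain ⟨ζ, h1, h2⟩ := shadow_fix (α₁ := α₁) (γ₁ := fun n => (β₁ n)⁻¹) (α₂ := α₂)
    (γ₂ := fun n => (β₂ n)⁻¹) (N := N) (θ := θ) (ε := m * η) (r := r) (δ := m * δ)
    hα₁ (fun n => (hβ₁ n).2) hα₂ (fun n => (hβ₂ n).2) (by positivity) hr (by positivity)
    (by
      intro n ζ ζ' hz hz'
      have : N n ζ - N n ζ' = Minv (n+1) (F (b n + M n ζ) - F (b n + M n ζ') -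
        M (n+1) (dg (α₁ n) (β₁ n) (α₂ n) (β₂ n) (ζ - ζ'))) := by
        simp only [hNdef, map_sub, hMM', ← hdg]
        abel
      rw [this, mul_assoc]
      exact (hMinv _ _).trans (by gcongr; exact hF n ζ ζ' hz hz'))
    (by
      intro n
      have : N n 0 = Minv (n+1) (F (b n) - b (n+1)) := by
        simp [hNdef, dg]
      rw [this]
      exact (hMinv _ _).trans (by gcongr; exact hb n))
    hc hδr
  refine ⟨ζ, h1, fun n => ?_⟩
  have key : ζ (n+1) = dg (α₁ n) (β₁ n) (α₂ n) (β₂ n) (ζ n) + N n (ζ n) := by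
    have e1 := congrFun h2 (n+1)
    have e2 := congrFun h2 n
    simp only [shadowStep, add_sub_cancel_right] at e1 e2
    have b1 := (hβ₁ n).1
    have b2 := (hβ₂ n).1
    have f1 : (ζ n).1.2 = (β₁ n)⁻¹ * ((ζ (n+1)).1.2 - (N n (ζ n)).1.2) := by
      conv_lhs => rw [← e2]
    have f2 : (ζ n).2.2 = (β₂ n)⁻¹ * ((ζ (n+1)).2.2 - (N n (ζ n)).2.2) := by
      conv_lhs => rw [← e2]
    have f3 : (ζ (n+1)).1.1 = α₁ n * (ζ n).1.1 + (N n (ζ n)).1.1 := by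
      conv_lhs => rw [← e1]
    have f4 : (ζ (n+1)).2.1 = α₂ n * (ζ n).2.1 + (N n (ζ n)).2.1 := by
      conv_lhs => rw [← e1]
    refine Prod.ext (Prod.ext ?_ ?_) (Prod.ext ?_ ?_)
    · exact f3
    · simp only [dg, Prod.fst_add, Prod.snd_add]
      rw [f1]; field_simp; ring
    · exact f4
    · simp only [dg, Prod.fst_add, Prod.snd_add]
      rw [f2]; field_simp; ring
  have : ζ (n+1) = Minv (n+1) (F (b n + M n (ζ n)) - b (n+1)) := by
    rw [key]; simp only [hNdef]; abel
  rw [this, hMM]; abel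

end Shadow

/-- `C^{1,1}` estimate in one variable. -/
lemma c11 {f f' : ℝ → ℝ} {A : ℝ} (hf : ∀ x, HasDerivAt f (f' x) x)
    (hA : ∀ x y, |f' x - f' y| ≤ A * |x - y|) (hA0 : 0 ≤ A) {x x' x₀ ρ : ℝ}
    (hx : |x - x₀| ≤ ρ) (hx' : |x' - x₀| ≤ ρ) :
    |f x - f x' - f' x₀ * (x - x')| ≤ A * ρ * |x - x'| := by
  have h := (convex_closedBall x₀ ρ).norm_image_sub_le_of_norm_hasDerivWithin_le
    (f := fun t => f t - f' x₀ * t) (f' := fun t => f' t - f' x₀) (C := A * ρ)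
    (x := x') (y := x) (fun t _ => by
      have := (hf t).fun_sub ((hasDerivAt_id t).const_mul (f' x₀))
      simp only [id, mul_one] at this
      exact this.hasDerivWithinAt) (fun t ht => by
      rw [Real.norm_eq_abs]
      refine (hA t x₀).trans ?_
      gcongr
      simpa [Real.dist_eq] using ht) (by simpa [Real.dist_eq] using hx')
      (by simpa [Real.dist_eq] using hx)
  simp only [Real.norm_eq_abs] at h
  convert h using 2
  ring

lemma lip_of_deriv {f f' : ℝ → ℝ} {A : ℝ} (hf : ∀ x, HasDerivAt f (f' x) x)
    (hA : ∀ x, |f' x| ≤ A) (x y : ℝ) : |f x - f y| ≤ A * |x - y| := by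
  have h := (convex_univ).norm_image_sub_le_of_norm_hasDerivWithin_le
    (f := f) (f' := f') (C := A) (x := y) (y := x) (fun t _ => (hf t).hasDerivWithinAt)
    (fun t _ => hA t) (Set.mem_univ _) (Set.mem_univ _)
  simpa using h

/-- The pendulum vector field. -/
def pV (z : ℝ × ℝ) : ℝ × ℝ := (z.2, 2 * π * Real.sin (2 * π * z.1))

lemma hasDerivAt_sin2 (x : ℝ) : HasDerivAt (fun t => 2 * π * Real.sin (2 * π * t))
    (4 * π ^ 2 * Real.cos (2 * π * x)) x := by
  have h := (((hasDerivAt_id x).const_mul (2 * π)).sin).const_mul (2 * π)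
  exact h.congr_deriv (by simp only [id]; ring)

lemma hasDerivAt_cos2 (x : ℝ) : HasDerivAt (fun t => 4 * π ^ 2 * Real.cos (2 * π * t))
    (- (8 * π ^ 3 * Real.sin (2 * π * x))) x := by
  have h := (((hasDerivAt_id x).const_mul (2 * π)).cos).const_mul (4 * π ^ 2)
  exact h.congr_deriv (by simp only [id]; ring)

lemma pi_sq_lt : π ^ 2 < 10 := by nlinarith [Real.pi_lt_d2, Real.pi_pos]

lemma pi_cub_lt : π ^ 3 < 40 := by nlinarith [Real.pi_lt_d2, Real.pi_pos, pi_sq_lt]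

lemma sin2_lip (x y : ℝ) :
    |2 * π * Real.sin (2 * π * x) - 2 * π * Real.sin (2 * π * y)| ≤ 40 * |x - y| := by
  refine lip_of_deriv hasDerivAt_sin2 (fun x => ?_) x y
  rw [abs_mul, abs_of_pos (by positivity)]
  nlinarith [Real.abs_cos_le_one (2 * π * x), pi_sq_lt, abs_nonneg (Real.cos (2 * π * x)),
    Real.pi_pos]

lemma cos2_lip (x y : ℝ) :
    |4 * π ^ 2 * Real.cos (2 * π * x) - 4 * π ^ 2 * Real.cos (2 * π * y)| ≤ 320 * |x - y| := by
  refine lip_of_deriv hasDerivAt_cos2 (fun x => ?_) x y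
  rw [abs_neg, abs_mul, abs_of_pos (by positivity)]
  nlinarith [Real.abs_sin_le_one (2 * π * x), pi_cub_lt, abs_nonneg (Real.sin (2 * π * x)),
    pow_pos Real.pi_pos 3]

lemma pV_lip (z w : ℝ × ℝ) : ‖pV z - pV w‖ ≤ 40 * ‖z - w‖ := by
  have h := P2_abs_le (z - w)
  rw [P2_norm_le]
  refine ⟨?_, (sin2_lip _ _).trans ?_⟩
  · have := h.2
    simp only [pV, Prod.fst_sub, Prod.snd_sub] at this ⊢
    linarith [norm_nonneg (z - w)]
  · have := h.1
    simp only [Prod.fst_sub] at this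
    linarith

lemma pV_lipschitz : LipschitzWith 40 pV :=
  LipschitzWith.of_dist_le_mul (fun z w => by simpa [dist_eq_norm] using pV_lip z w)

lemma pV_local (z : ℝ × ℝ) (T : ℝ) (hT : 0 < T) : ∃ γ : ℝ → ℝ × ℝ, γ 0 = z ∧
    ∀ t ∈ Set.Ioo (-T) T, HasDerivAt γ (pV (γ t)) t := by
  obtain ⟨x, p⟩ := z
  set e : ℝ := 1 / (4 * T) with he
  have he0 : 0 < e := by positivity
  have heT : e * T = 1 / 4 := by rw [he]; field_simp
  let g : ℝ × ℝ → ℝ × ℝ := fun z => (e * z.2, 2 * π * Real.sin (2 * π * (z.1 / e)))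
  let a : NNReal := ⟨|p| + 14 * T, by positivity⟩
  let L : NNReal := ⟨e * (|p| + (|p| + 14 * T)) + 7, by positivity⟩
  let K : NNReal := ⟨e + 40 / e, by positivity⟩
  have hPL : IsPicardLindelof (fun _ => g) (tmin := -T) (tmax := T)
      ⟨0, by constructor <;> linarith⟩ (e * x, p) a 0 L K := by
    refine ⟨fun t _ => LipschitzWith.lipschitzOnWith (LipschitzWith.of_dist_le_mul ?_),
      fun _ _ => continuousOn_const, ?_, ?_⟩
    · intro z w
      rw [dist_eq_norm, dist_eq_norm]
      have h := P2_abs_le (z - w)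
      simp only [Prod.fst_sub, Prod.snd_sub] at h
      change _ ≤ (e + 40 / e) * _
      rw [P2_norm_le]
      refine ⟨?_, (sin2_lip _ _).trans ?_⟩
      · simp only [g, Prod.fst_sub]
        rw [← mul_sub, abs_mul, abs_of_pos he0]
        have : 0 ≤ 40 / e * ‖z - w‖ := by positivity
        nlinarith [h.2]
      · rw [← sub_div, abs_div, abs_of_pos he0]
        have : 0 ≤ e * ‖z - w‖ := by positivity
        have h2 : 40 * (|z.1 - w.1| / e) ≤ 40 / e * ‖z - w‖ := by
          rw [mul_div_assoc', div_mul_eq_mul_div]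
          gcongr
          exact h.1
        nlinarith
    · intro t _ z hz
      change _ ≤ e * (|p| + (|p| + 14 * T)) + 7
      have hz' : ‖z - (e * x, p)‖ ≤ |p| + 14 * T := by
        have := mem_closedBall_iff_norm.1 hz
        exact this
      have h := (P2_abs_le (z - (e * x, p))).2.trans hz'
      simp only [Prod.snd_sub] at h
      have hp : |z.2| ≤ |p| + (|p| + 14 * T) := by
        have := abs_add_le (z.2 - p) p
        simp only [sub_add_cancel] at this
        linarith
      rw [P2_norm_le]
      constructor
      · simp only [g]
        rw [abs_mul, abs_of_pos he0]
        have := mul_le_mul_of_nonneg_left hp he0.le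
        linarith
      · simp only [g]
        have h1 : 0 ≤ e * (|p| + (|p| + 14 * T)) := by positivity
        rw [abs_mul, abs_of_pos (by positivity)]
        nlinarith [Real.abs_sin_le_one (2 * π * (z.1 / e)), Real.pi_lt_d2, Real.pi_pos,
          abs_nonneg (Real.sin (2 * π * (z.1 / e)))]
    · change (e * (|p| + (|p| + 14 * T)) + 7) * max (T - 0) (0 - -T) ≤ (|p| + 14 * T) - 0
      simp only [sub_zero, zero_sub, neg_neg, max_self]
      have : (e * (|p| + (|p| + 14 * T)) + 7) * T = (e * T) * (|p| + (|p| + 14 * T)) + 7 * T := by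
        ring
      rw [this, heT]
      linarith [abs_nonneg p]
  obtain ⟨α, hα0, hα⟩ := hPL.exists_eq_forall_mem_Icc_hasDerivWithinAt₀
  refine ⟨fun t => ((α t).1 / e, (α t).2), ?_, ?_⟩
  · have : α 0 = (e * x, p) := hα0
    simp only [this]
    ext
    · simp only; field_simp
    · rfl
  · intro t ht
    have h := (hα t (Set.Ioo_subset_Icc_self ht)).hasDerivAt (Icc_mem_nhds ht.1 ht.2)
    have h1 : HasDerivAt (fun t => (α t).1) (g (α t)).1 t :=
      (ContinuousLinearMap.fst ℝ ℝ ℝ).hasFDerivAt.comp_hasDerivAt t h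
    have h2 : HasDerivAt (fun t => (α t).2) (g (α t)).2 t :=
      (ContinuousLinearMap.snd ℝ ℝ ℝ).hasFDerivAt.comp_hasDerivAt t h
    refine ((h1.div_const e).prodMk h2).congr_deriv ?_
    simp only [g, pV]
    ext
    · simp only; field_simp
    · rfl

lemma pV_unique_Ioo {f g : ℝ → ℝ × ℝ} {a b : ℝ} (h0 : (0:ℝ) ∈ Set.Ioo a b)
    (hf : ∀ t ∈ Set.Ioo a b, HasDerivAt f (pV (f t)) t)
    (hg : ∀ t ∈ Set.Ioo a b, HasDerivAt g (pV (g t)) t) (h : f 0 = g 0) :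
    Set.EqOn f g (Set.Ioo a b) :=
  ODE_solution_unique_of_mem_Ioo (v := fun _ => pV) (s := fun _ => Set.univ) (K := 40)
    (fun _ _ => pV_lipschitz.lipschitzOnWith) h0
    (fun t ht => ⟨hf t ht, trivial⟩) (fun t ht => ⟨hg t ht, trivial⟩) h

lemma pV_unique {f g : ℝ → ℝ × ℝ}
    (hf : ∀ t, HasDerivAt f (pV (f t)) t)
    (hg : ∀ t, HasDerivAt g (pV (g t)) t) (h : f 0 = g 0) : f = g := by
  funext t
  refine pV_unique_Ioo (a := -(|t| + 1)) (b := |t| + 1) ?_ (fun t _ => hf t) (fun t _ => hg t) h ?_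
  · constructor <;> linarith [abs_nonneg t]
  · constructor <;> linarith [neg_abs_le t, le_abs_self t]

lemma pV_global (z : ℝ × ℝ) : ∃ γ : ℝ → ℝ × ℝ, γ 0 = z ∧ ∀ t, HasDerivAt γ (pV (γ t)) t := by
  have := fun T : ℝ => pV_local z (|T| + 1) (by positivity)
  choose γ h0 h1 using this
  refine ⟨fun t => γ t t, h0 0, fun t => ?_⟩
  have h2 : ∀ᶠ s in nhds t, γ s s = γ t s := by
    have hm : Set.Ioo (t - 1 / 2) (t + 1 / 2) ∈ nhds t :=
      Ioo_mem_nhds (by linarith) (by linarith)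
    filter_upwards [hm] with s hs
    set R := min (|s| + 1) (|t| + 1)
    have hR1 : R ≤ |s| + 1 := min_le_left _ _
    have hR2 : R ≤ |t| + 1 := min_le_right _ _
    have hsR : |s| < R := by
      apply lt_min
      · linarith
      · have : |s| ≤ |s - t| + |t| := by simpa using abs_add_le (s - t) t
        have h3 : |s - t| < 1 := by rw [abs_lt]; constructor <;> linarith [hs.1, hs.2]
        linarith
    refine pV_unique_Ioo (a := -R) (b := R) ?_ (fun u hu => h1 s u ?_) (fun u hu => h1 t u ?_)
      ((h0 s).trans (h0 t).symm) (abs_lt.1 hsR)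
    · have := (abs_nonneg s).trans_lt hsR
      exact ⟨by linarith, this⟩
    · exact ⟨by linarith [hu.1], by linarith [hu.2]⟩
    · exact ⟨by linarith [hu.1], by linarith [hu.2]⟩
  exact (h1 t t ⟨by linarith [neg_abs_le t], by linarith [le_abs_self t]⟩).congr_of_eventuallyEq h2

/-- The pendulum flow. -/
def pF (t : ℝ) (z : ℝ × ℝ) : ℝ × ℝ := (pV_global z).choose t

lemma pF_zero (z : ℝ × ℝ) : pF 0 z = z := (pV_global z).choose_spec.1

lemma pF_deriv (z : ℝ × ℝ) (t : ℝ) : HasDerivAt (fun t => pF t z) (pV (pF t z)) t :=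
  (pV_global z).choose_spec.2 t

lemma pF_eq {f : ℝ → ℝ × ℝ} (hf : ∀ t, HasDerivAt f (pV (f t)) t) (t : ℝ) : f t = pF t (f 0) :=
  congrFun (pV_unique hf (pF_deriv (f 0)) (pF_zero (f 0)).symm) t

lemma pF_add (s t : ℝ) (z : ℝ × ℝ) : pF (s + t) z = pF s (pF t z) := by
  have h : ∀ u, HasDerivAt (fun u => pF (u + t) z) (pV (pF (u + t) z)) u := fun u =>
    (pF_deriv z (u + t)).comp_add_const u t
  have := pF_eq h s
  simpa using this

lemma pV_add_int (z : ℝ × ℝ) (k : ℤ) : pV (z + ((k : ℝ), 0)) = pV z := by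
  simp only [pV, Prod.fst_add, Prod.snd_add, add_zero]
  rw [show 2 * π * (z.1 + k) = 2 * π * z.1 + k * (2 * π) by ring, Real.sin_add_int_mul_two_pi]

lemma pF_add_int (t : ℝ) (z : ℝ × ℝ) (k : ℤ) :
    pF t (z + ((k : ℝ), 0)) = pF t z + ((k : ℝ), 0) := by
  have h : ∀ u, HasDerivAt (fun u => pF u z + ((k : ℝ), (0:ℝ)))
      (pV (pF u z + ((k : ℝ), (0:ℝ)))) u := fun u => by
    rw [pV_add_int]; exact (pF_deriv z u).add_const _
  have := pF_eq h t
  simpa [pF_zero] using this.symm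

lemma pF_lip (z w : ℝ × ℝ) {t : ℝ} (ht : t ∈ Set.Icc (0:ℝ) 1) :
    ‖pF t z - pF t w‖ ≤ Real.exp 40 * ‖z - w‖ := by
  have hc : ∀ z, ContinuousOn (fun t => pF t z) (Set.Icc 0 1) := fun z t _ =>
    (pF_deriv z t).continuousAt.continuousWithinAt
  have h := dist_le_of_trajectories_ODE (v := fun _ => pV) (K := 40) (a := 0) (b := 1)
    (f := fun t => pF t z) (g := fun t => pF t w) (δ := ‖z - w‖)
    (fun _ => pV_lipschitz) (hc z) (fun t _ => (pF_deriv z t).hasDerivWithinAt)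
    (hc w) (fun t _ => (pF_deriv w t).hasDerivWithinAt) (by simp [pF_zero, dist_eq_norm]) t ht
  rw [dist_eq_norm] at h
  refine h.trans ?_
  rw [mul_comm]
  gcongr
  have : ((40 : NNReal) : ℝ) = 40 := rfl
  rw [this]
  linarith [ht.2]

/-- The constant in the `C^{1,1}` estimate of the time-one map of the pendulum. -/
def Cp : ℝ := gronwallBound 0 40 (320 * (Real.exp 40 * Real.exp 40)) 1

lemma gronwall_scale (ε : ℝ) : gronwallBound 0 40 ε 1 = ε * gronwallBound 0 40 1 1 := by
  rw [gronwallBound_of_K_ne_0 (by norm_num), gronwallBound_of_K_ne_0 (by norm_num)]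
  ring

lemma Cp_nonneg : 0 ≤ Cp := by
  rw [Cp, gronwall_scale, gronwallBound_of_K_ne_0 (by norm_num)]
  have : (1:ℝ) ≤ Real.exp (40 * 1) := Real.one_le_exp (by norm_num)
  have h2 : 0 ≤ Real.exp (40 * 1) - 1 := by linarith
  positivity

/-- `C^{1,1}` estimate for the time-one map along a solution, the linearized flow being given by an
explicit solution `w` of the variational equation. -/
lemma pF_c11 (z v v' : ℝ × ℝ) (w : ℝ → ℝ × ℝ) (hw0 : w 0 = v - v')
    (hw : ∀ t, HasDerivAt w ((w t).2, 4 * π ^ 2 * Real.cos (2 * π * (pF t z).1) * (w t).1) t)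
    {ρ : ℝ} (hv : ‖v‖ ≤ ρ) (hv' : ‖v'‖ ≤ ρ) :
    ‖pF 1 (z + v) - pF 1 (z + v') - w 1‖ ≤ Cp * ρ * ‖v - v'‖ := by
  have hρ : 0 ≤ ρ := (norm_nonneg _).trans hv
  have hd : ∀ t, HasDerivAt (fun t => pF t (z + v) - pF t (z + v') - w t)
      (pV (pF t (z + v)) - pV (pF t (z + v')) -
        ((w t).2, 4 * π ^ 2 * Real.cos (2 * π * (pF t z).1) * (w t).1)) t := fun t =>
    ((pF_deriv _ t).sub (pF_deriv _ t)).sub (hw t)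
  have h := norm_le_gronwallBound_of_norm_deriv_right_le
    (f := fun t => pF t (z + v) - pF t (z + v') - w t)
    (f' := fun t => pV (pF t (z + v)) - pV (pF t (z + v')) -
        ((w t).2, 4 * π ^ 2 * Real.cos (2 * π * (pF t z).1) * (w t).1))
    (δ := 0) (K := 40) (ε := 320 * (Real.exp 40 * Real.exp 40) * (ρ * ‖v - v'‖)) (a := 0) (b := 1)
    (fun t _ => (hd t).continuousAt.continuousWithinAt) (fun t _ => (hd t).hasDerivWithinAt)
    (by simp [pF_zero, hw0]) ?_ 1 (by simp)
  · refine h.trans (le_of_eq ?_)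
    rw [sub_zero, Cp, gronwall_scale, gronwall_scale (320 * (Real.exp 40 * Real.exp 40))]
    ring
  · intro t ht
    have ht' : t ∈ Set.Icc (0:ℝ) 1 := Set.Ico_subset_Icc_self ht
    have l1 := pF_lip (z + v) z ht'
    have l2 := pF_lip (z + v') z ht'
    have l3 := pF_lip (z + v) (z + v') ht'
    simp only [add_sub_cancel_left, add_sub_add_left_eq_sub] at l1 l2 l3
    have m1 : |(pF t (z + v)).1 - (pF t z).1| ≤ Real.exp 40 * ρ :=
      (P2_abs_le _).1.trans (l1.trans (by gcongr))
    have m2 : |(pF t (z + v')).1 - (pF t z).1| ≤ Real.exp 40 * ρ :=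
      (P2_abs_le _).1.trans (l2.trans (by gcongr))
    have m3 : |(pF t (z + v)).1 - (pF t (z + v')).1| ≤ Real.exp 40 * ‖v - v'‖ :=
      (P2_abs_le _).1.trans l3
    have key := c11 hasDerivAt_sin2 cos2_lip (by norm_num) m1 m2
    have key2 : 320 * (Real.exp 40 * ρ) * |(pF t (z + v)).1 - (pF t (z + v')).1| ≤
        320 * (Real.exp 40 * Real.exp 40) * (ρ * ‖v - v'‖) := by
      calc _ ≤ 320 * (Real.exp 40 * ρ) * (Real.exp 40 * ‖v - v'‖) := by gcongr
        _ = _ := by ring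
    set W := pF t (z + v) - pF t (z + v') - w t with hW
    have hWn := P2_abs_le W
    have hnn : 0 ≤ 320 * (Real.exp 40 * Real.exp 40) * (ρ * ‖v - v'‖) := by positivity
    rw [P2_norm_le]
    constructor
    · have : (pV (pF t (z + v)) - pV (pF t (z + v')) -
        ((w t).2, 4 * π ^ 2 * Real.cos (2 * π * (pF t z).1) * (w t).1)).1 = W.2 := by
        simp [hW, pV]
      rw [this]
      linarith [hWn.2, norm_nonneg W]
    · have : (pV (pF t (z + v)) - pV (pF t (z + v')) -
        ((w t).2, 4 * π ^ 2 * Real.cos (2 * π * (pF t z).1) * (w t).1)).2 =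
        4 * π ^ 2 * Real.cos (2 * π * (pF t z).1) * W.1 + (2 * π * Real.sin (2 * π * (pF t (z + v)).1)
          - 2 * π * Real.sin (2 * π * (pF t (z + v')).1) - 4 * π ^ 2 * Real.cos (2 * π * (pF t z).1)
          * ((pF t (z + v)).1 - (pF t (z + v')).1)) := by
        simp only [hW, pV, Prod.fst_sub, Prod.snd_sub]
        ring
      rw [this]
      refine (abs_add_le _ _).trans (add_le_add ?_ (key.trans key2))
      rw [abs_mul, abs_mul, abs_of_pos (show 0 < 4 * π ^ 2 by positivity)]
      have c1 := Real.abs_cos_le_one (2 * π * (pF t z).1)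
      have : 4 * π ^ 2 * |Real.cos (2 * π * (pF t z).1)| ≤ 40 := by
        nlinarith [pi_sq_lt, abs_nonneg (Real.cos (2 * π * (pF t z).1)), Real.pi_pos]
      exact mul_le_mul this hWn.1 (abs_nonneg _) (by norm_num)

/-- The separatrix of the pendulum. -/
def hh (t : ℝ) : ℝ := 2 / π * Real.arctan (Real.exp (2 * π * t))

def vS (t : ℝ) : ℝ := (Real.cosh (2 * π * t))⁻¹
def vS' (t : ℝ) : ℝ := - (2 * π) * Real.sinh (2 * π * t) / Real.cosh (2 * π * t) ^ 2
def vP (t : ℝ) : ℝ := Real.sinh (2 * π * t) + 2 * π * t / Real.cosh (2 * π * t)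
def vP' (t : ℝ) : ℝ := 2 * π * Real.cosh (2 * π * t) + 2 * π / Real.cosh (2 * π * t)
  - 4 * π ^ 2 * t * Real.sinh (2 * π * t) / Real.cosh (2 * π * t) ^ 2

def hH (t : ℝ) : ℝ × ℝ := (hh t, 2 * vS t)

/-- General solution of the variational equation along the separatrix. -/
def Wv (a b t : ℝ) : ℝ × ℝ := (a * vS t + b * vP t, a * vS' t + b * vP' t)

lemma sin_hh (t : ℝ) : Real.sin (π * hh t) = vS t := by
  have h1 : π * hh t = 2 * Real.arctan (Real.exp (2 * π * t)) := by
    rw [hh]; field_simp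
  rw [h1, Real.sin_two_mul, Real.sin_arctan, Real.cos_arctan, vS, Real.cosh_eq, Real.exp_neg]
  have hx := Real.exp_pos (2 * π * t)
  set x := Real.exp (2 * π * t)
  have h2 : √(1 + x ^ 2) * √(1 + x ^ 2) = 1 + x ^ 2 := Real.mul_self_sqrt (by positivity)
  have h3 : 0 < √(1 + x ^ 2) := Real.sqrt_pos.2 (by positivity)
  have : 2 * (x / √(1 + x ^ 2)) * (1 / √(1 + x ^ 2)) = 2 * x / (√(1 + x ^ 2) * √(1 + x ^ 2)) := by
    field_simp
  rw [this, h2]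
  field_simp
  ring

lemma cos_hh (t : ℝ) : Real.cos (π * hh t) = - (Real.sinh (2 * π * t) / Real.cosh (2 * π * t)) := by
  have h1 : π * hh t = 2 * Real.arctan (Real.exp (2 * π * t)) := by
    rw [hh]; field_simp
  rw [h1, Real.cos_two_mul, Real.cos_sq_arctan, Real.cosh_eq, Real.sinh_eq, Real.exp_neg]
  have hx := Real.exp_pos (2 * π * t)
  set x := Real.exp (2 * π * t)
  field_simp
  ring

lemma cos2_hh (t : ℝ) : Real.cos (2 * π * hh t) = 1 - 2 * vS t ^ 2 := by
  rw [show 2 * π * hh t = 2 * (π * hh t) by ring, Real.cos_two_mul, Real.cos_sq', sin_hh]; ring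

lemma sin2_hh (t : ℝ) : Real.sin (2 * π * hh t) =
    - 2 * Real.sinh (2 * π * t) / Real.cosh (2 * π * t) ^ 2 := by
  rw [show 2 * π * hh t = 2 * (π * hh t) by ring, Real.sin_two_mul, cos_hh, sin_hh, vS]
  have := Real.cosh_pos (2 * π * t)
  field_simp

lemma ch_deriv (t : ℝ) : HasDerivAt (fun t => Real.cosh (2 * π * t))
    (2 * π * Real.sinh (2 * π * t)) t :=
  (((hasDerivAt_id t).const_mul (2 * π)).cosh).congr_deriv (by simp only [id]; ring)

lemma sh_deriv (t : ℝ) : HasDerivAt (fun t => Real.sinh (2 * π * t))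
    (2 * π * Real.cosh (2 * π * t)) t :=
  (((hasDerivAt_id t).const_mul (2 * π)).sinh).congr_deriv (by simp only [id]; ring)

lemma hh_deriv (t : ℝ) : HasDerivAt hh (2 * vS t) t := by
  have h := ((((hasDerivAt_id t).const_mul (2 * π)).exp).arctan).const_mul (2 / π)
  refine h.congr_deriv ?_
  simp only [id, vS, Real.cosh_eq, Real.exp_neg]
  have hx := Real.exp_pos (2 * π * t)
  have hp := Real.pi_pos
  set x := Real.exp (2 * π * t)
  field_simp
  ring

lemma vS_deriv (t : ℝ) : HasDerivAt vS (vS' t) t := by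
  have hc := Real.cosh_pos (2 * π * t)
  refine ((ch_deriv t).inv hc.ne').congr_deriv ?_
  rw [vS']; ring

lemma vS'_deriv (t : ℝ) : HasDerivAt vS' (4 * π ^ 2 * Real.cos (2 * π * hh t) * vS t) t := by
  have hc := Real.cosh_pos (2 * π * t)
  have h := ((sh_deriv t).const_mul (-(2 * π))).div ((ch_deriv t).pow 2) (pow_pos hc 2).ne'
  refine h.congr_deriv ?_
  rw [cos2_hh, vS]
  have h2 := Real.cosh_sq (2 * π * t)
  simp only [Pi.pow_apply]
  set C := Real.cosh (2 * π * t)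
  set s := Real.sinh (2 * π * t)
  have h3 : s ^ 2 = C ^ 2 - 1 := by linarith
  field_simp
  norm_num
  rw [h3]
  ring

lemma vP_deriv (t : ℝ) : HasDerivAt vP (vP' t) t := by
  have hc := Real.cosh_pos (2 * π * t)
  have h := (sh_deriv t).add ((((hasDerivAt_id t).const_mul (2 * π))).div (ch_deriv t) hc.ne')
  refine h.congr_deriv ?_
  rw [vP']
  simp only [id]
  field_simp
  ring

lemma vP'_deriv (t : ℝ) : HasDerivAt vP' (4 * π ^ 2 * Real.cos (2 * π * hh t) * vP t) t := by
  have hc := Real.cosh_pos (2 * π * t)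
  have e : vP' = fun t => 2 * π * Real.cosh (2 * π * t) + 2 * π * vS t + (2 * π * t) * vS' t := by
    funext t; rw [vP', vS, vS']; ring
  have h := (((ch_deriv t).const_mul (2 * π)).fun_add ((vS_deriv t).const_mul (2 * π))).fun_add
    (((hasDerivAt_id t).const_mul (2 * π)).fun_mul (vS'_deriv t))
  rw [e]
  refine h.congr_deriv ?_
  simp only [id]
  rw [cos2_hh, vP, vS', vS]
  have h2 := Real.cosh_sq (2 * π * t)
  set C := Real.cosh (2 * π * t)
  set s := Real.sinh (2 * π * t)
  field_simp
  ring

lemma hH_deriv (t : ℝ) : HasDerivAt hH (pV (hH t)) t := by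
  refine ((hh_deriv t).prodMk ((vS_deriv t).const_mul 2)).congr_deriv ?_
  simp only [pV, hH, sin2_hh, vS']
  congr 1
  ring

lemma pF_hH (s t : ℝ) (k : ℤ) : pF t (hH s + ((k : ℝ), 0)) = hH (s + t) + ((k : ℝ), 0) := by
  have h : ∀ u, HasDerivAt (fun u => hH (u + s)) (pV (hH (u + s))) u := fun u =>
    (hH_deriv (u + s)).comp_add_const u s
  have := pF_eq h t
  rw [pF_add_int]
  simp only [zero_add] at this
  rw [← this, add_comm t s]

lemma Wv_deriv (a b t : ℝ) : HasDerivAt (Wv a b)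
    ((Wv a b t).2, 4 * π ^ 2 * Real.cos (2 * π * hh t) * (Wv a b t).1) t := by
  refine ((((vS_deriv t).const_mul a).fun_add ((vP_deriv t).const_mul b)).prodMk
    (((vS'_deriv t).const_mul a).fun_add ((vP'_deriv t).const_mul b))).congr_deriv ?_
  simp only [Wv]
  congr 1
  ring

lemma pF_c11_sep (s : ℝ) (k : ℤ) (v v' : ℝ × ℝ) (a b : ℝ) (hab : Wv a b s = v - v')
    {ρ : ℝ} (hv : ‖v‖ ≤ ρ) (hv' : ‖v'‖ ≤ ρ) :
    ‖pF 1 (hH s + ((k : ℝ), 0) + v) - pF 1 (hH s + ((k : ℝ), 0) + v') - Wv a b (s + 1)‖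
      ≤ Cp * ρ * ‖v - v'‖ := by
  have h := pF_c11 (hH s + ((k : ℝ), 0)) v v' (fun t => Wv a b (t + s)) (by simpa using hab) (fun t => by
    have := (Wv_deriv a b (t + s)).comp_add_const t s
    refine this.congr_deriv ?_
    rw [pF_hH]
    have e : (hH (s + t) + ((k : ℝ), 0)).1 = hh (t + s) + k := by simp [hH, add_comm]
    rw [e, show 2 * π * (hh (t + s) + k) = 2 * π * hh (t + s) + k * (2 * π) by ring,
      Real.cos_add_int_mul_two_pi]) hv hv'
  rwa [add_comm s 1]

lemma wronsk (t : ℝ) : vS t * vP' t - vS' t * vP t = 4 * π := by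
  rw [vS, vS', vP, vP']
  have hc := Real.cosh_pos (2 * π * t)
  have h2 := Real.cosh_sq (2 * π * t)
  set C := Real.cosh (2 * π * t)
  set s := Real.sinh (2 * π * t)
  have h3 : s ^ 2 = C ^ 2 - 1 := by linarith
  field_simp
  ring_nf
  rw [h3]
  ring

lemma Wv_inv (X P t : ℝ) : Wv ((X * vP' t - P * vP t) / (4 * π)) ((vS t * P - vS' t * X) / (4 * π)) t
    = (X, P) := by
  have h := wronsk t
  have hp := Real.pi_pos
  simp only [Wv]
  ext
  · simp only
    field_simp
    linear_combination X * h
  · simp only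
    field_simp
    linear_combination P * h

lemma Wv_inv_a (a b t : ℝ) : ((Wv a b t).1 * vP' t - (Wv a b t).2 * vP t) / (4 * π) = a := by
  have h := wronsk t
  have hp := Real.pi_pos
  simp only [Wv]
  field_simp
  linear_combination a * h

lemma Wv_inv_b (a b t : ℝ) : (vS t * (Wv a b t).2 - vS' t * (Wv a b t).1) / (4 * π) = b := by
  have h := wronsk t
  have hp := Real.pi_pos
  simp only [Wv]
  field_simp
  linear_combination b * h

lemma vS_neg (t : ℝ) : vS (-t) = vS t := by simp [vS]
lemma vS'_neg (t : ℝ) : vS' (-t) = - vS' t := by simp [vS']; ring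
lemma vP_neg (t : ℝ) : vP (-t) = - vP t := by simp [vP]; ring
lemma vP'_neg (t : ℝ) : vP' (-t) = vP' t := by simp [vP']

lemma Wv_zero (a b : ℝ) : Wv a b 0 = (a, 4 * π * b) := by
  simp [Wv, vS, vS', vP, vP']; ring

lemma hH_zero : hH 0 = (1 / 2, 2) := by
  simp [hH, hh, vS]; field_simp; norm_num

set_option maxHeartbeats 1000000 in
lemma v_asymp {t : ℝ} (ht : 0 ≤ t) :
    |Real.exp (2 * π * t) * vS t - 2| ≤ 30 * (Real.exp (2 * π * t))⁻¹ ∧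
    |Real.exp (2 * π * t) * vS' t + 4 * π| ≤ 30 * (Real.exp (2 * π * t))⁻¹ ∧
    |(Real.exp (2 * π * t))⁻¹ * vP t - 1 / 2| ≤ 30 * (Real.exp (2 * π * t))⁻¹ ∧
    |(Real.exp (2 * π * t))⁻¹ * vP' t - π| ≤ 30 * (Real.exp (2 * π * t))⁻¹ := by
  have hp := Real.pi_pos
  have hp3 := Real.pi_lt_d2
  have hτ0 : 0 ≤ 2 * π * t := by positivity
  have e1 : vP t = Real.sinh (2 * π * t) + (2 * π * t) * vS t := by rw [vP, vS]; ring
  have e2 : vP' t = 2 * π * Real.cosh (2 * π * t) + 2 * π * vS t + (2 * π * t) * vS' t := by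
    rw [vP', vS, vS']; ring
  have hx1 : 1 ≤ Real.exp (2 * π * t) := Real.one_le_exp hτ0
  have hτx : 2 * π * t ≤ Real.exp (2 * π * t) := by linarith [Real.add_one_le_exp (2 * π * t)]
  have e3 : vS t = 2 * Real.exp (2 * π * t) / (Real.exp (2 * π * t) ^ 2 + 1) := by
    rw [vS, Real.cosh_eq, Real.exp_neg]
    field_simp
  have e4 : vS' t = -(2 * π) * (2 * Real.exp (2 * π * t) * (Real.exp (2 * π * t) ^ 2 - 1)
      / (Real.exp (2 * π * t) ^ 2 + 1) ^ 2) := by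
    rw [vS', Real.cosh_eq, Real.sinh_eq, Real.exp_neg]
    field_simp
  rw [e1, e2, e3, e4, Real.cosh_eq, Real.sinh_eq, Real.exp_neg]
  set x := Real.exp (2 * π * t)
  set τ := 2 * π * t
  have hx0 : 0 < x := by linarith
  set y := x⁻¹ with hy
  have hxy : x * y = 1 := mul_inv_cancel₀ hx0.ne'
  have hy0 : 0 < y := by positivity
  have hy1 : y ≤ 1 := inv_le_one_of_one_le₀ hx1
  -- w = 1/(x²+1)
  obtain ⟨w, hw⟩ : ∃ w, w = (x ^ 2 + 1)⁻¹ := ⟨_, rfl⟩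
  have hw0 : 0 < w := by rw [hw]; positivity
  have hw1 : w * (x ^ 2 + 1) = 1 := by rw [hw]; exact inv_mul_cancel₀ (by positivity)
  have hwy : w ≤ y := by
    rw [hw, hy]; apply inv_anti₀ hx0; nlinarith
  have hx2w : x ^ 2 * w = 1 - w := by linarith
  have hxw : x * w ≤ y := by
    have : x * w = y * (x ^ 2 * w) := by linear_combination (- x * w) * hxy
    rw [this, hx2w]; nlinarith
  have q1 : 2 * x / (x ^ 2 + 1) = 2 * x * w := by rw [hw]; ring
  have q2 : 2 * x * (x ^ 2 - 1) / (x ^ 2 + 1) ^ 2 = 2 * x * w * (1 - 2 * w) := by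
    have : (1 - 2 * w) = (x ^ 2 - 1) * w := by linear_combination -hw1
    rw [this, hw]; field_simp
  rw [q1, q2]
  have hw2 : w ≤ 1 / 2 := by nlinarith
  have hxw0 : 0 ≤ x * w := by positivity
  have hτw : τ * y ≤ 1 := by nlinarith
  have hτy0 : 0 ≤ τ * y := by positivity
  refine ⟨?_, ?_, ?_, ?_⟩
  · rw [show x * (2 * x * w) - 2 = -(2 * w) by linear_combination 2 * hx2w, abs_neg,
      abs_of_pos (by positivity)]
    linarith
  · rw [show x * (-(2 * π) * (2 * x * w * (1 - 2 * w))) + 4 * π = 4 * π * (w * (3 - 2 * w)) by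
      linear_combination (-4 * π * (1 - 2 * w)) * hx2w]
    rw [abs_of_nonneg (by have : 0 ≤ 3 - 2 * w := by linarith
                          positivity)]
    have : w * (3 - 2 * w) ≤ w * 3 := by nlinarith
    have hyy : w * (3 - 2 * w) ≤ y * 2 := by
      have h5 : w ≤ y * (1 - w) := by
        have : y * (1 - w) = x * w := by rw [← hx2w]; linear_combination (x * w) * hxy
        rw [this]; nlinarith
      nlinarith
    have h2 : 4 * π * (w * (3 - 2 * w)) ≤ 4 * π * (y * 2) :=
      mul_le_mul_of_nonneg_left hyy (by positivity)
    nlinarith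
  · rw [show y * ((x - y) / 2 + τ * (2 * x * w)) - 1 / 2 = - (y * y / 2) + 2 * ((τ * y) * (x * w)) by
      linear_combination (1 / 2) * hxy]
    rw [abs_le]
    have a1 : (τ * y) * (x * w) ≤ 1 * y := by gcongr
    have a2 : y * y ≤ y := by nlinarith
    have a3 : 0 ≤ (τ * y) * (x * w) := by positivity
    constructor <;> linarith [mul_pos hy0 hy0]
  · rw [show y * (2 * π * ((x + y) / 2) + 2 * π * (2 * x * w) + τ * (-(2 * π) * (2 * x * w * (1 - 2 * w))))
      - π = π * (y * y + 4 * (y * (x * w)) - 4 * ((τ * y) * (x * w) * (1 - 2 * w))) by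
      linear_combination π * hxy]
    have a1 : (τ * y) * (x * w) ≤ 1 * y := by gcongr
    have a2 : y * y ≤ y := by nlinarith
    have a3 : 0 ≤ (τ * y) * (x * w) := by positivity
    have a4 : y * (x * w) ≤ 1 * y := by
      rw [mul_comm]
      exact mul_le_mul_of_nonneg_right (by linarith) hy0.le
    have a5 : 0 ≤ y * (x * w) := by positivity
    have a6 : (τ * y) * (x * w) * (1 - 2 * w) ≤ 1 * y := by
      have := mul_nonneg a3 hw0.le
      linarith
    have a7 : 0 ≤ (τ * y) * (x * w) * (1 - 2 * w) := mul_nonneg a3 (by linarith)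
    rw [abs_mul, abs_of_pos hp]
    have : |y * y + 4 * (y * (x * w)) - 4 * ((τ * y) * (x * w) * (1 - 2 * w))| ≤ 5 * y := by
      rw [abs_le]; constructor <;> linarith [mul_pos hy0 hy0]
    nlinarith

lemma v_bound (t : ℝ) :
    |vS t| ≤ 50 * (Real.exp (2 * π * |t|))⁻¹ ∧ |vS' t| ≤ 50 * (Real.exp (2 * π * |t|))⁻¹ ∧
    |vP t| ≤ 50 * Real.exp (2 * π * |t|) ∧ |vP' t| ≤ 50 * Real.exp (2 * π * |t|) := by
  wlog ht : 0 ≤ t with H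
  · have := H (-t) (by linarith)
    simpa [vS_neg, vS'_neg, vP_neg, vP'_neg] using this
  rw [abs_of_nonneg ht]
  obtain ⟨h1, h2, h3, h4⟩ := v_asymp ht
  have hp := Real.pi_pos
  have hp3 := Real.pi_lt_d2
  have hx1 : 1 ≤ Real.exp (2 * π * t) := Real.one_le_exp (by positivity)
  set x := Real.exp (2 * π * t)
  have hx0 : 0 < x := by linarith
  have hy1 : x⁻¹ ≤ 1 := inv_le_one_of_one_le₀ hx1
  have hxy : x * x⁻¹ = 1 := mul_inv_cancel₀ hx0.ne'
  have aux1 : ∀ v c : ℝ, |x * v - c| ≤ 30 * x⁻¹ → |c| ≤ 20 → |v| ≤ 50 * x⁻¹ := by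
    intro v c h hc
    have : |x * v| ≤ 50 := by
      have := abs_add_le (x * v - c) c
      simp only [sub_add_cancel] at this
      linarith
    rw [abs_mul, abs_of_pos hx0] at this
    rw [← div_eq_mul_inv, le_div_iff₀ hx0]; linarith
  have aux2 : ∀ v c : ℝ, |x⁻¹ * v - c| ≤ 30 * x⁻¹ → |c| ≤ 20 → |v| ≤ 50 * x := by
    intro v c h hc
    have : |x⁻¹ * v| ≤ 50 := by
      have := abs_add_le (x⁻¹ * v - c) c
      simp only [sub_add_cancel] at this
      linarith
    rw [abs_mul, abs_of_pos (by positivity), inv_mul_le_iff₀ hx0] at this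
    linarith
  refine ⟨aux1 _ 2 h1 (by norm_num), aux1 _ (-(4 * π)) (by simpa using h2) ?_,
    aux2 _ (1/2) h3 (by norm_num [abs_of_pos]), aux2 _ π h4 ?_⟩
  · rw [abs_neg, abs_of_pos (by positivity)]; linarith
  · rw [abs_of_pos hp]; linarith

lemma vS_pos (t : ℝ) : 0 < vS t := inv_pos.2 (Real.cosh_pos _)

lemma vS_le (t : ℝ) : vS t ≤ 2 * (Real.exp (2 * π * |t|))⁻¹ := by
  wlog ht : 0 ≤ t with H
  · have := H (-t) (by linarith)
    simpa [vS_neg] using this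
  rw [abs_of_nonneg ht, vS, Real.cosh_eq, ← div_eq_mul_inv, inv_eq_one_div, div_le_div_iff₀ (by positivity)
    (by positivity)]
  linarith [Real.exp_pos (-(2 * π * t))]

lemma hh_neg_le (t : ℝ) : 0 ≤ hh (-t) ∧ hh (-t) ≤ (Real.exp (2 * π * t))⁻¹ := by
  have hp := Real.pi_gt_three
  rw [hh]
  have h0 : 0 < Real.exp (2 * π * -t) := Real.exp_pos _
  have e : Real.exp (2 * π * -t) = (Real.exp (2 * π * t))⁻¹ := by rw [← Real.exp_neg]; ring_nf
  rw [← e]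
  have h1 := Real.arctan_nonneg.2 h0.le
  have h2 : Real.arctan (Real.exp (2 * π * -t)) ≤ Real.exp (2 * π * -t) := by
    have := Real.le_tan h1 (Real.arctan_lt_pi_div_two _)
    rwa [Real.tan_arctan] at this
  have h3 : 2 / π ≤ 1 := by rw [div_le_one Real.pi_pos]; linarith
  exact ⟨by positivity, by nlinarith⟩

lemma hh_symm (t : ℝ) : hh t = 1 - hh (-t) := by
  rw [hh, hh, show 2 * π * -t = -(2 * π * t) by ring, Real.exp_neg,
    Real.arctan_inv_of_pos (Real.exp_pos _)]
  have := Real.pi_pos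
  field_simp
  ring

/-- `C^{1,1}` estimate for a product of functions of one variable. -/
lemma c11_prod {f f' g g' : ℝ → ℝ} {F0 F1 F2 G0 G1 G2 : ℝ}
    (hf : ∀ x, HasDerivAt f (f' x) x) (hg : ∀ x, HasDerivAt g (g' x) x)
    (hF0 : ∀ x, |f x| ≤ F0) (hF1 : ∀ x, |f' x| ≤ F1) (hF2 : ∀ x y, |f' x - f' y| ≤ F2 * |x - y|)
    (hG0 : ∀ x, |g x| ≤ G0) (hG1 : ∀ x, |g' x| ≤ G1) (hG2 : ∀ x y, |g' x - g' y| ≤ G2 * |x - y|)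
    (hF2' : 0 ≤ F2) (hG2' : 0 ≤ G2)
    {x y x' y' x₀ y₀ ρ Δ : ℝ} (hx : |x - x₀| ≤ ρ) (hx' : |x' - x₀| ≤ ρ)
    (hy : |y - y₀| ≤ ρ) (hy' : |y' - y₀| ≤ ρ) (hΔx : |x - x'| ≤ Δ) (hΔy : |y - y'| ≤ Δ) :
    |f x * g y - f x' * g y' - (f' x₀ * g y₀ * (x - x') + f x₀ * g' y₀ * (y - y'))| ≤
      (F2 * G0 + 2 * (F1 * G1) + F0 * G2) * ρ * Δ := by
  have hF0' : 0 ≤ F0 := (abs_nonneg _).trans (hF0 0)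
  have hF1' : 0 ≤ F1 := (abs_nonneg _).trans (hF1 0)
  have hG0' : 0 ≤ G0 := (abs_nonneg _).trans (hG0 0)
  have hG1' : 0 ≤ G1 := (abs_nonneg _).trans (hG1 0)
  have hρ : 0 ≤ ρ := (abs_nonneg _).trans hx
  have hΔ : 0 ≤ Δ := (abs_nonneg _).trans hΔx
  have e : f x * g y - f x' * g y' - (f' x₀ * g y₀ * (x - x') + f x₀ * g' y₀ * (y - y')) =
      (f x - f x' - f' x₀ * (x - x')) * g y + f' x₀ * (x - x') * (g y - g y₀) +
      (f x' * (g y - g y' - g' y₀ * (y - y')) + (f x' - f x₀) * g' y₀ * (y - y')) := by ring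
  have h1 : |(f x - f x' - f' x₀ * (x - x')) * g y| ≤ F2 * ρ * Δ * G0 := by
    rw [abs_mul]
    refine mul_le_mul ((c11 hf hF2 hF2' hx hx').trans ?_) (hG0 y) (abs_nonneg _) (by positivity)
    gcongr
  have h2 : |f' x₀ * (x - x') * (g y - g y₀)| ≤ F1 * Δ * (G1 * ρ) := by
    rw [abs_mul, abs_mul]
    refine mul_le_mul (mul_le_mul (hF1 _) hΔx (abs_nonneg _) hF1')
      ((lip_of_deriv hg hG1 y y₀).trans ?_) (abs_nonneg _) (by positivity)
    gcongr
  have h3 : |f x' * (g y - g y' - g' y₀ * (y - y'))| ≤ F0 * (G2 * ρ * Δ) := by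
    rw [abs_mul]
    refine mul_le_mul (hF0 _) ((c11 hg hG2 hG2' hy hy').trans ?_) (abs_nonneg _) (by positivity)
    gcongr
  have h4 : |(f x' - f x₀) * g' y₀ * (y - y')| ≤ F1 * ρ * G1 * Δ := by
    rw [abs_mul, abs_mul]
    refine mul_le_mul (mul_le_mul ((lip_of_deriv hf hF1 x' x₀).trans ?_) (hG1 _) (abs_nonneg _)
      (by positivity)) hΔy (abs_nonneg _) (by positivity)
    gcongr
  rw [e]
  have := abs_add_le ((f x - f x' - f' x₀ * (x - x')) * g y + f' x₀ * (x - x') * (g y - g y₀))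
    (f x' * (g y - g y' - g' y₀ * (y - y')) + (f x' - f x₀) * g' y₀ * (y - y'))
  have t1 := abs_add_le ((f x - f x' - f' x₀ * (x - x')) * g y) (f' x₀ * (x - x') * (g y - g y₀))
  have t2 := abs_add_le (f x' * (g y - g y' - g' y₀ * (y - y'))) ((f x' - f x₀) * g' y₀ * (y - y'))
  linarith

def sA (ν : ℕ) (x : ℝ) : ℝ := Real.sin (π * x) ^ ν
def sA1 (ν : ℕ) (x : ℝ) : ℝ := ν * Real.sin (π * x) ^ (ν - 1) * Real.cos (π * x)
def sA2 (ν : ℕ) (x : ℝ) : ℝ :=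
  π * ν * ((ν - 1) * Real.sin (π * x) ^ (ν - 2) * Real.cos (π * x) ^ 2 - Real.sin (π * x) ^ ν)
def yB (y : ℝ) : ℝ := 2 + Real.sin (2 * π * (y + 6⁻¹))
def yB' (y : ℝ) : ℝ := 2 * π * Real.cos (2 * π * (y + 6⁻¹))
def yD (y : ℝ) : ℝ := 2 * Real.cos (2 * π * (y + 6⁻¹))
def yD' (y : ℝ) : ℝ := - (4 * π) * Real.sin (2 * π * (y + 6⁻¹))

def kk1 (q ν : ℕ) (x y : ℝ) : ℝ := (q : ℝ)⁻¹ * (sA1 ν x * yB y)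
def kk2 (q ν : ℕ) (x y : ℝ) : ℝ := (q : ℝ)⁻¹ * (sA ν x * yD y)

lemma spi_deriv (x : ℝ) : HasDerivAt (fun x => Real.sin (π * x)) (π * Real.cos (π * x)) x :=
  (((hasDerivAt_id x).const_mul π).sin).congr_deriv (by simp only [id]; ring)
lemma cpi_deriv (x : ℝ) : HasDerivAt (fun x => Real.cos (π * x)) (-(π * Real.sin (π * x))) x :=
  (((hasDerivAt_id x).const_mul π).cos).congr_deriv (by simp only [id]; ring)

lemma sA_deriv (ν : ℕ) (x : ℝ) : HasDerivAt (sA ν) (π * sA1 ν x) x :=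
  ((spi_deriv x).fun_pow ν).congr_deriv (by rw [sA1]; ring)

lemma sA1_deriv (ν : ℕ) (hν : 3 ≤ ν) (x : ℝ) : HasDerivAt (sA1 ν) (sA2 ν x) x := by
  obtain ⟨m, rfl⟩ := Nat.exists_eq_add_of_le' hν
  refine ((((spi_deriv x).fun_pow (m + 3 - 1)).const_mul ((m + 3 : ℕ) : ℝ)).fun_mul
    (cpi_deriv x)).congr_deriv ?_
  rw [sA2]
  simp only [show m + 3 - 1 = m + 2 from rfl, show m + 2 - 1 = m + 1 from rfl,
    show m + 3 - 2 = m + 1 from rfl]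
  push_cast
  ring

lemma sA2_deriv (ν : ℕ) (hν : 3 ≤ ν) (x : ℝ) : HasDerivAt (sA2 ν)
    (π ^ 2 * ν * ((ν - 1) * (ν - 2) * (Real.sin (π * x) ^ (ν - 3) * Real.cos (π * x) ^ 3)
      - (3 * ν - 2) * (Real.sin (π * x) ^ (ν - 1) * Real.cos (π * x)))) x := by
  obtain ⟨m, rfl⟩ := Nat.exists_eq_add_of_le' hν
  refine ((((((spi_deriv x).fun_pow (m + 3 - 2)).const_mul (((m + 3 : ℕ) : ℝ) - 1)).fun_mul
    ((cpi_deriv x).fun_pow 2)).fun_sub ((spi_deriv x).fun_pow (m + 3))).const_mul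
      (π * ((m + 3 : ℕ) : ℝ))).congr_deriv ?_
  simp only [show m + 3 - 1 = m + 2 from rfl, show m + 1 - 1 = m from rfl,
    show m + 3 - 2 = m + 1 from rfl, show m + 3 - 3 = m from rfl]
  push_cast
  ring

lemma abs_pow_le1 {s : ℝ} (hs : |s| ≤ 1) (n : ℕ) : |s ^ n| ≤ 1 := by
  rw [abs_pow]; exact pow_le_one₀ (abs_nonneg _) hs

lemma abs_mul_le1 {a b : ℝ} (ha : |a| ≤ 1) (hb : |b| ≤ 1) : |a * b| ≤ 1 := by
  rw [abs_mul]; exact mul_le_one₀ ha (abs_nonneg _) hb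

lemma sA_bound (ν : ℕ) (x : ℝ) : |sA ν x| ≤ 1 := abs_pow_le1 (Real.abs_sin_le_one _) _

lemma sA1_bound (ν : ℕ) (x : ℝ) : |sA1 ν x| ≤ ν := by
  rw [sA1, mul_assoc, abs_mul, abs_of_nonneg (Nat.cast_nonneg ν)]
  have := abs_mul_le1 (abs_pow_le1 (Real.abs_sin_le_one (π * x)) (ν - 1)) (Real.abs_cos_le_one (π * x))
  nlinarith [Nat.cast_nonneg (α := ℝ) ν]

lemma sA1_bound' (ν : ℕ) (x : ℝ) : |π * sA1 ν x| ≤ 4 * ν := by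
  rw [abs_mul, abs_of_pos Real.pi_pos]
  have := sA1_bound ν x
  nlinarith [Real.pi_lt_four, Real.pi_pos, abs_nonneg (sA1 ν x)]

lemma sA2_bound (ν : ℕ) (hν : 3 ≤ ν) (x : ℝ) : |sA2 ν x| ≤ 4 * ν ^ 2 := by
  have hν' : (3:ℝ) ≤ ν := by exact_mod_cast hν
  have h1 := abs_mul_le1 (abs_pow_le1 (Real.abs_sin_le_one (π * x)) (ν - 2))
    (abs_pow_le1 (Real.abs_cos_le_one (π * x)) 2)
  have h2 := abs_pow_le1 (Real.abs_sin_le_one (π * x)) ν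
  rw [sA2, mul_assoc (_ - 1 : ℝ)]
  set u := Real.sin (π * x) ^ (ν - 2) * Real.cos (π * x) ^ 2
  set w := Real.sin (π * x) ^ ν
  have h3 : |((ν:ℝ) - 1) * u - w| ≤ ν := by
    rw [abs_le] at *
    constructor <;> nlinarith
  rw [abs_mul, abs_of_pos (by have := Real.pi_pos; positivity)]
  have := Real.pi_lt_four
  calc π * ν * |((ν:ℝ) - 1) * u - w| ≤ 4 * ν * ν := by gcongr
    _ = _ := by ring

lemma sA2_lip (ν : ℕ) (hν : 3 ≤ ν) (x y : ℝ) : |sA2 ν x - sA2 ν y| ≤ 40 * ν ^ 3 * |x - y| := by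
  have hν' : (3:ℝ) ≤ ν := by exact_mod_cast hν
  refine lip_of_deriv (sA2_deriv ν hν) (fun x => ?_) x y
  have h1 := abs_mul_le1 (abs_pow_le1 (Real.abs_sin_le_one (π * x)) (ν - 3))
    (abs_pow_le1 (Real.abs_cos_le_one (π * x)) 3)
  have h2 := abs_mul_le1 (abs_pow_le1 (Real.abs_sin_le_one (π * x)) (ν - 1))
    (Real.abs_cos_le_one (π * x))
  set u := Real.sin (π * x) ^ (ν - 3) * Real.cos (π * x) ^ 3
  set w := Real.sin (π * x) ^ (ν - 1) * Real.cos (π * x)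
  have h0 : 0 ≤ ((ν:ℝ) - 1) * (ν - 2) := by nlinarith
  have h3 : |((ν:ℝ) - 1) * (ν - 2) * u - (3 * ν - 2) * w| ≤ (ν - 1) * (ν - 2) + (3 * ν - 2) := by
    rw [abs_le] at *
    constructor <;> nlinarith
  have h4 : ((ν:ℝ) - 1) * (ν - 2) + (3 * ν - 2) ≤ 2 * ν ^ 2 := by nlinarith
  rw [abs_mul, abs_of_pos (by have := Real.pi_pos; positivity)]
  have := pi_sq_lt
  calc π ^ 2 * ν * |((ν:ℝ) - 1) * (ν - 2) * u - (3 * ν - 2) * w| ≤ 10 * ν * (2 * ν ^ 2) := by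
        gcongr
        exact h3.trans h4
    _ ≤ _ := by nlinarith [pow_pos (show (0:ℝ) < ν by linarith) 3]

lemma ang_deriv (y : ℝ) : HasDerivAt (fun y : ℝ => 2 * π * (y + 6⁻¹)) (2 * π) y :=
  ((hasDerivAt_id y).add_const (6⁻¹ : ℝ)).const_mul (2 * π) |>.congr_deriv (by ring)

lemma yB_deriv (y : ℝ) : HasDerivAt yB (yB' y) y :=
  (((ang_deriv y).sin).const_add 2).congr_deriv (by rw [yB']; ring)
lemma yB'_deriv (y : ℝ) : HasDerivAt yB' (-(4 * π ^ 2) * Real.sin (2 * π * (y + 6⁻¹))) y :=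
  (((ang_deriv y).cos).const_mul (2 * π)).congr_deriv (by ring)
lemma yD_deriv (y : ℝ) : HasDerivAt yD (yD' y) y :=
  (((ang_deriv y).cos).const_mul 2).congr_deriv (by rw [yD']; ring)
lemma yD'_deriv (y : ℝ) : HasDerivAt yD' (-(8 * π ^ 2) * Real.cos (2 * π * (y + 6⁻¹))) y :=
  (((ang_deriv y).sin).const_mul (-(4 * π))).congr_deriv (by ring)

lemma abs_mul_le_of1 {a b A : ℝ} (ha : |a| ≤ A) (hb : |b| ≤ 1) : |a * b| ≤ A := by
  rw [abs_mul]; nlinarith [abs_nonneg a, abs_nonneg b]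

lemma yB_bound (y : ℝ) : |yB y| ≤ 3 := by
  rw [yB, abs_le]
  constructor <;> linarith [Real.sin_le_one (2 * π * (y + 6⁻¹)), Real.neg_one_le_sin (2 * π * (y + 6⁻¹))]
lemma yB'_bound (y : ℝ) : |yB' y| ≤ 7 :=
  abs_mul_le_of1 (by rw [abs_of_pos (by positivity)]; linarith [Real.pi_lt_d2]) (Real.abs_cos_le_one _)
lemma yD_bound (y : ℝ) : |yD y| ≤ 2 :=
  abs_mul_le_of1 (by norm_num) (Real.abs_cos_le_one _)
lemma yD'_bound (y : ℝ) : |yD' y| ≤ 13 :=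
  abs_mul_le_of1 (by rw [abs_neg, abs_of_pos (by positivity)]; linarith [Real.pi_lt_d2])
    (Real.abs_sin_le_one _)
lemma yB'_lip (x y : ℝ) : |yB' x - yB' y| ≤ 40 * |x - y| :=
  lip_of_deriv yB'_deriv (fun x => abs_mul_le_of1
    (by rw [abs_neg, abs_of_pos (by positivity)]; linarith [pi_sq_lt]) (Real.abs_sin_le_one _)) x y
lemma yD'_lip (x y : ℝ) : |yD' x - yD' y| ≤ 80 * |x - y| :=
  lip_of_deriv yD'_deriv (fun x => abs_mul_le_of1
    (by rw [abs_neg, abs_of_pos (by positivity)]; linarith [pi_sq_lt]) (Real.abs_cos_le_one _)) x y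

/-- the two kick components are `C^{1,1}` with constant `216 q²`. -/
lemma kk_c11 {q ν : ℕ} (hν : 3 ≤ ν) (hνq : ν ≤ q)
    {x y x' y' x₀ y₀ ρ Δ : ℝ} (hx : |x - x₀| ≤ ρ) (hx' : |x' - x₀| ≤ ρ)
    (hy : |y - y₀| ≤ ρ) (hy' : |y' - y₀| ≤ ρ) (hΔx : |x - x'| ≤ Δ) (hΔy : |y - y'| ≤ Δ) :
    |kk1 q ν x y - kk1 q ν x' y' - (q : ℝ)⁻¹ * (sA2 ν x₀ * yB y₀ * (x - x') +
        sA1 ν x₀ * yB' y₀ * (y - y'))| ≤ 216 * q ^ 2 * ρ * Δ ∧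
    |kk2 q ν x y - kk2 q ν x' y' - (q : ℝ)⁻¹ * (π * sA1 ν x₀ * yD y₀ * (x - x') +
        sA ν x₀ * yD' y₀ * (y - y'))| ≤ 216 * q ^ 2 * ρ * Δ := by
  have hν' : (3:ℝ) ≤ ν := by exact_mod_cast hν
  have hνq' : (ν:ℝ) ≤ q := by exact_mod_cast hνq
  have hq : (0:ℝ) < q := by linarith
  have hρ : 0 ≤ ρ := (abs_nonneg _).trans hx
  have hΔ : 0 ≤ Δ := (abs_nonneg _).trans hΔx
  have h1 := c11_prod (sA1_deriv ν hν) yB_deriv (sA1_bound ν) (sA2_bound ν hν) (sA2_lip ν hν)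
    yB_bound yB'_bound yB'_lip (by positivity) (by norm_num) hx hx' hy hy' hΔx hΔy
  have hl : ∀ x y, |π * sA1 ν x - π * sA1 ν y| ≤ 16 * ν ^ 2 * |x - y| := by
    intro x y
    rw [← mul_sub, abs_mul, abs_of_pos Real.pi_pos]
    have := lip_of_deriv (sA1_deriv ν hν) (sA2_bound ν hν) x y
    have h4 := Real.pi_lt_four
    calc π * |sA1 ν x - sA1 ν y| ≤ 4 * (4 * ν ^ 2 * |x - y|) := by gcongr
      _ = _ := by ring
  have h2 := c11_prod (sA_deriv ν) yD_deriv (sA_bound ν) (sA1_bound' ν) hl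
    yD_bound yD'_bound yD'_lip (by positivity) (by norm_num) hx hx' hy hy' hΔx hΔy
  have key : ∀ A : ℝ, A ≤ 216 * ν ^ 3 → (q:ℝ)⁻¹ * (A * ρ * Δ) ≤ 216 * q ^ 2 * ρ * Δ := by
    intro A hA
    rw [inv_mul_le_iff₀ hq]
    calc A * ρ * Δ ≤ 216 * ν ^ 3 * ρ * Δ := by gcongr
      _ ≤ 216 * q ^ 3 * ρ * Δ := by gcongr
      _ = _ := by ring
  have hc : (9:ℝ) ≤ ν ^ 2 := by nlinarith
  constructor
  · have : kk1 q ν x y - kk1 q ν x' y' - (q : ℝ)⁻¹ * (sA2 ν x₀ * yB y₀ * (x - x') +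
        sA1 ν x₀ * yB' y₀ * (y - y')) = (q : ℝ)⁻¹ * (sA1 ν x * yB y - sA1 ν x' * yB y' -
        (sA2 ν x₀ * yB y₀ * (x - x') + sA1 ν x₀ * yB' y₀ * (y - y'))) := by
      rw [kk1, kk1]; ring
    rw [this, abs_mul, abs_of_pos (inv_pos.2 hq)]
    refine (mul_le_mul_of_nonneg_left h1 (inv_pos.2 hq).le).trans (key _ ?_)
    nlinarith [mul_nonneg (sub_nonneg.2 hν') (sq_nonneg (ν:ℝ))]
  · have : kk2 q ν x y - kk2 q ν x' y' - (q : ℝ)⁻¹ * (π * sA1 ν x₀ * yD y₀ * (x - x') +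
        sA ν x₀ * yD' y₀ * (y - y')) = (q : ℝ)⁻¹ * (sA ν x * yD y - sA ν x' * yD y' -
        (π * sA1 ν x₀ * yD y₀ * (x - x') + sA ν x₀ * yD' y₀ * (y - y'))) := by
      rw [kk2, kk2]; ring
    rw [this, abs_mul, abs_of_pos (inv_pos.2 hq)]
    refine (mul_le_mul_of_nonneg_left h2 (inv_pos.2 hq).le).trans (key _ ?_)
    nlinarith [mul_nonneg (sub_nonneg.2 hν') (sq_nonneg (ν:ℝ))]

/-- kicks away from the center. -/
lemma kk_small {q ν : ℕ} (hν : 3 ≤ ν) (hνq : ν ≤ q) {x₀ : ℝ} (hs : |Real.sin (π * x₀)| ≤ 1 / 8)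
    {ε : ℝ} (hε : ((2:ℝ) ^ ν)⁻¹ ≤ ε) {y₀ : ℝ} :
    |kk1 q ν x₀ y₀| ≤ 3 * ε ∧ |kk2 q ν x₀ y₀| ≤ 3 * ε ∧
    ∀ {x y x' y' ρ Δ : ℝ}, (|x - x₀| ≤ ρ) → (|x' - x₀| ≤ ρ) →
    (|y - y₀| ≤ ρ) → (|y' - y₀| ≤ ρ) → (|x - x'| ≤ Δ) → (|y - y'| ≤ Δ) →
    |kk1 q ν x y - kk1 q ν x' y'| ≤ (216 * q ^ 2 * ρ + 100 * q * ε) * Δ ∧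
    |kk2 q ν x y - kk2 q ν x' y'| ≤ (216 * q ^ 2 * ρ + 100 * q * ε) * Δ := by
  have hν' : (3:ℝ) ≤ ν := by exact_mod_cast hν
  have hνq' : (ν:ℝ) ≤ q := by exact_mod_cast hνq
  have hq : (0:ℝ) < q := by linarith
  have hq1 : (1:ℝ) ≤ q := by linarith
  have hε0 : 0 ≤ ε := le_trans (by positivity) hε
  have p0 : |Real.sin (π * x₀)| ^ (ν - 2) ≤ ε := by
    refine le_trans (le_trans (pow_le_pow_left₀ (abs_nonneg _) hs _) ?_) hε
    obtain ⟨m, rfl⟩ := Nat.exists_eq_add_of_le' hν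
    rw [show m + 3 - 2 = m + 1 from rfl]
    have : ((2:ℝ) ^ (m + 3))⁻¹ = (1 / 2) ^ m * (1 / 8) := by
      rw [pow_add, mul_inv, ← inv_pow]; norm_num
    rw [this, pow_succ]
    gcongr
    norm_num
  have p1 : ∀ j, ν - 2 ≤ j → |Real.sin (π * x₀) ^ j| ≤ ε := fun j hj => by
    rw [abs_pow]
    exact (pow_le_pow_of_le_one (abs_nonneg _) (by linarith) hj).trans p0
  have a0 : |sA ν x₀| ≤ ε := p1 _ (by omega)
  have a1 : |sA1 ν x₀| ≤ ν * ε := by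
    rw [sA1]
    refine abs_mul_le_of1 ?_ (Real.abs_cos_le_one _)
    rw [abs_mul, abs_of_pos (by linarith)]
    gcongr
    exact p1 _ (by omega)
  have a2 : |sA2 ν x₀| ≤ 4 * ν ^ 2 * ε := by
    rw [sA2, abs_mul, abs_of_pos (by have := Real.pi_pos; positivity)]
    have h1 : |((ν:ℝ) - 1) * Real.sin (π * x₀) ^ (ν - 2) * Real.cos (π * x₀) ^ 2| ≤ (ν - 1) * ε := by
      refine abs_mul_le_of1 ?_ (abs_pow_le1 (Real.abs_cos_le_one _) 2)
      rw [abs_mul, abs_of_pos (by linarith)]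
      have := p1 _ (le_refl (ν - 2))
      have h0 : (0:ℝ) ≤ ν - 1 := by linarith
      gcongr
    have h2 := abs_sub (((ν:ℝ) - 1) * Real.sin (π * x₀) ^ (ν - 2) * Real.cos (π * x₀) ^ 2)
      (Real.sin (π * x₀) ^ ν)
    have h3 := p1 ν (by omega)
    have := Real.pi_lt_four
    calc _ ≤ 4 * ν * (ν * ε) := by gcongr; linarith
      _ = _ := by ring
  have qν : (q:ℝ)⁻¹ * ν ≤ 1 := by rw [inv_mul_le_iff₀ hq]; linarith
  have qi : (q:ℝ)⁻¹ ≤ 1 := inv_le_one_of_one_le₀ hq1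
  have qi0 : 0 < (q:ℝ)⁻¹ := inv_pos.2 hq
  refine ⟨?_, ?_, ?_⟩
  · rw [kk1, abs_mul, abs_mul, abs_of_pos qi0]
    have := yB_bound y₀
    calc _ ≤ (q:ℝ)⁻¹ * ((ν * ε) * 3) := by gcongr
      _ = ((q:ℝ)⁻¹ * ν) * (3 * ε) := by ring
      _ ≤ 1 * (3 * ε) := by gcongr
      _ = _ := by ring
  · rw [kk2, abs_mul, abs_mul, abs_of_pos qi0]
    have := yD_bound y₀
    calc _ ≤ 1 * (ε * 2) := by gcongr
      _ ≤ _ := by linarith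
  · intro x y x' y' ρ Δ hx hx' hy hy' hΔx hΔy
    have hΔ : 0 ≤ Δ := (abs_nonneg _).trans hΔx
    obtain ⟨h1, h2⟩ := kk_c11 hν hνq hx hx' hy hy' hΔx hΔy
    have m1 : |sA2 ν x₀ * yB y₀ * (x - x') + sA1 ν x₀ * yB' y₀ * (y - y')| ≤
        (4 * ν ^ 2 * ε) * 3 * Δ + ν * ε * 7 * Δ := by
      refine (abs_add_le _ _).trans ?_
      rw [abs_mul, abs_mul, abs_mul, abs_mul]
      have := yB_bound y₀
      have := yB'_bound y₀
      gcongr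
    have m2 : |π * sA1 ν x₀ * yD y₀ * (x - x') + sA ν x₀ * yD' y₀ * (y - y')| ≤
        (4 * (ν * ε)) * 2 * Δ + ε * 13 * Δ := by
      refine (abs_add_le _ _).trans ?_
      rw [abs_mul, abs_mul, abs_mul, abs_mul, abs_mul, abs_of_pos Real.pi_pos]
      have := yD_bound y₀
      have := yD'_bound y₀
      have := Real.pi_lt_four
      gcongr
    have key : ∀ A B k : ℝ, |k - (q:ℝ)⁻¹ * A| ≤ 216 * q ^ 2 * ρ * Δ → |A| ≤ B → 
        B ≤ 100 * ν ^ 2 * ε * Δ → |k| ≤ (216 * q ^ 2 * ρ + 100 * q * ε) * Δ := by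
      intro A B k hk hA hB
      have e1 : (q:ℝ)⁻¹ * |A| ≤ 100 * q * ε * Δ := by
        rw [inv_mul_le_iff₀ hq]
        calc |A| ≤ 100 * ν ^ 2 * ε * Δ := hA.trans hB
          _ ≤ 100 * q ^ 2 * ε * Δ := by gcongr
          _ = _ := by ring
      have e2 := abs_add_le (k - (q:ℝ)⁻¹ * A) ((q:ℝ)⁻¹ * A)
      rw [sub_add_cancel, abs_mul, abs_of_pos qi0] at e2
      linarith
    have hεΔ : 0 ≤ ε * Δ := by positivity
    have c1 : (ν:ℝ) * (ε * Δ) ≤ ν ^ 2 * (ε * Δ) := by gcongr; nlinarith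
    have c2 : 1 * (ε * Δ) ≤ ν ^ 2 * (ε * Δ) := by gcongr; nlinarith
    refine ⟨key _ _ _ h1 m1 ?_, key _ _ _ h2 m2 ?_⟩
    · nlinarith
    · nlinarith

def kap (q ν : ℕ) : ℝ := (q:ℝ)⁻¹ * (π * ν * (2 + √3 / 2))
def cc : ℝ := - (2 * √3 * π)

lemma cos_half_int (k : ℤ) : Real.cos (π * (1 / 2 + k)) = 0 := by
  rw [show π * (1 / 2 + k) = π / 2 + k * π by ring, Real.cos_add_int_mul_pi]; simp

lemma sin_half_int_sq (k : ℤ) : Real.sin (π * (1 / 2 + k)) ^ 2 = 1 := by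
  have := Real.sin_sq_add_cos_sq (π * (1 / 2 + k))
  rw [cos_half_int] at this
  linarith

lemma ang_int (j : ℤ) : Real.sin (2 * π * ((j:ℝ) + 6⁻¹)) = √3 / 2 ∧
    Real.cos (2 * π * ((j:ℝ) + 6⁻¹)) = 1 / 2 := by
  rw [show 2 * π * ((j:ℝ) + 6⁻¹) = π / 3 + j * (2 * π) by ring, Real.sin_add_int_mul_two_pi,
    Real.cos_add_int_mul_two_pi, Real.sin_pi_div_three, Real.cos_pi_div_three]
  exact ⟨rfl, rfl⟩

lemma kk_center {q ν : ℕ} (hν : 3 ≤ ν) (hνe : Even ν) (hνq : ν ≤ q) (k j : ℤ) :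
    kk1 q ν (1 / 2 + k) j = 0 ∧ kk2 q ν (1 / 2 + k) j = (q:ℝ)⁻¹ ∧
    ∀ {x y x' y' ρ Δ : ℝ}, (|x - (1 / 2 + k)| ≤ ρ) → (|x' - (1 / 2 + k)| ≤ ρ) →
    (|y - j| ≤ ρ) → (|y' - j| ≤ ρ) → (|x - x'| ≤ Δ) → (|y - y'| ≤ Δ) →
    |kk1 q ν x y - kk1 q ν x' y' - (- kap q ν) * (x - x')| ≤ 216 * q ^ 2 * ρ * Δ ∧
    |kk2 q ν x y - kk2 q ν x' y' - cc / q * (y - y')| ≤ 216 * q ^ 2 * ρ * Δ := by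
  have hc := cos_half_int k
  have hs := sin_half_int_sq k
  obtain ⟨s3, c3⟩ := ang_int j
  have hsν : Real.sin (π * (1 / 2 + k)) ^ ν = 1 := by
    obtain ⟨m, rfl⟩ := hνe
    rw [← two_mul, pow_mul, hs, one_pow]
  have e0 : sA ν (1 / 2 + k) = 1 := hsν
  have e1 : sA1 ν (1 / 2 + k) = 0 := by rw [sA1, hc, mul_zero]
  have e2 : sA2 ν (1 / 2 + k) = - (π * ν) := by rw [sA2, hc, hsν]; ring
  refine ⟨by rw [kk1, e1]; ring, by rw [kk2, e0, yD, c3]; ring, ?_⟩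
  intro x y x' y' ρ Δ hx hx' hy hy' hΔx hΔy
  obtain ⟨h1, h2⟩ := kk_c11 hν hνq hx hx' hy hy' hΔx hΔy
  rw [e1, e2, yB, s3] at h1
  rw [e1, e0, yD', s3] at h2
  constructor
  · convert h1 using 3
    rw [kap]; ring
  · convert h2 using 3
    rw [cc]; ring

/-- A `2 × 2` matrix as a linear map. -/
def mk2 (a b c d : ℝ) : (ℝ × ℝ) →ₗ[ℝ] (ℝ × ℝ) where
  toFun z := (a * z.1 + b * z.2, c * z.1 + d * z.2)
  map_add' z w := by ext <;> simp <;> ring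
  map_smul' t z := by ext <;> simp <;> ring

lemma mk2_apply (a b c d : ℝ) (z : ℝ × ℝ) :
    mk2 a b c d z = (a * z.1 + b * z.2, c * z.1 + d * z.2) := rfl

lemma mk2_bound {a b c d A : ℝ} (ha : |a| ≤ A) (hb : |b| ≤ A) (hc : |c| ≤ A) (hd : |d| ≤ A)
    (z : ℝ × ℝ) : ‖mk2 a b c d z‖ ≤ 2 * A * ‖z‖ := by
  have h := P2_abs_le z
  have hA : 0 ≤ A := (abs_nonneg _).trans ha
  have key : ∀ s t : ℝ, |s| ≤ A → |t| ≤ A → |s * z.1 + t * z.2| ≤ 2 * A * ‖z‖ := by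
    intro s t hs ht
    refine (abs_add_le _ _).trans ?_
    rw [abs_mul, abs_mul]
    have h1 : |s| * |z.1| ≤ A * ‖z‖ := mul_le_mul hs h.1 (abs_nonneg _) hA
    have h2 : |t| * |z.2| ≤ A * ‖z‖ := mul_le_mul ht h.2 (abs_nonneg _) hA
    linarith
  rw [mk2_apply, P2_norm_le]
  exact ⟨key a b ha hb, key c d hc hd⟩

def mk2i (a b c d : ℝ) : (ℝ × ℝ) →ₗ[ℝ] (ℝ × ℝ) :=
  mk2 (d / (a * d - b * c)) (-b / (a * d - b * c)) (-c / (a * d - b * c)) (a / (a * d - b * c))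

lemma mk2_mk2i {a b c d : ℝ} (h : a * d - b * c ≠ 0) (z : ℝ × ℝ) :
    mk2 a b c d (mk2i a b c d z) = z := by
  rw [mk2i, mk2_apply, mk2_apply]
  have hD : (a * d - b * c) * (a * d - b * c)⁻¹ = 1 := mul_inv_cancel₀ h
  simp only [div_eq_mul_inv]
  ext
  · simp only; linear_combination z.1 * hD
  · simp only; linear_combination z.2 * hD

lemma mk2i_mk2 {a b c d : ℝ} (h : a * d - b * c ≠ 0) (z : ℝ × ℝ) :
    mk2i a b c d (mk2 a b c d z) = z := by
  rw [mk2i, mk2_apply, mk2_apply]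
  have hD : (a * d - b * c) * (a * d - b * c)⁻¹ = 1 := mul_inv_cancel₀ h
  simp only [div_eq_mul_inv]
  ext
  · simp only; linear_combination z.1 * hD
  · simp only; linear_combination z.2 * hD

lemma mk2i_bound {a b c d A D : ℝ} (ha : |a| ≤ A) (hb : |b| ≤ A) (hc : |c| ≤ A) (hd : |d| ≤ A)
    (hD : 0 < D) (h : D ≤ |a * d - b * c|) (z : ℝ × ℝ) : ‖mk2i a b c d z‖ ≤ 2 * (A / D) * ‖z‖ := by
  have hA : 0 ≤ A := (abs_nonneg _).trans ha
  have key : ∀ s : ℝ, |s| ≤ A → |s / (a * d - b * c)| ≤ A / D := by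
    intro s hs
    rw [abs_div]
    gcongr
  exact mk2_bound (key _ hd) (key _ (by rwa [abs_neg])) (key _ (by rwa [abs_neg])) (key _ ha) z

/-! indices -/
def m2 (q : ℕ) : ℤ := (q : ℤ) / 2
def m1 (q : ℕ) : ℤ := (q : ℤ) - 1 - m2 q
def kI (q : ℕ) (n : ℤ) : ℤ := (n + m2 q) / q
def iI (q : ℕ) (n : ℤ) : ℤ := (n + m2 q) % q - m2 q

lemma iI_bounds {q : ℕ} (hq : 2 ≤ q) (n : ℤ) : - m2 q ≤ iI q n ∧ iI q n ≤ m1 q := by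
  have hq' : (0:ℤ) < q := by omega
  have h1 := Int.emod_nonneg (n + m2 q) hq'.ne'
  have h2 := Int.emod_lt_of_pos (n + m2 q) hq'
  simp only [iI, m1]
  omega

lemma m_bounds {q : ℕ} (hq : 2 ≤ q) : 1 ≤ m2 q ∧ 0 ≤ m1 q ∧ m1 q + 1 + m2 q = q ∧
    (q:ℤ) ≤ 2 * m2 q + 1 ∧ (q:ℤ) ≤ 2 * (m1 q + 1) := by
  simp only [m1, m2]; omega

lemma kI_iI_unique {q : ℕ} (hq : 2 ≤ q) {n k i : ℤ} (h : n = k * q + i) (h1 : - m2 q ≤ i)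
    (h2 : i ≤ m1 q) : kI q n = k ∧ iI q n = i := by
  have hq' : (0:ℤ) < q := by omega
  have e : n + m2 q = (i + m2 q) + k * q := by rw [h]; ring
  have hm := m_bounds hq
  have b1 : 0 ≤ i + m2 q := by omega
  have b2 : i + m2 q < q := by omega
  simp only [kI, iI]
  rw [e, Int.add_mul_ediv_right _ _ hq'.ne', Int.add_mul_emod_self_right,
    Int.ediv_eq_zero_of_lt b1 b2, Int.emod_eq_of_lt b1 b2]
  omega

lemma kI_iI_spec (q : ℕ) (n : ℤ) : n = kI q n * q + iI q n := by
  have := Int.mul_ediv_add_emod (n + m2 q) q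
  simp only [kI, iI]
  linarith

lemma kI_iI_step {q : ℕ} (hq : 2 ≤ q) (n : ℤ) :
    (iI q n < m1 q ∧ kI q (n + 1) = kI q n ∧ iI q (n + 1) = iI q n + 1) ∨
    (iI q n = m1 q ∧ kI q (n + 1) = kI q n + 1 ∧ iI q (n + 1) = - m2 q) := by
  have hs := kI_iI_spec q n
  have hb := iI_bounds hq n
  have hm := m_bounds hq
  rcases lt_or_eq_of_le hb.2 with h | h
  · left
    refine ⟨h, kI_iI_unique hq ?_ ?_ ?_⟩
    · linarith
    · omega
    · omega
  · right
    refine ⟨h, kI_iI_unique hq ?_ ?_ ?_⟩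
    · linarith
    · omega
    · omega

/-! the x-block -/
def Ws (q : ℕ) (i : ℤ) : ℝ := ((m1 q - i + 1 : ℤ) : ℝ)
def Wu (q : ℕ) (i : ℤ) : ℝ := ((i + m2 q + 1 : ℤ) : ℝ)
def ex (i : ℤ) : ℝ := Real.exp (2 * π * i)
def sB (κ : ℝ) (i : ℤ) : ℝ := if 0 ≤ i then 0 else κ * ex i
def uB (κ : ℝ) (i : ℤ) : ℝ := if 0 ≤ i then - κ * ex (-i) else 0
def es (κ : ℝ) (i : ℤ) : ℝ × ℝ := Wv (ex i) (sB κ i) i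
def eu (κ : ℝ) (i : ℤ) : ℝ × ℝ := Wv (ex (-i)) (uB κ i) i

lemma ex_pos (i : ℤ) : 0 < ex i := Real.exp_pos _
lemma ex_add (i j : ℤ) : ex (i + j) = ex i * ex j := by
  rw [ex, ex, ex, ← Real.exp_add]; push_cast; ring_nf
lemma ex_neg (i : ℤ) : ex (-i) = (ex i)⁻¹ := by
  rw [ex, ex, ← Real.exp_neg]; push_cast; ring_nf
lemma ex_one_ge : 16 ≤ ex 1 := by
  have : ex 1 = Real.exp π * Real.exp π := by
    rw [ex, ← Real.exp_add]; push_cast; ring_nf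
  rw [this]
  nlinarith [Real.add_one_le_exp π, Real.pi_gt_three]
lemma ex_ge_one {i : ℤ} (hi : 0 ≤ i) : 1 ≤ ex i := by
  have : (0:ℝ) ≤ i := by exact_mod_cast hi
  exact Real.one_le_exp (by positivity)
lemma ex_mono {i j : ℤ} (h : i ≤ j) : ex i ≤ ex j := by
  have h' : (i:ℝ) ≤ j := by exact_mod_cast h
  have := Real.pi_pos
  exact Real.exp_le_exp.2 (by gcongr)

lemma es_eu_det (κ : ℝ) (i : ℤ) : (es κ i).1 * (eu κ i).2 - (eu κ i).1 * (es κ i).2 = - (4 * π * κ) := by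
  have h := wronsk i
  have he : ex i * ex (-i) = 1 := by rw [ex_neg]; exact mul_inv_cancel₀ (ex_pos i).ne'
  simp only [es, eu, Wv, sB, uB]
  split_ifs
  · linear_combination (- κ * (ex i * ex (-i))) * h - (4 * π * κ) * he
  · linear_combination (- κ * (ex i * ex (-i))) * h - (4 * π * κ) * he

lemma es_eu_bound {κ : ℝ} (hκ : 0 ≤ κ) (hκ1 : κ ≤ 1) (i : ℤ) :
    |(es κ i).1| ≤ 100 ∧ |(es κ i).2| ≤ 100 ∧ |(eu κ i).1| ≤ 100 ∧ |(eu κ i).2| ≤ 100 := by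
  obtain ⟨h1, h2, h3, h4⟩ := v_bound i
  have e0 : Real.exp (2 * π * |(i:ℝ)|) = ex |i| := by rw [ex]; push_cast; rfl
  rw [e0] at h1 h2 h3 h4
  have hX := ex_ge_one (abs_nonneg i)
  set X := ex |i| with hXd
  have hX0 : 0 < X := by linarith
  have hXi : X⁻¹ ≤ 1 := inv_le_one_of_one_le₀ hX
  have hXi0 : 0 < X⁻¹ := by positivity
  have hXX : X * X⁻¹ = 1 := mul_inv_cancel₀ hX0.ne'
  have k1 : ∀ v : ℝ, |v| ≤ 50 * X⁻¹ → |X * v| ≤ 50 := by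
    intro v hv
    rw [abs_mul, abs_of_pos hX0]
    calc X * |v| ≤ X * (50 * X⁻¹) := by gcongr
      _ = 50 := by linear_combination 50 * hXX
  have k2 : ∀ v w c : ℝ, |v| ≤ 50 * X⁻¹ → |w| ≤ 50 * X → |c| ≤ 1 → |X⁻¹ * v + c * X⁻¹ * w| ≤ 100 := by
    intro v w c hv hw hc
    have a1 : |X⁻¹ * v| ≤ 50 := by
      rw [abs_mul, abs_of_pos hXi0]
      calc X⁻¹ * |v| ≤ 1 * (50 * 1) := by gcongr; linarith
        _ = _ := by norm_num
    have a2 : |c * X⁻¹ * w| ≤ 50 := by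
      rw [abs_mul, abs_mul, abs_of_pos hXi0]
      calc |c| * X⁻¹ * |w| ≤ 1 * X⁻¹ * (50 * X) := by gcongr
        _ = 50 := by linear_combination 50 * hXX
    linarith [abs_add_le (X⁻¹ * v) (c * X⁻¹ * w)]
  have hκa : |κ| ≤ 1 := by rwa [abs_of_nonneg hκ]
  have hκn : |-κ| ≤ 1 := by rwa [abs_neg]
  simp only [es, eu, Wv, sB, uB]
  rcases le_or_gt 0 i with hi | hi
  · have x1 : ex i = X := by rw [hXd, abs_of_nonneg hi]
    have x2 : ex (-i) = X⁻¹ := by rw [ex_neg, x1]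
    rw [x1, x2]
    simp only [hi, if_true]
    refine ⟨?_, ?_, k2 _ _ _ h1 h3 hκn, k2 _ _ _ h2 h4 hκn⟩
    · simpa using (k1 _ h1).trans (by norm_num)
    · simpa using (k1 _ h2).trans (by norm_num)
  · have x2 : ex (-i) = X := by rw [hXd, abs_of_neg hi]
    have x1 : ex i = X⁻¹ := by rw [← x2, ex_neg, inv_inv]
    rw [x1, x2]
    simp only [not_le.2 hi, if_false]
    refine ⟨k2 _ _ _ h1 h3 hκa, k2 _ _ _ h2 h4 hκa, ?_, ?_⟩
    · simpa using (k1 _ h1).trans (by norm_num)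
    · simpa using (k1 _ h2).trans (by norm_num)

def Mx (q : ℕ) (κ : ℝ) (i : ℤ) : (ℝ × ℝ) →ₗ[ℝ] (ℝ × ℝ) :=
  mk2 (Ws q i * (es κ i).1) (Wu q i * (eu κ i).1) (Ws q i * (es κ i).2) (Wu q i * (eu κ i).2)
def Mxi (q : ℕ) (κ : ℝ) (i : ℤ) : (ℝ × ℝ) →ₗ[ℝ] (ℝ × ℝ) :=
  mk2i (Ws q i * (es κ i).1) (Wu q i * (eu κ i).1) (Ws q i * (es κ i).2) (Wu q i * (eu κ i).2)

lemma Mx_eq (q : ℕ) (κ : ℝ) (i : ℤ) (z : ℝ × ℝ) : Mx q κ i z =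
    Wv (Ws q i * ex i * z.1 + Wu q i * ex (-i) * z.2)
      (Ws q i * sB κ i * z.1 + Wu q i * uB κ i * z.2) i := by
  rw [Mx, mk2_apply]
  simp only [es, eu, Wv]
  ext <;> simp only <;> ring

lemma W_bounds {q : ℕ} (hq : 2 ≤ q) {i : ℤ} (h1 : - m2 q ≤ i) (h2 : i ≤ m1 q) :
    (1 ≤ Ws q i ∧ Ws q i ≤ q) ∧ (1 ≤ Wu q i ∧ Wu q i ≤ q) := by
  have hm := m_bounds hq
  have a : (1:ℤ) ≤ m1 q - i + 1 := by omega
  have b : m1 q - i + 1 ≤ (q:ℤ) := by omega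
  have c : (1:ℤ) ≤ i + m2 q + 1 := by omega
  have d : i + m2 q + 1 ≤ (q:ℤ) := by omega
  simp only [Ws, Wu]
  exact ⟨⟨by exact_mod_cast a, by exact_mod_cast b⟩, ⟨by exact_mod_cast c, by exact_mod_cast d⟩⟩

lemma Mx_entries {q : ℕ} (hq : 2 ≤ q) {κ : ℝ} (hκ : 0 ≤ κ) (hκ1 : κ ≤ 1) {i : ℤ}
    (h1 : - m2 q ≤ i) (h2 : i ≤ m1 q) :
    |Ws q i * (es κ i).1| ≤ 100 * q ∧ |Wu q i * (eu κ i).1| ≤ 100 * q ∧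
    |Ws q i * (es κ i).2| ≤ 100 * q ∧ |Wu q i * (eu κ i).2| ≤ 100 * q := by
  obtain ⟨⟨a, b⟩, ⟨c, d⟩⟩ := W_bounds hq h1 h2
  obtain ⟨e1, e2, e3, e4⟩ := es_eu_bound hκ hκ1 i
  have key : ∀ w v : ℝ, 1 ≤ w → w ≤ q → |v| ≤ 100 → |w * v| ≤ 100 * q := by
    intro w v hw hw' hv
    rw [abs_mul, abs_of_pos (by linarith)]
    nlinarith [abs_nonneg v]
  exact ⟨key _ _ a b e1, key _ _ c d e3, key _ _ a b e2, key _ _ c d e4⟩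

lemma Mx_det {q : ℕ} (hq : 2 ≤ q) {κ : ℝ} (hκ : 0 ≤ κ) {i : ℤ}
    (h1 : - m2 q ≤ i) (h2 : i ≤ m1 q) :
    κ ≤ |Ws q i * (es κ i).1 * (Wu q i * (eu κ i).2) - Wu q i * (eu κ i).1 * (Ws q i * (es κ i).2)| := by
  obtain ⟨⟨a, b⟩, ⟨c, d⟩⟩ := W_bounds hq h1 h2
  have : Ws q i * (es κ i).1 * (Wu q i * (eu κ i).2) - Wu q i * (eu κ i).1 * (Ws q i * (es κ i).2) =
    -(Ws q i * Wu q i * (4 * π * κ)) := by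
    linear_combination (Ws q i * Wu q i) * es_eu_det κ i
  have hp := Real.pi_gt_three
  rw [this, abs_neg, abs_of_nonneg (by positivity)]
  have h3 : 1 ≤ Ws q i * Wu q i := by nlinarith
  have h4 : κ ≤ 4 * π * κ := by nlinarith
  nlinarith

def al1 (q : ℕ) (κ : ℝ) (i : ℤ) : ℝ :=
  if i = m1 q then - (4 / (ex 1 * q * κ)) else (ex 1)⁻¹ * (Ws q i / Ws q (i + 1))
def be1 (q : ℕ) (κ : ℝ) (i : ℤ) : ℝ :=
  if i = m1 q then - (κ * q * ex 1 / 4) else ex 1 * (Wu q i / Wu q (i + 1))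

lemma Ws_succ (q : ℕ) (i : ℤ) : Ws q i = Ws q (i + 1) + 1 := by
  simp only [Ws]; push_cast; ring
lemma Wu_succ (q : ℕ) (i : ℤ) : Wu q (i + 1) = Wu q i + 1 := by
  simp only [Wu]; push_cast; ring

lemma al1_be1_bound {q : ℕ} (hq : 2 ≤ q) {κ : ℝ} (hκ : 0 < κ) (hκq : 4 ≤ κ * q) {i : ℤ}
    (h1 : - m2 q ≤ i) (h2 : i ≤ m1 q) :
    |al1 q κ i| ≤ 1 / 2 ∧ be1 q κ i ≠ 0 ∧ |(be1 q κ i)⁻¹| ≤ 1 / 2 := by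
  have hL := ex_one_ge
  have hqp : (0:ℝ) < q := by exact_mod_cast (by omega : 0 < q)
  have hLi : (ex 1)⁻¹ ≤ 1 / 16 := by
    rw [inv_le_comm₀ (by linarith) (by norm_num)]; simpa using hL
  simp only [al1, be1]
  split_ifs with h
  · have e : 4 / (ex 1 * q * κ) ≤ 1 / 2 := by
      rw [div_le_div_iff₀ (by positivity) (by norm_num)]; nlinarith
    have e2 : (κ * q * ex 1 / 4) ≠ 0 := by positivity
    have e3 : (κ * q * ex 1 / 4)⁻¹ = 4 / (ex 1 * q * κ) := by rw [inv_div]; ring_nf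
    refine ⟨?_, neg_ne_zero.2 e2, ?_⟩
    · rw [abs_neg, abs_of_pos (by positivity)]; exact e
    · rw [inv_neg, e3, abs_neg, abs_of_pos (by positivity)]; exact e
  · have hb := W_bounds hq (i := i + 1) (by omega) (by omega)
    have hb0 := W_bounds hq h1 h2
    have s1 := Ws_succ q i
    have s2 := Wu_succ q i
    have r1 : Ws q i / Ws q (i + 1) ≤ 2 := by
      rw [div_le_iff₀ (by linarith [hb.1.1])]; linarith [hb.1.1]
    have r2 : Wu q (i + 1) / Wu q i ≤ 2 := by
      rw [div_le_iff₀ (by linarith [hb0.2.1])]; linarith [hb0.2.1]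
    have p1 : 0 < Ws q i := by linarith [hb0.1.1]
    have p2 : 0 < Ws q (i + 1) := by linarith [hb.1.1]
    have p3 : 0 < Wu q i := by linarith [hb0.2.1]
    have p4 : 0 < Wu q (i + 1) := by linarith [hb.2.1]
    have pe := ex_pos 1
    refine ⟨?_, by positivity, ?_⟩
    · rw [abs_of_pos (by positivity)]
      calc (ex 1)⁻¹ * (Ws q i / Ws q (i + 1)) ≤ 1 / 16 * 2 := by gcongr
        _ ≤ _ := by norm_num
    · rw [mul_inv, inv_div, abs_of_pos (by positivity)]
      calc (ex 1)⁻¹ * (Wu q (i + 1) / Wu q i) ≤ 1 / 16 * 2 := by gcongr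
        _ ≤ _ := by norm_num

/-- The x-coefficients after a step which is not a switch. -/
lemma Mx_step {q : ℕ} (hq : 2 ≤ q) {κ : ℝ} {i : ℤ}
    (h1 : - m2 q ≤ i) (h2 : i < m1 q) (z : ℝ × ℝ) :
    ∃ A B : ℝ, Mx q κ i z = Wv A B i ∧
      Mx q κ (i + 1) (al1 q κ i * z.1, be1 q κ i * z.2) =
        Wv A (if i + 1 = 0 then B - κ * A else B) (i + 1) := by
  have hb := W_bounds hq (i := i + 1) (by omega) (by omega)
  have hb0 := W_bounds hq h1 h2.le
  have p2 : Ws q (i + 1) ≠ 0 := by linarith [hb.1.1]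
  have p4 : Wu q (i + 1) ≠ 0 := by linarith [hb.2.1]
  have pe := (ex_pos 1).ne'
  have pi' := (ex_pos i).ne'
  have hi1 : ex (i + 1) = ex i * ex 1 := ex_add i 1
  have hi2 : ex (-(i + 1)) = ex (-i) * (ex 1)⁻¹ := by rw [ex_neg, hi1, mul_inv, ex_neg]
  refine ⟨_, _, Mx_eq q κ i z, ?_⟩
  rw [Mx_eq]
  have hne : i ≠ m1 q := h2.ne
  simp only [al1, be1, hne, if_false]
  push_cast
  have ha : Ws q (i + 1) * ex (i + 1) * ((ex 1)⁻¹ * (Ws q i / Ws q (i + 1)) * z.1) +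
      Wu q (i + 1) * ex (-(i + 1)) * (ex 1 * (Wu q i / Wu q (i + 1)) * z.2) =
      Ws q i * ex i * z.1 + Wu q i * ex (-i) * z.2 := by
    rw [hi1, hi2]; field_simp
  have hb' : Ws q (i + 1) * sB κ (i + 1) * ((ex 1)⁻¹ * (Ws q i / Ws q (i + 1)) * z.1) +
      Wu q (i + 1) * uB κ (i + 1) * (ex 1 * (Wu q i / Wu q (i + 1)) * z.2) =
      if i + 1 = 0 then Ws q i * sB κ i * z.1 + Wu q i * uB κ i * z.2 -
        κ * (Ws q i * ex i * z.1 + Wu q i * ex (-i) * z.2)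
      else Ws q i * sB κ i * z.1 + Wu q i * uB κ i * z.2 := by
    rcases lt_trichotomy (i + 1) 0 with h | h | h
    · have n1 : ¬ (0 ≤ i + 1) := by omega
      have n2 : ¬ (0 ≤ i) := by omega
      simp only [h.ne, if_false, sB, uB, n1, n2, hi1]
      field_simp
      ring
    · have n1 : (0 ≤ i + 1) := by omega
      have n2 : ¬ (0 ≤ i) := by omega
      simp only [h, if_true, sB, uB, n2, if_false, le_refl]
      rw [← h, hi2]
      rw [h] at p4
      rw [h]
      field_simp
      ring
    · have n1 : (0 ≤ i + 1) := by omega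
      have n2 : (0 ≤ i) := by omega
      simp only [h.ne', if_false, sB, uB, n1, n2, if_true, hi2]
      field_simp
      ring
  rw [ha, hb']

set_option maxHeartbeats 1000000 in
/-- The x-coefficients after a switch. -/
lemma Mx_switch {q : ℕ} (hq : 2 ≤ q) {κ : ℝ} (hκ : 0 < κ) (hκ1 : κ ≤ 1) (hκq : 4 ≤ κ * q)
    {ε : ℝ} (hε1 : (ex (m1 q + 1))⁻¹ ≤ ε) (hε2 : (ex (m2 q))⁻¹ ≤ ε) (hε : ε ≤ 1) (z : ℝ × ℝ) :
    ∃ A B : ℝ, Mx q κ (m1 q) z = Wv A B (m1 q) ∧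
      ‖Wv A B (m1 q + 1 : ℤ) - Mx q κ (- m2 q) (al1 q κ (m1 q) * z.1, be1 q κ (m1 q) * z.2)‖ ≤
       (400 * ex 1 * q * ε) * ‖z‖ := by
  have hm := m_bounds hq
  refine ⟨_, _, Mx_eq q κ _ z, ?_⟩
  rw [Mx, mk2_apply]
  have w1 : Ws q (m1 q) = 1 := by simp [Ws]
  have w2 : Wu q (m1 q) = q := by
    rw [Wu, show m1 q + m2 q + 1 = (q:ℤ) by linarith [hm.2.2.1]]; simp
  have w3 : Ws q (-m2 q) = q := by
    rw [Ws, show m1 q - -m2 q + 1 = (q:ℤ) by linarith [hm.2.2.1]]; simp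
  have w4 : Wu q (-m2 q) = 1 := by simp [Wu]
  have n1 : ¬ (0 ≤ - m2 q) := by omega
  simp only [w1, w2, w3, w4, es, eu, sB, uB, hm.2.1, n1, if_true, if_false, al1, be1, Wv]
  have c1 : (((- m2 q : ℤ)) : ℝ) = - ((m2 q : ℤ) : ℝ) := by push_cast; ring
  rw [c1, vS_neg, vS'_neg, vP_neg, vP'_neg, neg_neg]
  have t1 : (0:ℝ) ≤ ((m1 q + 1 : ℤ) : ℝ) := by exact_mod_cast (by omega : (0:ℤ) ≤ m1 q + 1)
  have t2 : (0:ℝ) ≤ ((m2 q : ℤ) : ℝ) := by exact_mod_cast (by omega : (0:ℤ) ≤ m2 q)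
  obtain ⟨a1, a2, a3, a4⟩ := v_asymp t1
  obtain ⟨b1, b2, b3, b4⟩ := v_asymp t2
  obtain ⟨a5, a6, -, -⟩ := v_bound ((m1 q + 1 : ℤ) : ℝ)
  obtain ⟨b5, b6, -, -⟩ := v_bound ((m2 q : ℤ) : ℝ)
  rw [abs_of_nonneg t1] at a5 a6
  rw [abs_of_nonneg t2] at b5 b6
  change |ex (m1 q + 1) * _ - 2| ≤ 30 * (ex (m1 q + 1))⁻¹ at a1
  change |ex (m1 q + 1) * _ + 4 * π| ≤ 30 * (ex (m1 q + 1))⁻¹ at a2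
  change |(ex (m1 q + 1))⁻¹ * _ - 1 / 2| ≤ 30 * (ex (m1 q + 1))⁻¹ at a3
  change |(ex (m1 q + 1))⁻¹ * _ - π| ≤ 30 * (ex (m1 q + 1))⁻¹ at a4
  change |_| ≤ 50 * (ex (m1 q + 1))⁻¹ at a5
  change |_| ≤ 50 * (ex (m1 q + 1))⁻¹ at a6
  change |ex (m2 q) * _ - 2| ≤ 30 * (ex (m2 q))⁻¹ at b1
  change |ex (m2 q) * _ + 4 * π| ≤ 30 * (ex (m2 q))⁻¹ at b2
  change |(ex (m2 q))⁻¹ * _ - 1 / 2| ≤ 30 * (ex (m2 q))⁻¹ at b3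
  change |(ex (m2 q))⁻¹ * _ - π| ≤ 30 * (ex (m2 q))⁻¹ at b4
  change |_| ≤ 50 * (ex (m2 q))⁻¹ at b5
  change |_| ≤ 50 * (ex (m2 q))⁻¹ at b6
  have hX : ex (m1 q) = ex (m1 q + 1) * (ex 1)⁻¹ := by
    rw [ex_add, mul_assoc, mul_inv_cancel₀ (ex_pos 1).ne', mul_one]
  rw [ex_neg, hX, ex_neg, mul_inv, inv_inv]
  have hX1 := ex_ge_one (i := m1 q + 1) (by omega)
  have hY1 := ex_ge_one (i := m2 q) (by omega)
  have hL := ex_one_ge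
  set X := ex (m1 q + 1)
  set Y := ex (m2 q)
  set L := ex 1
  set T := ((m1 q + 1 : ℤ) : ℝ)
  set N := ((m2 q : ℤ) : ℝ)
  have hq1 : (2:ℝ) ≤ q := by exact_mod_cast hq
  have hz := P2_abs_le z
  have hLi0 : 0 < L⁻¹ := inv_pos.2 (by linarith)
  have hLi1 : L⁻¹ ≤ 1 := inv_le_one_of_one_le₀ (by linarith)
  have hLL : L * L⁻¹ = 1 := mul_inv_cancel₀ (by linarith)
  have hXi : X⁻¹ ≤ 1 := inv_le_one_of_one_le₀ hX1
  have hYi : Y⁻¹ ≤ 1 := inv_le_one_of_one_le₀ hY1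
  have hXi0 : 0 < X⁻¹ := inv_pos.2 (by linarith)
  have hYi0 : 0 < Y⁻¹ := inv_pos.2 (by linarith)
  have hε0 : 0 < ε := by linarith
  have hκi : κ⁻¹ ≤ q / 4 := by
    rw [inv_le_iff_one_le_mul₀ hκ]; nlinarith
  -- generic estimate for one component
  have key : ∀ vs vp ws wp g c : ℝ, |X * vs - g| ≤ 30 * ε → |X⁻¹ * vp - c| ≤ 30 * ε →
      |X⁻¹ * vs| ≤ 50 * ε → |Y⁻¹ * ws| ≤ 50 * ε →
      |Y * ws - 4 * c| ≤ 30 * ε → |Y⁻¹ * wp - (- g / 4)| ≤ 30 * ε →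
      |(1 * (X * L⁻¹) * z.1 + q * (X⁻¹ * L) * z.2) * vs + (1 * 0 * z.1 + q * (- κ * (X⁻¹ * L)) * z.2) * vp
        - (q * (Y⁻¹ * ws + κ * Y⁻¹ * wp) * (- (4 / (L * q * κ)) * z.1)
          + 1 * (Y * ws + 0 * wp) * (- (κ * q * L / 4) * z.2))| ≤ 400 * L * q * ε * ‖z‖ := by
    intro vs vp ws wp g c h1 h2 h3 h4 h5 h6
    have e : (1 * (X * L⁻¹) * z.1 + q * (X⁻¹ * L) * z.2) * vs + (1 * 0 * z.1 + q * (- κ * (X⁻¹ * L)) * z.2) * vp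
        - (q * (Y⁻¹ * ws + κ * Y⁻¹ * wp) * (- (4 / (L * q * κ)) * z.1)
          + 1 * (Y * ws + 0 * wp) * (- (κ * q * L / 4) * z.2)) =
        (L⁻¹ * ((X * vs - g) + 4 * κ⁻¹ * (Y⁻¹ * ws) + 4 * (Y⁻¹ * wp - (- g / 4)))) * z.1 +
        (q * L * ((X⁻¹ * vs) - κ * (X⁻¹ * vp - c) + κ / 4 * (Y * ws - 4 * c))) * z.2 := by
      have : (4 / (L * q * κ)) = 4 * L⁻¹ * (q:ℝ)⁻¹ * κ⁻¹ := by
        rw [div_eq_mul_inv, mul_inv, mul_inv]; ring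
      rw [this]
      have qq : (q:ℝ) * (q:ℝ)⁻¹ = 1 := mul_inv_cancel₀ (by linarith)
      have kk : κ * κ⁻¹ = 1 := mul_inv_cancel₀ hκ.ne'
      linear_combination (4 * L⁻¹ * z.1 * (κ⁻¹ * (Y⁻¹ * ws) + κ * κ⁻¹ * (Y⁻¹ * wp))) * qq +
        (4 * L⁻¹ * z.1 * (Y⁻¹ * wp)) * kk
    rw [e]
    have u1 : |L⁻¹ * ((X * vs - g) + 4 * κ⁻¹ * (Y⁻¹ * ws) + 4 * (Y⁻¹ * wp - (- g / 4)))| ≤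
        150 * q * ε := by
      rw [abs_mul, abs_of_pos hLi0]
      have y1 : |4 * κ⁻¹ * (Y⁻¹ * ws)| ≤ 50 * q * ε := by
        rw [abs_mul, abs_of_pos (by positivity)]
        calc 4 * κ⁻¹ * |Y⁻¹ * ws| ≤ 4 * (q / 4) * (50 * ε) := by gcongr
          _ = _ := by ring
      have y2 : |4 * (Y⁻¹ * wp - (- g / 4))| ≤ 120 * ε := by
        rw [abs_mul, abs_of_pos (by norm_num)]; linarith
      have y3 := abs_add_le ((X * vs - g) + 4 * κ⁻¹ * (Y⁻¹ * ws)) (4 * (Y⁻¹ * wp - (- g / 4)))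
      have y4 := abs_add_le (X * vs - g) (4 * κ⁻¹ * (Y⁻¹ * ws))
      have y5 : 2 * ε ≤ q * ε := by gcongr
      calc _ ≤ 1 * |(X * vs - g) + 4 * κ⁻¹ * (Y⁻¹ * ws) + 4 * (Y⁻¹ * wp - (- g / 4))| := by gcongr
        _ ≤ _ := by linarith
    have u2 : |q * L * ((X⁻¹ * vs) - κ * (X⁻¹ * vp - c) + κ / 4 * (Y * ws - 4 * c))| ≤
        110 * q * L * ε := by
      rw [abs_mul, abs_of_pos (by positivity)]
      have y1 : |κ * (X⁻¹ * vp - c)| ≤ 30 * ε := by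
        rw [abs_mul, abs_of_pos hκ]
        calc _ ≤ 1 * (30 * ε) := by gcongr
          _ = _ := by ring
      have y2 : |κ / 4 * (Y * ws - 4 * c)| ≤ 30 * ε := by
        rw [abs_mul, abs_of_pos (by positivity)]
        calc _ ≤ 1 * (30 * ε) := by gcongr; linarith
          _ = _ := by ring
      have y3 := abs_add_le ((X⁻¹ * vs) - κ * (X⁻¹ * vp - c)) (κ / 4 * (Y * ws - 4 * c))
      have y4 := abs_sub (X⁻¹ * vs) (κ * (X⁻¹ * vp - c))
      calc _ ≤ q * L * (110 * ε) := by gcongr; linarith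
        _ = _ := by ring
    refine (abs_add_le _ _).trans ?_
    rw [abs_mul _ z.1, abs_mul _ z.2]
    have f1 := mul_le_mul u1 hz.1 (abs_nonneg _) (by positivity)
    have f2 := mul_le_mul u2 hz.2 (abs_nonneg _) (by positivity)
    have f3 : q * ε * ‖z‖ * 1 ≤ q * ε * ‖z‖ * L := by gcongr; linarith
    have f4 : 0 ≤ q * ε * ‖z‖ * L := by positivity
    linarith
  have small : ∀ {x v B : ℝ}, 0 < x → x ≤ 1 → |v| ≤ 50 * B → B ≤ ε → |x * v| ≤ 50 * ε := by
    intro x v B hx hx1 hv hB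
    rw [abs_mul, abs_of_pos hx]
    nlinarith [abs_nonneg v]
  rw [P2_norm_le]
  constructor
  · refine key (vS T) (vP T) (vS N) (- vP N) 2 (1 / 2) (by linarith) (by linarith) (small hXi0 hXi a5 hε1)
      (small hYi0 hYi b5 hε2) ?_ ?_
    · norm_num; linarith
    · rw [show Y⁻¹ * -vP N - -2 / 4 = -(Y⁻¹ * vP N - 1 / 2) by ring, abs_neg]; linarith
  · refine key (vS' T) (vP' T) (- vS' N) (vP' N) (-(4 * π)) π ?_ (by linarith) (small hXi0 hXi a6 hε1)
      (small hYi0 hYi (by rw [abs_neg]; exact b6) hε2) ?_ ?_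
    · rw [sub_neg_eq_add]; linarith
    · rw [show Y * -vS' N - 4 * π = -(Y * vS' N + 4 * π) by ring, abs_neg]; linarith
    · rw [show Y⁻¹ * vP' N - - -(4 * π) / 4 = Y⁻¹ * vP' N - π by ring]; linarith

/-! the y-block -/
def bD : ℝ := √((2 + cc) ^ 2 - 4)
def muS : ℝ := ((2 + cc) + bD) / 2
def muU : ℝ := ((2 + cc) - bD) / 2

lemma cc_bounds : -11 ≤ cc ∧ cc ≤ -10 := by
  have h1 : √3 ≤ 1.74 := by
    rw [Real.sqrt_le_left (by norm_num)]; norm_num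
  have h2 : 1.7 ≤ √3 := by
    apply Real.le_sqrt_of_sq_le; norm_num
  have h3 := Real.pi_gt_d2
  have h4 := Real.pi_lt_d2
  rw [cc]
  constructor <;> nlinarith

lemma bD_facts : bD ^ 2 = (2 + cc) ^ 2 - 4 ∧ 7 ≤ bD ∧ bD ≤ 9 := by
  obtain ⟨h1, h2⟩ := cc_bounds
  have h0 : 0 ≤ (2 + cc) ^ 2 - 4 := by nlinarith
  refine ⟨Real.sq_sqrt h0, ?_, ?_⟩
  · apply Real.le_sqrt_of_sq_le; nlinarith
  · rw [bD, Real.sqrt_le_left (by norm_num)]; nlinarith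

lemma mu_facts : muS * muU = 1 ∧ muS ^ 2 - (2 + cc) * muS + 1 = 0 ∧
    muU ^ 2 - (2 + cc) * muU + 1 = 0 ∧ muU ≠ 0 ∧ |muS| ≤ 1 / 4 ∧ muU⁻¹ = muS ∧ |muU| ≤ 9 := by
  obtain ⟨h1, h2, h3⟩ := bD_facts
  obtain ⟨h4, h5⟩ := cc_bounds
  have p : muS * muU = 1 := by rw [muS, muU]; linear_combination (-1/4) * h1
  have u1 : muU ≤ -7 := by rw [muU]; linarith
  have u2 : -9 ≤ muU := by rw [muU]; linarith
  have hn : muU ≠ 0 := by linarith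
  have hi : muU⁻¹ = muS := by
    rw [inv_eq_iff_eq_inv]; exact (eq_inv_of_mul_eq_one_right p)
  refine ⟨p, ?_, ?_, hn, ?_, hi, ?_⟩
  · rw [muS]; linear_combination (1/4) * h1
  · rw [muU]; linear_combination (1/4) * h1
  · rw [abs_le]; constructor <;> nlinarith
  · rw [abs_le]; constructor <;> linarith

def rS (i : ℤ) : ℝ := if 0 ≤ i then muS - 1 else muS - 1 - cc
def rU (i : ℤ) : ℝ := if 0 ≤ i then muU - 1 else muU - 1 - cc
def Vs (q : ℕ) (i : ℤ) : ℝ := 1 + ((i + m2 q : ℤ) : ℝ) / q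
def Vu (q : ℕ) (i : ℤ) : ℝ := 1 + ((m1 q - i : ℤ) : ℝ) / q

lemma r_bounds (i : ℤ) : |rS i| ≤ 22 ∧ |rU i| ≤ 22 := by
  obtain ⟨-, -, -, -, h1, -, h2⟩ := mu_facts
  obtain ⟨h4, h5⟩ := cc_bounds
  rw [abs_le] at h1 h2
  simp only [rS, rU]
  split_ifs <;> exact ⟨by rw [abs_le]; constructor <;> linarith, by rw [abs_le]; constructor <;> linarith⟩

lemma r_diff (i : ℤ) : rU i - rS i = - bD := by
  simp only [rS, rU, muS, muU]
  split_ifs <;> ring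

lemma V_bounds {q : ℕ} (hq : 2 ≤ q) {i : ℤ} (h1 : - m2 q ≤ i) (h2 : i ≤ m1 q) :
    (1 ≤ Vs q i ∧ Vs q i ≤ 2) ∧ (1 ≤ Vu q i ∧ Vu q i ≤ 2) := by
  have hm := m_bounds hq
  have hqp : (0:ℝ) < q := by exact_mod_cast (by omega : 0 < q)
  have key : ∀ a : ℤ, 0 ≤ a → a ≤ q → 0 ≤ (a:ℝ) / q ∧ (a:ℝ) / q ≤ 1 := by
    intro a ha ha'
    have e1 : (0:ℝ) ≤ a := by exact_mod_cast ha
    have e2 : (a:ℝ) ≤ q := by exact_mod_cast ha'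
    exact ⟨by positivity, by rw [div_le_one hqp]; exact e2⟩
  have a := key (i + m2 q) (by omega) (by omega)
  have b := key (m1 q - i) (by omega) (by omega)
  simp only [Vs, Vu]
  exact ⟨⟨by linarith [a.1], by linarith [a.2]⟩, ⟨by linarith [b.1], by linarith [b.2]⟩⟩

lemma Vs_succ (q : ℕ) (i : ℤ) : Vs q (i + 1) = Vs q i + (q:ℝ)⁻¹ := by
  simp only [Vs]; push_cast; ring
lemma Vu_succ (q : ℕ) (i : ℤ) : Vu q i = Vu q (i + 1) + (q:ℝ)⁻¹ := by
  simp only [Vu]; push_cast; ring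

def My (q : ℕ) (i : ℤ) : (ℝ × ℝ) →ₗ[ℝ] (ℝ × ℝ) :=
  mk2 (Vs q i * (1 + i / q * rS i)) (Vu q i * (1 + i / q * rU i))
    (Vs q i * (rS i / q)) (Vu q i * (rU i / q))
def Myi (q : ℕ) (i : ℤ) : (ℝ × ℝ) →ₗ[ℝ] (ℝ × ℝ) :=
  mk2i (Vs q i * (1 + i / q * rS i)) (Vu q i * (1 + i / q * rU i))
    (Vs q i * (rS i / q)) (Vu q i * (rU i / q))

lemma My_entries {q : ℕ} (hq : 2 ≤ q) {i : ℤ} (h1 : - m2 q ≤ i) (h2 : i ≤ m1 q) :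
    |Vs q i * (1 + i / q * rS i)| ≤ 100 ∧ |Vu q i * (1 + i / q * rU i)| ≤ 100 ∧
    |Vs q i * (rS i / q)| ≤ 100 ∧ |Vu q i * (rU i / q)| ≤ 100 := by
  have hm := m_bounds hq
  have hqp : (2:ℝ) ≤ q := by exact_mod_cast hq
  obtain ⟨⟨a1, a2⟩, ⟨b1, b2⟩⟩ := V_bounds hq h1 h2
  obtain ⟨r1, r2⟩ := r_bounds i
  have hi : |(i:ℝ) / q| ≤ 1 := by
    rw [abs_div, abs_of_pos (by linarith : (0:ℝ) < q), div_le_one (by linarith)]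
    have : |i| ≤ (q:ℤ) := by rw [abs_le]; constructor <;> omega
    exact_mod_cast this
  have k1 : ∀ V r : ℝ, 1 ≤ V → V ≤ 2 → |r| ≤ 22 → |V * (1 + i / q * r)| ≤ 100 := by
    intro V r h1 h2 h3
    have : |1 + i / q * r| ≤ 23 := by
      have e := abs_add_le 1 (i / q * r)
      rw [abs_mul, abs_one] at e
      have : |(i:ℝ) / q| * |r| ≤ 1 * 22 := mul_le_mul hi h3 (abs_nonneg _) (by norm_num)
      linarith
    rw [abs_mul, abs_of_pos (by linarith)]
    nlinarith [abs_nonneg (1 + i / q * r)]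
  have k2 : ∀ V r : ℝ, 1 ≤ V → V ≤ 2 → |r| ≤ 22 → |V * (r / q)| ≤ 100 := by
    intro V r h1 h2 h3
    have : |r / q| ≤ 22 := by
      rw [abs_div, abs_of_pos (by linarith : (0:ℝ) < q), div_le_iff₀ (by linarith)]
      linarith
    rw [abs_mul, abs_of_pos (by linarith)]
    nlinarith [abs_nonneg (r / q)]
  exact ⟨k1 _ _ a1 a2 r1, k1 _ _ b1 b2 r2, k2 _ _ a1 a2 r1, k2 _ _ b1 b2 r2⟩

lemma My_det {q : ℕ} (hq : 2 ≤ q) {i : ℤ} (h1 : - m2 q ≤ i) (h2 : i ≤ m1 q) :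
    (q:ℝ)⁻¹ ≤ |Vs q i * (1 + i / q * rS i) * (Vu q i * (rU i / q)) -
      Vu q i * (1 + i / q * rU i) * (Vs q i * (rS i / q))| := by
  have hqp : (2:ℝ) ≤ q := by exact_mod_cast hq
  obtain ⟨⟨a1, a2⟩, ⟨b1, b2⟩⟩ := V_bounds hq h1 h2
  have e : Vs q i * (1 + i / q * rS i) * (Vu q i * (rU i / q)) -
      Vu q i * (1 + i / q * rU i) * (Vs q i * (rS i / q)) = - (Vs q i * Vu q i * bD * (q:ℝ)⁻¹) := by
    simp only [div_eq_mul_inv]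
    linear_combination (Vs q i * Vu q i * (q:ℝ)⁻¹) * r_diff i
  have hb := bD_facts.2.1
  have hi : 0 < (q:ℝ)⁻¹ := inv_pos.2 (by linarith)
  have h3 : 1 ≤ Vs q i * Vu q i := by nlinarith
  have h4 : 1 ≤ Vs q i * Vu q i * bD := by nlinarith
  rw [e, abs_neg, abs_of_pos (by positivity)]
  nlinarith

def al2 (q : ℕ) (i : ℤ) : ℝ :=
  if i = m1 q then muS * (Vs q (m1 q) / Vs q (- m2 q)) else Vs q i / Vs q (i + 1)
def be2 (q : ℕ) (i : ℤ) : ℝ :=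
  if i = m1 q then muU * (Vu q (m1 q) / Vu q (- m2 q)) else Vu q i / Vu q (i + 1)

lemma al2_be2_bound {q : ℕ} (hq : 2 ≤ q) {i : ℤ} (h1 : - m2 q ≤ i) (h2 : i ≤ m1 q) :
    |al2 q i| ≤ 1 - 1 / (2 * q) ∧ be2 q i ≠ 0 ∧ |(be2 q i)⁻¹| ≤ 1 - 1 / (2 * q) := by
  have hm := m_bounds hq
  have hqp : (2:ℝ) ≤ q := by exact_mod_cast hq
  have hq2 : 1 / (2 * (q:ℝ)) ≤ 1 / 2 := by
    rw [div_le_div_iff₀ (by positivity) (by norm_num)]; linarith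
  have hqi : 1 / (2 * (q:ℝ)) = (q:ℝ)⁻¹ / 2 := by rw [one_div, mul_inv]; ring
  have hi : 0 < (q:ℝ)⁻¹ := inv_pos.2 (by linarith)
  simp only [al2, be2]
  obtain ⟨-, -, -, g1, g2, g3, -⟩ := mu_facts
  split_ifs with h
  · have hA := V_bounds hq (i := m1 q) (by omega) (by omega)
    have hB := V_bounds hq (i := - m2 q) (by omega) (by omega)
    obtain ⟨⟨a1, a2⟩, ⟨a3, a4⟩⟩ := hA
    obtain ⟨⟨b1, b2⟩, ⟨b3, b4⟩⟩ := hB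
    have c1 : |Vs q (m1 q) / Vs q (- m2 q)| ≤ 2 := by
      rw [abs_of_pos (div_pos (by linarith) (by linarith)), div_le_iff₀ (by linarith)]; linarith
    have c2 : |Vu q (- m2 q) / Vu q (m1 q)| ≤ 2 := by
      rw [abs_of_pos (div_pos (by linarith) (by linarith)), div_le_iff₀ (by linarith)]; linarith
    have n3 : Vu q (m1 q) ≠ 0 := by linarith
    have n4 : Vu q (- m2 q) ≠ 0 := by linarith
    refine ⟨?_, mul_ne_zero g1 (div_ne_zero n3 n4), ?_⟩
    · rw [abs_mul]
      have := mul_le_mul g2 c1 (abs_nonneg _) (by norm_num)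
      linarith
    · rw [mul_inv, inv_div, g3, abs_mul]
      have := mul_le_mul g2 c2 (abs_nonneg _) (by norm_num)
      linarith
  · obtain ⟨⟨a1, a2⟩, ⟨a3, a4⟩⟩ := V_bounds hq h1 h2
    obtain ⟨⟨b1, b2⟩, ⟨b3, b4⟩⟩ := V_bounds hq (i := i + 1) (by omega) (by omega)
    have s1 := Vs_succ q i
    have s2 := Vu_succ q i
    rw [hqi]
    refine ⟨?_, div_ne_zero (by linarith) (by linarith), ?_⟩
    · rw [abs_of_pos (div_pos (by linarith) (by linarith)), div_le_iff₀ (by linarith)]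
      nlinarith
    · rw [inv_div, abs_of_pos (div_pos (by linarith) (by linarith)), div_le_iff₀ (by linarith)]
      nlinarith

lemma My_step {q : ℕ} (hq : 2 ≤ q) {i : ℤ} (h1 : - m2 q ≤ i) (h2 : i < m1 q) (z : ℝ × ℝ) :
    My q (i + 1) (al2 q i * z.1, be2 q i * z.2) =
      ((My q i z).1 + (My q i z).2,
       (My q i z).2 + (if i + 1 = 0 then cc / q * ((My q i z).1 + (My q i z).2) else 0)) := by
  have hqp : (q:ℝ) ≠ 0 := by exact_mod_cast (by omega : q ≠ 0)
  have hb := V_bounds hq (i := i + 1) (by omega) (by omega)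
  have p2 : Vs q (i + 1) ≠ 0 := by linarith [hb.1.1]
  have p4 : Vu q (i + 1) ≠ 0 := by linarith [hb.2.1]
  have hne : i ≠ m1 q := h2.ne
  have e1 : Vs q (i + 1) * (Vs q i / Vs q (i + 1)) = Vs q i := by field_simp
  have e2 : Vu q (i + 1) * (Vu q i / Vu q (i + 1)) = Vu q i := by field_simp
  simp only [My, mk2_apply, al2, be2, hne, if_false]
  have f1 : ∀ c z : ℝ, Vs q (i + 1) * c * (Vs q i / Vs q (i + 1) * z) = Vs q i * c * z := by
    intro c z; linear_combination (c * z) * e1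
  have f2 : ∀ c z : ℝ, Vu q (i + 1) * c * (Vu q i / Vu q (i + 1) * z) = Vu q i * c * z := by
    intro c z; linear_combination (c * z) * e2
  rw [f1, f2, f1, f2]
  rcases lt_trichotomy (i + 1) 0 with h | h | h
  · have n1 : ¬ (0 ≤ i + 1) := by omega
    have n2 : ¬ (0 ≤ i) := by omega
    simp only [h.ne, if_false, rS, rU, n1, n2]
    push_cast
    ext <;> simp only <;> ring
  · have n1 : (0 ≤ i + 1) := by omega
    have n2 : ¬ (0 ≤ i) := by omega
    have hi : (i:ℝ) = -1 := by
      have : i = -1 := by omega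
      rw [this]; norm_num
    simp only [h, if_true, rS, rU, n2, if_false, le_refl]
    push_cast
    rw [hi]
    ext <;> simp only <;> ring
  · have n1 : (0 ≤ i + 1) := by omega
    have n2 : (0 ≤ i) := by omega
    simp only [h.ne', if_false, rS, rU, n1, n2, if_true]
    push_cast
    ext <;> simp only <;> ring

lemma My_switch {q : ℕ} (hq : 2 ≤ q) (z : ℝ × ℝ) :
    My q (- m2 q) (al2 q (m1 q) * z.1, be2 q (m1 q) * z.2) =
      ((My q (m1 q) z).1 + (My q (m1 q) z).2, (My q (m1 q) z).2) := by
  have hm := m_bounds hq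
  have hqp : (q:ℝ) ≠ 0 := by exact_mod_cast (by omega : q ≠ 0)
  have hb := V_bounds hq (i := - m2 q) (by omega) (by omega)
  have p2 : Vs q (- m2 q) ≠ 0 := by linarith [hb.1.1]
  have p4 : Vu q (- m2 q) ≠ 0 := by linarith [hb.2.1]
  have e1 : Vs q (- m2 q) * (Vs q (m1 q) / Vs q (- m2 q)) = Vs q (m1 q) := by field_simp
  have e2 : Vu q (- m2 q) * (Vu q (m1 q) / Vu q (- m2 q)) = Vu q (m1 q) := by field_simp
  obtain ⟨-, s1, s2, -, -, -, -⟩ := mu_facts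
  have n1 : ¬ (0 ≤ - m2 q) := by omega
  have n2 : 0 ≤ m1 q := hm.2.1
  simp only [My, mk2_apply, al2, be2, if_true, rS, rU, n1, n2, if_false]
  have hmm : ((m1 q : ℤ) : ℝ) / q = 1 - ((m2 q : ℤ) : ℝ) / q - 1 / q := by
    have : ((m1 q : ℤ) : ℝ) + 1 + ((m2 q : ℤ) : ℝ) = q := by exact_mod_cast hm.2.2.1
    field_simp; linarith
  have f1 : ∀ c z : ℝ, Vs q (- m2 q) * c * (muS * (Vs q (m1 q) / Vs q (- m2 q)) * z) =
      Vs q (m1 q) * (muS * c) * z := by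
    intro c z; linear_combination (muS * c * z) * e1
  have f2 : ∀ c z : ℝ, Vu q (- m2 q) * c * (muU * (Vu q (m1 q) / Vu q (- m2 q)) * z) =
      Vu q (m1 q) * (muU * c) * z := by
    intro c z; linear_combination (muU * c * z) * e2
  rw [f1, f2, f1, f2, hmm]
  push_cast
  have t1 : muS * (muS - 1 - cc) = muS - 1 := by linear_combination s1
  have t2 : muU * (muU - 1 - cc) = muU - 1 := by linear_combination s2
  ext
  · simp only
    linear_combination (- Vs q (m1 q) * z.1 * ((m2 q : ℤ) : ℝ) / q) * t1
      + (- Vu q (m1 q) * z.2 * ((m2 q : ℤ) : ℝ) / q) * t2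
  · simp only
    linear_combination (Vs q (m1 q) * z.1 / q) * t1 + (Vu q (m1 q) * z.2 / q) * t2

/-! the lifted map and the base pseudo-orbit -/
def Gm (z : E4) : E4 := (pF 1 z.1, (z.2.1 + z.2.2, z.2.2))
def Kick (q ν : ℕ) (z : E4) : E4 :=
  ((z.1.1, z.1.2 + kk1 q ν z.1.1 z.2.1), (z.2.1, z.2.2 + kk2 q ν z.1.1 z.2.1))
def Fm (q ν : ℕ) (z : E4) : E4 := Kick q ν (Gm z)

def jj (k : ℤ) : ℤ := k * (k + 1) / 2
def JJ (q : ℕ) (k i : ℤ) : ℝ := ((k:ℝ) + if 0 ≤ i then 1 else 0) / q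
def bs (q : ℕ) (k i : ℤ) : E4 := (hH i + ((k:ℝ), 0), ((jj k : ℝ) + i * JJ q k i, JJ q k i))

lemma jj_succ (k : ℤ) : jj (k + 1) = jj k + (k + 1) := by
  simp only [jj]
  rw [show (k + 1) * (k + 1 + 1) = k * (k + 1) + (k + 1) * 2 by ring]
  rw [Int.add_mul_ediv_right _ _ (by norm_num)]

def LK (q ν : ℕ) (i : ℤ) (w : E4) : E4 :=
  if i + 1 = 0 then ((w.1.1, w.1.2 + (- kap q ν) * w.1.1), (w.2.1, w.2.2 + cc / q * w.2.1)) else w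

lemma sin_small (i k : ℤ) (h : i ≠ 0) : |Real.sin (π * (hh i + k))| ≤ 1 / 8 := by
  have e : π * (hh i + k) = π * hh i + k * π := by ring
  rw [e, Real.sin_add_int_mul_pi, abs_mul, abs_zpow, abs_neg, abs_one, one_zpow, one_mul, sin_hh,
    abs_of_pos (vS_pos _)]
  refine (vS_le _).trans ?_
  have h1 : ex 1 ≤ ex |i| := ex_mono (Int.one_le_abs h)
  have h2 : Real.exp (2 * π * |(i:ℝ)|) = ex |i| := by rw [ex]; push_cast; rfl
  rw [h2]
  have h3 := ex_one_ge
  have h4 : (ex |i|)⁻¹ ≤ 1 / 16 := by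
    rw [inv_le_comm₀ (by linarith) (by norm_num)]; norm_num; linarith
  linarith

lemma Gm_bs (q : ℕ) (k i : ℤ) : Gm (bs q k i) =
    (hH ((i + 1 : ℤ) : ℝ) + ((k:ℝ), 0), ((jj k : ℝ) + ((i + 1 : ℤ) : ℝ) * JJ q k i, JJ q k i)) := by
  simp only [Gm, bs]
  rw [pF_hH]
  push_cast
  ext <;> simp only
  ring

def C1 : ℝ := 17 * Cp + 216 * Real.exp 40 * Real.exp 40
def C2 : ℝ := 100 * Real.exp 40

set_option maxHeartbeats 1000000 in
lemma step_err {q ν : ℕ} (hν : 3 ≤ ν) (hνe : Even ν) (hνq : ν ≤ q) (hkap : |kap q ν| ≤ 16)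
    {ε : ℝ} (hε : ((2:ℝ) ^ ν)⁻¹ ≤ ε) (k i : ℤ) {v v' : E4} {ρ : ℝ} (hv : ‖v‖ ≤ ρ) (hv' : ‖v'‖ ≤ ρ)
    {A B : ℝ} (hab : Wv A B i = v.1 - v'.1) :
    ‖Fm q ν (bs q k i + v) - Fm q ν (bs q k i + v') -
      LK q ν i (Wv A B ((i + 1 : ℤ) : ℝ),
        ((v.2.1 - v'.2.1) + (v.2.2 - v'.2.2), v.2.2 - v'.2.2))‖ ≤
      (C1 * q ^ 2 * ρ + C2 * q * ε) * ‖v - v'‖ := by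
  have hCp := Cp_nonneg
  have hρ : 0 ≤ ρ := (norm_nonneg _).trans hv
  have hq1 : (1:ℝ) ≤ q := by exact_mod_cast (by omega : 1 ≤ q)
  have hε0 : 0 < ε := lt_of_lt_of_le (by positivity) hε
  have hE : 2 ≤ Real.exp 40 := by linarith [Real.add_one_le_exp (40:ℝ)]
  set N := ‖v - v'‖ with hN
  have hN0 : 0 ≤ N := norm_nonneg _
  have hnv : ‖v.1‖ ≤ ρ := (norm_fst_le v).trans hv
  have hnv' : ‖v'.1‖ ≤ ρ := (norm_fst_le v').trans hv'
  have hx : ‖pF 1 ((bs q k i).1 + v.1) - pF 1 ((bs q k i).1 + v'.1) - Wv A B ((i + 1 : ℤ) : ℝ)‖ ≤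
      Cp * ρ * N := by
    have h := pF_c11_sep (i:ℝ) k v.1 v'.1 A B hab hnv hnv'
    push_cast
    refine h.trans ?_
    gcongr
    exact norm_fst_le (v - v')
  have hone : (1:ℝ) ∈ Set.Icc (0:ℝ) 1 := ⟨by norm_num, le_rfl⟩
  -- names
  set a := Gm (bs q k i + v) with ha
  set a' := Gm (bs q k i + v') with ha'
  have hA0 := Gm_bs q k i
  set a0 := Gm (bs q k i) with ha0
  have near : ∀ (u u' : E4), ‖(Gm (bs q k i + u)).1 - (Gm (bs q k i + u')).1‖ ≤ Real.exp 40 * ‖u - u'‖ ∧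
      |(Gm (bs q k i + u)).2.1 - (Gm (bs q k i + u')).2.1| ≤ Real.exp 40 * ‖u - u'‖ := by
    intro u u'
    constructor
    · refine (pF_lip _ _ hone).trans ?_
      gcongr
      have : (bs q k i + u).1 - (bs q k i + u').1 = (u - u').1 := by simp
      rw [this]; exact norm_fst_le _
    · have e : (Gm (bs q k i + u)).2.1 - (Gm (bs q k i + u')).2.1 = (u - u').2.1 + (u - u').2.2 := by
        simp [Gm]; ring
      rw [e]
      have h := E4_abs_le (u - u')
      have := abs_add_le (u - u').2.1 (u - u').2.2
      have h0 : 2 * ‖u - u'‖ ≤ Real.exp 40 * ‖u - u'‖ := by gcongr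
      linarith [h.2.1, h.2.2]
  have nv : ∀ u : E4, ‖u‖ ≤ ρ → |(Gm (bs q k i + u)).1.1 - a0.1.1| ≤ Real.exp 40 * ρ ∧
      |(Gm (bs q k i + u)).2.1 - a0.2.1| ≤ Real.exp 40 * ρ := by
    intro u hu
    have h := near u 0
    rw [add_zero, sub_zero] at h
    have h0 : Real.exp 40 * ‖u‖ ≤ Real.exp 40 * ρ := by gcongr
    exact ⟨((P2_abs_le _).1.trans h.1).trans h0, h.2.trans h0⟩
  have n1 := nv v hv
  have n2 := nv v' hv'
  have n3 := near v v'
  have n3x := (P2_abs_le _).1.trans n3.1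
  have n3y := n3.2
  simp only [← ha, ← ha', ← hN] at n1 n2 n3x n3y
  have hax : a.1.1 - a'.1.1 - (Wv A B ((i + 1 : ℤ) : ℝ)).1 = (pF 1 ((bs q k i).1 + v.1) - pF 1 ((bs q k i).1 + v'.1) - Wv A B ((i + 1 : ℤ) : ℝ)).1 := by
    simp [ha, ha', Gm]
  have hap : a.1.2 - a'.1.2 - (Wv A B ((i + 1 : ℤ) : ℝ)).2 = (pF 1 ((bs q k i).1 + v.1) - pF 1 ((bs q k i).1 + v'.1) - Wv A B ((i + 1 : ℤ) : ℝ)).2 := by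
    simp [ha, ha', Gm]
  have hxa := (P2_abs_le _).1.trans hx
  have hpa := (P2_abs_le _).2.trans hx
  simp only [← hax, ← hap] at hxa hpa
  have hay : a.2.1 - a'.2.1 = (v.2.1 - v'.2.1) + (v.2.2 - v'.2.2) := by
    simp [ha, ha', Gm]; ring
  have haJ : a.2.2 - a'.2.2 = v.2.2 - v'.2.2 := by
    simp [ha, ha', Gm]
  have hF : ∀ u, Fm q ν u = Kick q ν (Gm u) := fun u => rfl
  rw [hF, hF, ← ha, ← ha']
  set W := Wv A B ((i + 1 : ℤ) : ℝ)
  -- final bounds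
  have q2 : (1:ℝ) ≤ q ^ 2 := one_le_pow₀ hq1
  have t1 : Cp * ρ * N ≤ Cp * q ^ 2 * ρ * N := by
    have : Cp * ρ * N * 1 ≤ Cp * ρ * N * q ^ 2 := by gcongr
    linarith
  have t0 : 0 ≤ Cp * q ^ 2 * ρ * N := by positivity
  have t2 : 0 ≤ 216 * q ^ 2 * (Real.exp 40 * ρ) * (Real.exp 40 * N) := by positivity
  have t3 : 0 ≤ 100 * q * ε * (Real.exp 40 * N) := by positivity
  have tot : (C1 * q ^ 2 * ρ + C2 * q * ε) * N = 17 * (Cp * q ^ 2 * ρ * N) +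
      216 * q ^ 2 * (Real.exp 40 * ρ) * (Real.exp 40 * N) + 100 * q * ε * (Real.exp 40 * N) := by
    rw [C1, C2]; ring
  rw [tot]
  by_cases h : i + 1 = 0
  · have hb : a0.1.1 = 1 / 2 + k ∧ a0.2.1 = (jj k : ℤ) := by
      rw [hA0, h]; simp [hH_zero]
    rw [hb.1, hb.2] at n1 n2
    obtain ⟨-, -, hk⟩ := kk_center hν hνe hνq k (jj k)
    obtain ⟨k1, k2⟩ := hk n1.1 n2.1 n1.2 n2.2 n3x n3y
    simp only [LK, h, if_true]
    rw [E4_norm_le]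
    simp only [Kick, Prod.fst_sub, Prod.snd_sub]
    refine ⟨⟨by linarith, ?_⟩, ⟨?_, ?_⟩⟩
    · have e : a.1.2 + kk1 q ν a.1.1 a.2.1 - (a'.1.2 + kk1 q ν a'.1.1 a'.2.1) - (W.2 + -kap q ν * W.1) =
          (a.1.2 - a'.1.2 - W.2) + (kk1 q ν a.1.1 a.2.1 - kk1 q ν a'.1.1 a'.2.1 - (- kap q ν) * (a.1.1 - a'.1.1))
          + (-kap q ν) * (a.1.1 - a'.1.1 - W.1) := by ring
      rw [e]
      have e1 := abs_add_le ((a.1.2 - a'.1.2 - W.2) + (kk1 q ν a.1.1 a.2.1 - kk1 q ν a'.1.1 a'.2.1 - (- kap q ν) * (a.1.1 - a'.1.1))) ((-kap q ν) * (a.1.1 - a'.1.1 - W.1))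
      have e2 := abs_add_le (a.1.2 - a'.1.2 - W.2) (kk1 q ν a.1.1 a.2.1 - kk1 q ν a'.1.1 a'.2.1 - (- kap q ν) * (a.1.1 - a'.1.1))
      have e3 : |(-kap q ν) * (a.1.1 - a'.1.1 - W.1)| ≤ 16 * (Cp * ρ * N) := by
        rw [abs_mul, abs_neg]
        exact mul_le_mul hkap hxa (abs_nonneg _) (by norm_num)
      linarith
    · rw [hay, sub_self, abs_zero]; linarith
    · have e : a.2.2 + kk2 q ν a.1.1 a.2.1 - (a'.2.2 + kk2 q ν a'.1.1 a'.2.1) -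
          (v.2.2 - v'.2.2 + cc / q * (v.2.1 - v'.2.1 + (v.2.2 - v'.2.2))) =
          kk2 q ν a.1.1 a.2.1 - kk2 q ν a'.1.1 a'.2.1 - cc / q * (a.2.1 - a'.2.1) := by
        rw [hay, ← haJ]; ring
      rw [e]; linarith
  · have hb : a0.1.1 = hh ((i + 1 : ℤ) : ℝ) + k := by
      rw [hA0]; simp [hH]
    have hs := sin_small (i + 1) k h
    rw [← hb] at hs
    obtain ⟨-, -, hk⟩ := kk_small hν hνq hs hε (y₀ := a0.2.1)
    obtain ⟨k1, k2⟩ := hk n1.1 n2.1 n1.2 n2.2 n3x n3y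
    rw [add_mul] at k1 k2
    simp only [LK, h, if_false]
    rw [E4_norm_le]
    simp only [Kick, Prod.fst_sub, Prod.snd_sub]
    refine ⟨⟨by linarith, ?_⟩, ⟨?_, ?_⟩⟩
    · have e : a.1.2 + kk1 q ν a.1.1 a.2.1 - (a'.1.2 + kk1 q ν a'.1.1 a'.2.1) - W.2 =
          (a.1.2 - a'.1.2 - W.2) + (kk1 q ν a.1.1 a.2.1 - kk1 q ν a'.1.1 a'.2.1) := by ring
      rw [e]
      have e2 := abs_add_le (a.1.2 - a'.1.2 - W.2) (kk1 q ν a.1.1 a.2.1 - kk1 q ν a'.1.1 a'.2.1)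
      linarith
    · rw [hay, sub_self, abs_zero]; linarith
    · have e : a.2.2 + kk2 q ν a.1.1 a.2.1 - (a'.2.2 + kk2 q ν a'.1.1 a'.2.1) -
          (v.2.2 - v'.2.2) =
          kk2 q ν a.1.1 a.2.1 - kk2 q ν a'.1.1 a'.2.1 := by
        rw [← haJ]; ring
      rw [e]; linarith

/-- residual of the base pseudo-orbit -/
lemma resid {q ν : ℕ} (hq : 2 ≤ q) (hν : 3 ≤ ν) (hνe : Even ν) (hνq : ν ≤ q)
    {ε : ℝ} (hε : ((2:ℝ) ^ ν)⁻¹ ≤ ε) (hε1 : (ex (m1 q + 1))⁻¹ ≤ ε) (hε2 : (ex (m2 q))⁻¹ ≤ ε) (k i : ℤ) :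
    ‖Fm q ν (bs q k i) - bs q k (i + 1)‖ ≤ 10 * ε ∧
    (i = m1 q → ‖Fm q ν (bs q k i) - bs q (k + 1) (- m2 q)‖ ≤ 10 * ε) := by
  have hm := m_bounds hq
  have hqp : (q:ℝ) ≠ 0 := by exact_mod_cast (by omega : q ≠ 0)
  have hε0 : 0 < ε := lt_of_lt_of_le (by positivity) hε
  have hF : Fm q ν (bs q k i) = Kick q ν (Gm (bs q k i)) := rfl
  have hA0 := Gm_bs q k i
  set a0 := Gm (bs q k i) with ha0
  rw [hF]
  by_cases h : i + 1 = 0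
  · have hb : a0.1.1 = 1 / 2 + k ∧ a0.2.1 = (jj k : ℤ) := by
      rw [hA0, h]; simp [hH_zero]
    obtain ⟨k1, k2, -⟩ := kk_center hν hνe hνq k (jj k)
    refine ⟨?_, fun h' => by omega⟩
    have hneg : ¬ (0 ≤ i) := by omega
    have : Kick q ν a0 = bs q k (i + 1) := by
      simp only [Kick, hb.1, hb.2, k1, k2]
      rw [hA0, h]
      simp only [bs, hH_zero, JJ, hneg, le_refl, if_true, if_false]
      ext <;> simp [hH_zero]
      ring
    rw [this, sub_self, norm_zero]; positivity
  · have hb : a0.1.1 = hh ((i + 1 : ℤ) : ℝ) + k := by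
      rw [hA0]; simp [hH]
    have hs := sin_small (i + 1) k h
    rw [← hb] at hs
    obtain ⟨k1, k2, -⟩ := kk_small hν hνq hs hε (y₀ := a0.2.1)
    constructor
    · have hJ : JJ q k (i + 1) = JJ q k i := by
        simp only [JJ]
        have : (0 ≤ i + 1) ↔ 0 ≤ i := by omega
        simp only [this]
      have hbb : bs q k (i + 1) = a0 := by rw [hA0, bs, hJ]
      rw [hbb, E4_norm_le]
      simp only [Kick, Prod.fst_sub, Prod.snd_sub, sub_self, abs_zero, add_sub_cancel_left]
      refine ⟨⟨by positivity, by linarith⟩, by positivity, by linarith⟩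
    · intro him
      have hJ : JJ q k i = ((k:ℝ) + 1) / q := by
        have : 0 ≤ i := by omega
        simp [JJ, this]
      have hJ' : JJ q (k + 1) (- m2 q) = ((k:ℝ) + 1) / q := by
        have : ¬ (0 ≤ - m2 q) := by omega
        simp only [JJ, this, if_false]; push_cast; ring
      have hT : ((i + 1 : ℤ) : ℝ) = q - ((m2 q : ℤ) : ℝ) := by
        have : i + 1 = q - m2 q := by omega
        rw [this]; push_cast; ring
      have g1 := hh_neg_le ((i + 1 : ℤ) : ℝ)
      have g2 := hh_neg_le ((m2 q : ℤ) : ℝ)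
      have g3 := vS_le ((i + 1 : ℤ) : ℝ)
      have g4 := vS_le ((m2 q : ℤ) : ℝ)
      have p1 := vS_pos ((i + 1 : ℤ) : ℝ)
      have p2 := vS_pos ((m2 q : ℤ) : ℝ)
      have t1 : (0:ℝ) ≤ ((i + 1 : ℤ) : ℝ) := by exact_mod_cast (by omega : (0:ℤ) ≤ i + 1)
      have t2 : (0:ℝ) ≤ ((m2 q : ℤ) : ℝ) := by exact_mod_cast (by omega : (0:ℤ) ≤ m2 q)
      rw [abs_of_nonneg t1] at g3
      rw [abs_of_nonneg t2] at g4
      have x1 : (Real.exp (2 * π * ((i + 1 : ℤ) : ℝ)))⁻¹ ≤ ε := by rw [him]; exact hε1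
      have x2 : (Real.exp (2 * π * ((m2 q : ℤ) : ℝ)))⁻¹ ≤ ε := hε2
      have g5 := hh_symm ((i + 1 : ℤ) : ℝ)
      rw [E4_norm_le]
      simp only [Kick, Prod.fst_sub, Prod.snd_sub]
      rw [hb]
      have c2 : a0.2 = ((jj k : ℝ) + ((i + 1 : ℤ) : ℝ) * JJ q k i, JJ q k i) := by rw [hA0]
      have c1 : a0.1.2 = 2 * vS ((i + 1 : ℤ) : ℝ) := by rw [hA0]; simp [hH]
      rw [abs_le] at k1
      rw [hb] at k1 k2
      have hn : (((- m2 q : ℤ)) : ℝ) = - ((m2 q : ℤ) : ℝ) := by push_cast; ring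
      refine ⟨⟨?_, ?_⟩, ?_, ?_⟩
      · simp only [bs, hH, hn, Prod.fst_add]
        rw [g5, abs_le]; push_cast at *
        constructor <;> linarith [g1.1, g1.2, g2.1, g2.2]
      · simp only [bs, hH, hn, Prod.fst_add, Prod.snd_add, c1, vS_neg]
        rw [abs_le]
        constructor <;> linarith [k1.1, k1.2]
      · simp only [bs, hn, c2, hJ, hJ', jj_succ]
        rw [hT]
        push_cast
        have : (jj k : ℝ) + (q - (m2 q:ℝ)) * ((k + 1) / q) - (jj k + (k + 1) + -(m2 q : ℝ) * ((k + 1) / q)) = 0 := by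
          field_simp; ring
        rw [this, abs_zero]; positivity
      · have : a0.2.2 = (bs q (k + 1) (- m2 q)).2.2 := by
          simp only [bs, c2, hJ, hJ']
        rw [this, add_sub_cancel_left]
        linarith

/-! assembling the shadowing argument -/
def kp (q ν : ℕ) : ℝ := kap q ν / (4 * π)

lemma kp_facts {q ν : ℕ} (hν : 12 ≤ ν) (hνq : ν ≤ q) :
    0 < kp q ν ∧ kp q ν ≤ 1 ∧ 4 ≤ kp q ν * q ∧ |kap q ν| ≤ 16 ∧ kap q ν = 4 * π * kp q ν := by
  have hqp : (0:ℝ) < q := by exact_mod_cast (by omega : 0 < q)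
  have hp := Real.pi_pos
  have h1 : √3 ≤ 2 := by rw [Real.sqrt_le_left (by norm_num)]; norm_num
  have h2 : 0 ≤ √3 := Real.sqrt_nonneg _
  have hν' : (12:ℝ) ≤ ν := by exact_mod_cast hν
  have hνq' : (ν:ℝ) ≤ q := by exact_mod_cast hνq
  have e : kp q ν * q = ν * (2 + √3 / 2) / 4 := by
    rw [kp, kap]; field_simp
  have e2 : kap q ν = 4 * π * kp q ν := by rw [kp]; field_simp
  have h4 : 4 ≤ kp q ν * q := by rw [e]; nlinarith
  have h0 : 0 < kp q ν := by
    by_contra hc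
    push Not at hc
    nlinarith
  have h3 : kp q ν ≤ 1 := by
    have : kp q ν * q ≤ 1 * q := by rw [e]; nlinarith
    exact le_of_mul_le_mul_right this hqp
  refine ⟨h0, h3, h4, ?_, e2⟩
  rw [e2, abs_of_pos (by positivity)]
  nlinarith [Real.pi_lt_d2]

def Mm (q ν : ℕ) (i : ℤ) : E4 →ₗ[ℝ] E4 := (Mx q (kp q ν) i).prodMap (My q i)
def Mmi (q ν : ℕ) (i : ℤ) : E4 →ₗ[ℝ] E4 := (Mxi q (kp q ν) i).prodMap (Myi q i)

lemma Mm_apply (q ν : ℕ) (i : ℤ) (z : E4) : Mm q ν i z = (Mx q (kp q ν) i z.1, My q i z.2) := rfl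
lemma Mmi_apply (q ν : ℕ) (i : ℤ) (z : E4) : Mmi q ν i z = (Mxi q (kp q ν) i z.1, Myi q i z.2) := rfl

lemma prod_norm_le {u v : ℝ × ℝ} {r : ℝ} (h1 : ‖u‖ ≤ r) (h2 : ‖v‖ ≤ r) : ‖((u, v) : E4)‖ ≤ r := by
  rw [Prod.norm_def]; exact max_le h1 h2

lemma Mm_facts {q ν : ℕ} (hq : 2 ≤ q) (hν : 12 ≤ ν) (hνq : ν ≤ q) {i : ℤ}
    (h1 : - m2 q ≤ i) (h2 : i ≤ m1 q) (w : E4) :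
    Mm q ν i (Mmi q ν i w) = w ∧ Mmi q ν i (Mm q ν i w) = w ∧
    ‖Mmi q ν i w‖ ≤ 200 * q ^ 2 * ‖w‖ ∧ ‖Mm q ν i w‖ ≤ 200 * q * ‖w‖ := by
  obtain ⟨k0, k1, k2, -, -⟩ := kp_facts hν hνq
  obtain ⟨a1, a2, a3, a4⟩ := Mx_entries hq k0.le k1 h1 h2
  obtain ⟨b1, b2, b3, b4⟩ := My_entries hq h1 h2
  have dx := Mx_det hq k0.le h1 h2
  have dy := My_det hq h1 h2
  have hq2 : (2:ℝ) ≤ q := by exact_mod_cast hq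
  have hqi : 0 < (q:ℝ)⁻¹ := inv_pos.2 (by linarith)
  have nx := abs_pos.1 (k0.trans_le dx)
  have ny := abs_pos.1 (hqi.trans_le dy)
  have w1 : ‖w.1‖ ≤ ‖w‖ := norm_fst_le w
  have w2 : ‖w.2‖ ≤ ‖w‖ := norm_snd_le w
  refine ⟨?_, ?_, ?_, ?_⟩
  · rw [Mmi_apply, Mm_apply, Mx, Mxi, My, Myi, mk2_mk2i nx, mk2_mk2i ny]
  · rw [Mm_apply, Mmi_apply, Mx, Mxi, My, Myi, mk2i_mk2 nx, mk2i_mk2 ny]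
  · rw [Mmi_apply]
    refine prod_norm_le ?_ ?_
    · refine (mk2i_bound a1 a2 a3 a4 k0 dx _).trans ?_
      have : 100 * q / kp q ν ≤ 100 * (q:ℝ) ^ 2 := by
        rw [div_le_iff₀ k0]; nlinarith
      have e : 2 * (100 * q / kp q ν) ≤ 200 * (q:ℝ) ^ 2 := by linarith
      gcongr
    · refine (mk2i_bound b1 b2 b3 b4 hqi dy _).trans ?_
      have e : 2 * (100 / (q:ℝ)⁻¹) ≤ 200 * (q:ℝ) ^ 2 := by
        rw [div_inv_eq_mul]; nlinarith
      gcongr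
  · rw [Mm_apply]
    refine prod_norm_le ?_ ?_
    · refine (mk2_bound a1 a2 a3 a4 _).trans ?_
      have e : 2 * (100 * (q:ℝ)) ≤ 200 * (q:ℝ) := by linarith
      gcongr
    · refine (mk2_bound b1 b2 b3 b4 _).trans ?_
      have e : 2 * (100:ℝ) ≤ 200 * (q:ℝ) := by linarith
      gcongr

def DG (q ν : ℕ) (i : ℤ) (z : E4) : E4 :=
  dg (al1 q (kp q ν) i) (be1 q (kp q ν) i) (al2 q i) (be2 q i) z

lemma lin_step {q ν : ℕ} (hq : 2 ≤ q) (hν : 12 ≤ ν) (hνq : ν ≤ q) {i : ℤ}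
    (h1 : - m2 q ≤ i) (h2 : i < m1 q) (z : E4) :
    ∃ A B : ℝ, Mx q (kp q ν) i z.1 = Wv A B i ∧
      LK q ν i (Wv A B ((i + 1 : ℤ) : ℝ), ((My q i z.2).1 + (My q i z.2).2, (My q i z.2).2)) =
        Mm q ν (i + 1) (DG q ν i z) := by
  obtain ⟨-, -, -, -, hk⟩ := kp_facts hν hνq
  obtain ⟨A, B, e1, e2⟩ := Mx_step hq (κ := kp q ν) h1 h2 z.1
  have e3 := My_step hq h1 h2 z.2
  refine ⟨A, B, e1, ?_⟩
  rw [Mm_apply]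
  simp only [DG, dg]
  rw [e2, e3]
  by_cases h : i + 1 = 0
  · simp only [LK, h, if_true]
    push_cast
    have h' : (i:ℝ) + 1 = 0 := by exact_mod_cast h
    rw [h', Wv_zero, Wv_zero, hk]
    ext <;> simp only
    ring
  · simp only [LK, h, if_false, add_zero]
    push_cast
    rfl

lemma lin_switch {q ν : ℕ} (hq : 2 ≤ q) (hν : 12 ≤ ν) (hνq : ν ≤ q)
    {ε : ℝ} (hε1 : (ex (m1 q + 1))⁻¹ ≤ ε) (hε2 : (ex (m2 q))⁻¹ ≤ ε) (hε : ε ≤ 1) (z : E4) :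
    ∃ A B : ℝ, Mx q (kp q ν) (m1 q) z.1 = Wv A B (m1 q) ∧
      ‖LK q ν (m1 q) (Wv A B ((m1 q + 1 : ℤ) : ℝ),
        ((My q (m1 q) z.2).1 + (My q (m1 q) z.2).2, (My q (m1 q) z.2).2)) -
        Mm q ν (- m2 q) (DG q ν (m1 q) z)‖ ≤ 400 * ex 1 * q * ε * ‖z‖ := by
  have hm := m_bounds hq
  obtain ⟨k0, k1, k2, -, -⟩ := kp_facts hν hνq
  obtain ⟨A, B, e1, e2⟩ := Mx_switch hq k0 k1 k2 hε1 hε2 hε z.1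
  have e3 := My_switch hq z.2
  refine ⟨A, B, e1, ?_⟩
  have h : ¬ (m1 q + 1 = 0) := by omega
  have hε0 : 0 < ε := lt_of_lt_of_le (inv_pos.2 (ex_pos _)) hε2
  have hL := ex_pos 1
  have hc : 400 * ex 1 * q * ε * ‖z.1‖ ≤ 400 * ex 1 * q * ε * ‖z‖ := by
    gcongr; exact norm_fst_le z
  rw [Mm_apply]
  simp only [DG, dg, LK, h, if_false]
  rw [e3, Prod.mk_sub_mk, sub_self]
  refine prod_norm_le (e2.trans hc) ?_
  rw [norm_zero]; positivity

lemma full_err {q ν : ℕ} (hq : 2 ≤ q) (hν : 12 ≤ ν) (hνe : Even ν) (hνq : ν ≤ q)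
    {ε r : ℝ} (hε : ((2:ℝ) ^ ν)⁻¹ ≤ ε) (hε1 : (ex (m1 q + 1))⁻¹ ≤ ε) (hε2 : (ex (m2 q))⁻¹ ≤ ε)
    (hε3 : ε ≤ 1) (n : ℤ) {ζ ζ' : E4} (hζ : ‖ζ‖ ≤ r) (hζ' : ‖ζ'‖ ≤ r) :
    ‖Fm q ν (bs q (kI q n) (iI q n) + Mm q ν (iI q n) ζ) -
      Fm q ν (bs q (kI q n) (iI q n) + Mm q ν (iI q n) ζ') -
      Mm q ν (iI q (n + 1)) (DG q ν (iI q n) (ζ - ζ'))‖ ≤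
      ((C1 * q ^ 2 * (200 * q * r) + C2 * q * ε) * (200 * q) + 400 * ex 1 * q * ε) * ‖ζ - ζ'‖ := by
  obtain ⟨b1, b2⟩ := iI_bounds hq n
  set i := iI q n
  set k := kI q n
  have hr : 0 ≤ r := (norm_nonneg _).trans hζ
  have hε0 : 0 < ε := lt_of_lt_of_le (inv_pos.2 (ex_pos _)) hε2
  have hL := ex_pos 1
  have hC1 : 0 ≤ C1 := by have := Cp_nonneg; rw [C1]; positivity
  have hC2 : 0 ≤ C2 := by rw [C2]; positivity
  obtain ⟨-, -, -, hkap, -⟩ := kp_facts hν hνq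
  have v1 : ‖Mm q ν i ζ‖ ≤ 200 * q * r := ((Mm_facts hq hν hνq b1 b2 ζ).2.2.2).trans (by gcongr)
  have v2 : ‖Mm q ν i ζ'‖ ≤ 200 * q * r := ((Mm_facts hq hν hνq b1 b2 ζ').2.2.2).trans (by gcongr)
  have v3 : ‖Mm q ν i ζ - Mm q ν i ζ'‖ ≤ 200 * q * ‖ζ - ζ'‖ := by
    rw [← map_sub]; exact (Mm_facts hq hν hνq b1 b2 _).2.2.2
  have hx : (Mm q ν i ζ).1 - (Mm q ν i ζ').1 = Mx q (kp q ν) i (ζ - ζ').1 := by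
    simp only [Mm_apply]; rw [← map_sub]; rfl
  have hy : My q i (ζ - ζ').2 = (Mm q ν i ζ).2 - (Mm q ν i ζ').2 := by
    simp only [Mm_apply]; rw [← map_sub]; rfl
  have hb : (C1 * q ^ 2 * (200 * q * r) + C2 * q * ε) * ‖Mm q ν i ζ - Mm q ν i ζ'‖ ≤
      (C1 * q ^ 2 * (200 * q * r) + C2 * q * ε) * (200 * q * ‖ζ - ζ'‖) := by gcongr
  have hs : ∃ A B : ℝ, Mx q (kp q ν) i (ζ - ζ').1 = Wv A B i ∧
      ‖LK q ν i (Wv A B ((i + 1 : ℤ) : ℝ), ((My q i (ζ - ζ').2).1 + (My q i (ζ - ζ').2).2, (My q i (ζ - ζ').2).2)) -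
        Mm q ν (iI q (n + 1)) (DG q ν i (ζ - ζ'))‖ ≤ 400 * ex 1 * q * ε * ‖ζ - ζ'‖ := by
    rcases kI_iI_step hq n with ⟨c1, c2, c3⟩ | ⟨c1, c2, c3⟩
    · obtain ⟨A, B, e1, e2⟩ := lin_step hq hν hνq b1 c1 (ζ - ζ')
      refine ⟨A, B, e1, ?_⟩
      rw [c3, e2, sub_self, norm_zero]; positivity
    · obtain ⟨A, B, e1, e2⟩ := lin_switch hq hν hνq hε1 hε2 hε3 (ζ - ζ')
      rw [c3]
      have hi : i = m1 q := c1
      rw [hi]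
      exact ⟨A, B, e1, e2⟩
  obtain ⟨A, B, e1, e2⟩ := hs
  have e3 := step_err (by omega : 3 ≤ ν) hνe hνq hkap hε k i v1 v2 (A := A) (B := B) (by rw [hx, e1])
  rw [hy] at e2
  have e4 := norm_add_le (Fm q ν (bs q k i + Mm q ν i ζ) - Fm q ν (bs q k i + Mm q ν i ζ') -
      LK q ν i (Wv A B ((i + 1 : ℤ) : ℝ),
        (((Mm q ν i ζ).2.1 - (Mm q ν i ζ').2.1) + ((Mm q ν i ζ).2.2 - (Mm q ν i ζ').2.2),
          (Mm q ν i ζ).2.2 - (Mm q ν i ζ').2.2)))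
      (LK q ν i (Wv A B ((i + 1 : ℤ) : ℝ),
        (((Mm q ν i ζ).2.1 - (Mm q ν i ζ').2.1) + ((Mm q ν i ζ).2.2 - (Mm q ν i ζ').2.2),
          (Mm q ν i ζ).2.2 - (Mm q ν i ζ').2.2)) - Mm q ν (iI q (n + 1)) (DG q ν i (ζ - ζ')))
  rw [sub_add_sub_cancel] at e4
  refine e4.trans ?_
  have e5 := add_le_add (e3.trans hb) e2
  refine e5.trans (le_of_eq ?_)
  ring

lemma exp_large : ∃ Q : ℕ, ∀ q : ℕ, Q ≤ q → (q:ℝ) ^ 20 ≤ Real.exp q := by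
  have h := (Real.tendsto_pow_mul_exp_neg_atTop_nhds_zero 20).comp tendsto_natCast_atTop_atTop
  have h2 := h.eventually (gt_mem_nhds (show (0:ℝ) < 1 by norm_num))
  obtain ⟨Q, hQ⟩ := Filter.eventually_atTop.1 h2
  refine ⟨Q, fun q hq => ?_⟩
  have := hQ q hq
  simp only [Function.comp] at this
  rw [Real.exp_neg, ← div_eq_mul_inv, div_lt_one (Real.exp_pos _)] at this
  exact this.le

lemma ex_large {q : ℕ} (hq : 2 ≤ q) (h : (q:ℝ) ^ 20 ≤ Real.exp q) :
    (ex (m1 q + 1))⁻¹ ≤ ((q:ℝ)⁻¹) ^ 20 ∧ (ex (m2 q))⁻¹ ≤ ((q:ℝ)⁻¹) ^ 20 := by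
  have hm := m_bounds hq
  have hq2 : (2:ℝ) ≤ q := by exact_mod_cast hq
  have hp := Real.pi_gt_three
  have key : ∀ j : ℤ, (q:ℤ) ≤ 2 * j + 1 → (ex j)⁻¹ ≤ ((q:ℝ)⁻¹) ^ 20 := by
    intro j hj
    have hj' : (q:ℝ) ≤ 2 * j + 1 := by exact_mod_cast hj
    rw [inv_pow]
    have hpow : (0:ℝ) < (q:ℝ) ^ 20 := pow_pos (by linarith) 20
    apply inv_anti₀ hpow
    refine h.trans ?_
    rw [ex]
    apply Real.exp_le_exp.2
    nlinarith
  exact ⟨key _ (by omega), key _ (by omega)⟩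

theorem lifted : ∃ Q : ℕ, ∀ q ν : ℕ, Q ≤ q → 12 ≤ ν → Even ν → ν ≤ q →
    ((2:ℝ) ^ ν)⁻¹ ≤ ((q:ℝ)⁻¹) ^ 20 →
    ∃ Zl : ℤ → E4, (∀ n, Fm q ν (Zl n) = Zl (n + 1)) ∧
      ∀ k : ℤ, ‖Zl (k * q) - ((1 / 2 + (k:ℝ), 2), ((jj k : ℝ), ((k:ℝ) + 1) / q))‖ ≤ (q:ℝ)⁻¹ / 2 := by
  obtain ⟨Q1, hQ1⟩ := exp_large
  have hCp := Cp_nonneg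
  have hC1 : 0 ≤ C1 := by rw [C1]; positivity
  have hC2 : 0 ≤ C2 := by rw [C2]; positivity
  have hL := ex_pos 1
  obtain ⟨Q2, hQ2⟩ := exists_nat_ge (800 * (40000 * C1 + 200 * C2 + 400 * ex 1))
  refine ⟨max (max Q1 Q2) 10, ?_⟩
  intro q ν hQ hν hνe hνq hε
  have hq1 : Q1 ≤ q := le_trans (le_trans (le_max_left _ _) (le_max_left _ _)) hQ
  have hq2 : Q2 ≤ q := le_trans (le_trans (le_max_right _ _) (le_max_left _ _)) hQ
  have hq10 : 10 ≤ q := le_trans (le_max_right _ _) hQ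
  have hq : 2 ≤ q := by omega
  obtain ⟨hε1, hε2⟩ := ex_large hq (hQ1 q hq1)
  have hqr : (10:ℝ) ≤ q := by exact_mod_cast hq10
  have hK : 800 * (40000 * C1 + 200 * C2 + 400 * ex 1) ≤ q := hQ2.trans (by exact_mod_cast hq2)
  set K := 40000 * C1 + 200 * C2 + 400 * ex 1 with hKd
  set u := (q:ℝ)⁻¹ with hu
  have hu0 : 0 < u := inv_pos.2 (by linarith)
  have hqu : (q:ℝ) * u = 1 := mul_inv_cancel₀ (by linarith)
  have hu1 : u ≤ 1 / 10 := by rw [hu, inv_le_comm₀ (by linarith) (by norm_num)]; norm_num; linarith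
  have hu2 : u ≤ 1 := by linarith
  have hpow : ∀ n : ℕ, u ^ (n + 1) ≤ (1 / 10) ^ n * u := by
    intro n; rw [pow_succ]; gcongr
  have hKu : 800 * K * u ≤ 1 := by
    have : 800 * K * u ≤ q * u := by gcongr
    linarith
  have hqq : (q:ℝ) = u⁻¹ := by rw [hu, inv_inv]
  have hK0 : 0 ≤ K := by rw [hKd]; positivity
  set η : ℝ := (C1 * q ^ 2 * (200 * q * u ^ 8) + C2 * q * u ^ 20) * (200 * q) + 400 * ex 1 * q * u ^ 20 with hη
  have hη0 : 0 ≤ η := by rw [hη]; positivity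
  have hmη : 200 * (q:ℝ) ^ 2 * η ≤ u / 4 := by
    have e : 200 * (q:ℝ) ^ 2 * η = 200 * (40000 * C1 * u ^ 2 + 200 * C2 * u ^ 16 + 400 * ex 1 * u ^ 17) := by
      rw [hη, hqq]; field_simp; ring
    have p16 : u ^ 16 ≤ u ^ 2 := pow_le_pow_of_le_one hu0.le hu2 (by norm_num)
    have p17 : u ^ 17 ≤ u ^ 2 := pow_le_pow_of_le_one hu0.le hu2 (by norm_num)
    have : 200 * (q:ℝ) ^ 2 * η ≤ 200 * (40000 * C1 * u ^ 2 + 200 * C2 * u ^ 2 + 400 * ex 1 * u ^ 2) := by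
      rw [e]; gcongr
    have e2 : 200 * (40000 * C1 * u ^ 2 + 200 * C2 * u ^ 2 + 400 * ex 1 * u ^ 2) = (800 * K * u) * (u / 4) := by
      rw [hKd]; ring
    have e3 : (800 * K * u) * (u / 4) ≤ 1 * (u / 4) := by gcongr
    linarith
  have hθ : 1 / (2 * (q:ℝ)) = u / 2 := by rw [one_div, mul_inv]; ring
  have hhalf : (1:ℝ) / 2 ≤ 1 - u / 2 := by linarith
  have F1 := fun n w => Mm_facts (i := iI q n) hq hν hνq (iI_bounds hq n).1 (iI_bounds hq n).2 w
  obtain ⟨k0, k1, k2, -, -⟩ := kp_facts hν hνq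
  have G1 := fun n => al1_be1_bound (i := iI q n) hq k0 k2 (iI_bounds hq n).1 (iI_bounds hq n).2
  have G2 := fun n => al2_be2_bound (i := iI q n) hq (iI_bounds hq n).1 (iI_bounds hq n).2
  rw [hθ] at G2
  have hε3 : u ^ 20 ≤ 1 := pow_le_one₀ hu0.le hu2
  obtain ⟨ζ, hζ, hζF⟩ := shadowing (Fm q ν) (fun n => bs q (kI q n) (iI q n))
    (fun n => Mm q ν (iI q n)) (fun n => Mmi q ν (iI q n))
    (fun n => al1 q (kp q ν) (iI q n)) (fun n => be1 q (kp q ν) (iI q n))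
    (fun n => al2 q (iI q n)) (fun n => be2 q (iI q n))
    (θ := 1 - u / 2) (r := u ^ 8) (m := 200 * (q:ℝ) ^ 2) (η := η) (δ := 10 * u ^ 20)
    (fun n w => (F1 n w).1) (fun n w => (F1 n w).2.1) (fun n w => (F1 n w).2.2.1)
    (fun n => (G1 n).1.trans hhalf) (fun n => ⟨(G1 n).2.1, (G1 n).2.2.trans hhalf⟩)
    (fun n => (G2 n).1) (fun n => (G2 n).2)
    (by positivity) hη0 (by positivity) (by positivity)
    (fun n ζ ζ' h h' => full_err hq hν hνe hνq hε hε1 hε2 hε3 n h h')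
    (fun n => by
      have R := resid hq (by omega : 3 ≤ ν) hνe hνq hε hε1 hε2 (kI q n) (iI q n)
      rcases kI_iI_step hq n with ⟨c1, c2, c3⟩ | ⟨c1, c2, c3⟩
      · simp only [c2, c3]; exact R.1
      · simp only [c2, c3]; exact R.2 c1)
    (by linarith)
    (by
      have p18 : 200 * (q:ℝ) ^ 2 * (10 * u ^ 20) = 2000 * u ^ 18 := by
        rw [hqq]; field_simp; ring
      have p9 : u ^ 18 ≤ (1 / 10) ^ 9 * u ^ 9 := by
        rw [show u ^ 18 = u ^ 9 * u ^ 9 by ring]; gcongr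
      have p10 : u / 4 * u ^ 8 ≤ (1 - (1 - u / 2) - 200 * (q:ℝ) ^ 2 * η) * u ^ 8 := by
        gcongr; linarith
      have p11 : u / 4 * u ^ 8 = u ^ 9 / 4 := by ring
      have p12 : 0 < u ^ 9 := by positivity
      rw [p18]
      norm_num at p9
      linarith)
  refine ⟨fun n => bs q (kI q n) (iI q n) + Mm q ν (iI q n) (ζ n), hζF, fun k => ?_⟩
  have hm := m_bounds hq
  obtain ⟨c1, c2⟩ := kI_iI_unique hq (n := k * q) (k := k) (i := 0) (by ring) (by omega) (by omega)
  have hbs : bs q k 0 = ((1 / 2 + (k:ℝ), 2), ((jj k : ℝ), ((k:ℝ) + 1) / q)) := by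
    simp [bs, JJ, hH_zero]
  simp only [c1, c2]
  rw [hbs, add_sub_cancel_left]
  have h1 := (F1 (k * q) (ζ (k * q))).2.2.2
  rw [c2] at h1
  have h2 : 200 * (q:ℝ) * ‖ζ (k * q)‖ ≤ 200 * q * u ^ 8 := by gcongr; exact hζ _
  have h3 : 200 * (q:ℝ) * u ^ 8 = 200 * u ^ 7 := by
    rw [hqq]; field_simp
  have h4 := hpow 6
  norm_num at h4
  linarith

/-! Hamiltonian flows -/
abbrev L2 := (Fin 2 → ℝ) × (Fin 2 → ℝ)

lemma rep_coe (x : ℝ) : ∃ n : ℤ, rep (x : T1) = x - n := by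
  refine ⟨⌊x⌋, ?_⟩
  have h := AddCircle.coe_equivIco_mk_apply (p := (1:ℝ)) x
  rw [rep]
  refine h.trans ?_
  rw [div_one, mul_one, Int.self_sub_floor]

lemma coe_rep (θ : T1) : ((rep θ : ℝ) : T1) = θ := (AddCircle.equivIco 1 0).symm_apply_apply θ

lemma coe_eq_iff (x y : ℝ) : (x : T1) = (y : T1) ↔ ∃ n : ℤ, x = y + n := by
  rw [← sub_eq_zero, ← AddCircle.coe_sub, AddCircle.coe_eq_zero_iff]
  constructor
  · rintro ⟨n, hn⟩
    refine ⟨n, ?_⟩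
    rw [zsmul_eq_mul, mul_one] at hn; linarith
  · rintro ⟨n, hn⟩
    refine ⟨n, ?_⟩
    rw [zsmul_eq_mul, mul_one]; linarith

lemma cosC_coe (x : ℝ) : cosC (x : T1) = Real.cos (2 * π * x) := by
  obtain ⟨n, hn⟩ := rep_coe x
  rw [cosC, hn, show 2 * π * (x - n) = 2 * π * x - n * (2 * π) by ring, Real.cos_sub_int_mul_two_pi]

lemma sin2C_coe (x : ℝ) : sin2C (x : T1) = Real.sin (2 * π * x) := by
  obtain ⟨n, hn⟩ := rep_coe x
  rw [sin2C, hn, show 2 * π * (x - n) = 2 * π * x - n * (2 * π) by ring, Real.sin_sub_int_mul_two_pi]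

lemma neg_one_cases (n : ℤ) : (-1:ℝ) ^ n = 1 ∨ (-1:ℝ) ^ n = -1 := by
  rcases Int.even_or_odd n with h | h
  · exact Or.inl h.neg_one_zpow
  · exact Or.inr h.neg_one_zpow

lemma sinHalf_coe {ν : ℕ} (hν : Even ν) (x : ℝ) : sinHalf (x : T1) ^ ν = sA ν x := by
  obtain ⟨n, hn⟩ := rep_coe x
  rw [sinHalf, hn, sA, show π * (x - n) = π * x - n * π by ring, Real.sin_sub_int_mul_pi]
  rcases neg_one_cases n with h | h <;> rw [h]
  · rw [one_mul]
  · rw [neg_one_mul, hν.neg_pow]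

lemma kk_period {q ν : ℕ} (hν : Even ν) (h1 : 1 ≤ ν) (x y : ℝ) (m n : ℤ) :
    kk1 q ν (x + m) (y + n) = kk1 q ν x y ∧ kk2 q ν (x + m) (y + n) = kk2 q ν x y := by
  have a1 : sA ν (x + m) = sA ν x := by
    rw [sA, sA, mul_add, mul_comm π (m:ℝ), Real.sin_add_int_mul_pi]
    rcases neg_one_cases m with h | h <;> rw [h]
    · rw [one_mul]
    · rw [neg_one_mul, hν.neg_pow]
  have a2 : sA1 ν (x + m) = sA1 ν x := by
    rw [sA1, sA1, mul_add, mul_comm π (m:ℝ), Real.sin_add_int_mul_pi, Real.cos_add_int_mul_pi]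
    have ho : Odd (ν - 1) := Nat.Even.sub_odd h1 hν odd_one
    rcases neg_one_cases m with h | h <;> rw [h]
    · rw [one_mul, one_mul]
    · rw [neg_one_mul, ho.neg_pow]; ring
  have a3 : 2 * π * (y + n + 6⁻¹) = 2 * π * (y + 6⁻¹) + n * (2 * π) := by ring
  have b1 : yB (y + n) = yB y := by rw [yB, yB, a3, Real.sin_add_int_mul_two_pi]
  have b2 : yD (y + n) = yD y := by rw [yD, yD, a3, Real.cos_add_int_mul_two_pi]
  simp only [kk1, kk2, a1, a2, b1, b2, and_self]

def Sol (H : Ann 2 → ℝ) (c : ℝ → L2) : Prop := ∀ t : ℝ, ∀ i : Fin 2,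
        HasDerivAt (fun s => (c s).1 i)
          (fderiv ℝ (H ∘ projAnn 2) (c t) ((0 : Fin 2 → ℝ), Pi.single i 1)) t ∧
        HasDerivAt (fun s => (c s).2 i)
          (-(fderiv ℝ (H ∘ projAnn 2) (c t) (Pi.single i 1, (0 : Fin 2 → ℝ)))) t

lemma projAnn_surj (x : Ann 2) : projAnn 2 (fun i => rep (x.1 i), x.2) = x := by
  ext i
  · exact coe_rep _
  · rfl

lemma flow_exists {H : Ann 2 → ℝ} {Λ : ℝ → L2 → L2} (h0 : ∀ w, Λ 0 w = w)
    (hadd : ∀ s t w, Λ (s + t) w = Λ s (Λ t w))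
    (hp : ∀ t w w', projAnn 2 w = projAnn 2 w' → projAnn 2 (Λ t w) = projAnn 2 (Λ t w'))
    (hs : ∀ w, Sol H (fun t => Λ t w)) : ∃ Φ, IsHamFlow 2 H Φ := by
  refine ⟨fun t x => projAnn 2 (Λ t (fun i => rep (x.1 i), x.2)), ?_, ?_, ?_⟩
  · intro x; simp only [h0]; exact projAnn_surj x
  · intro s t x
    simp only [hadd]
    apply hp
    exact (projAnn_surj _).symm
  · intro x
    exact ⟨fun t => Λ t (fun i => rep (x.1 i), x.2), fun t => rfl, hs _⟩

lemma flow_unique {H : Ann 2 → ℝ} {Λ : ℝ → L2 → L2}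
    (hp : ∀ t w w', projAnn 2 w = projAnn 2 w' → projAnn 2 (Λ t w) = projAnn 2 (Λ t w'))
    (hu : ∀ c, Sol H c → ∀ t, c t = Λ t (c 0)) {Φ : ℝ → Ann 2 → Ann 2} (hΦ : IsHamFlow 2 H Φ)
    (t : ℝ) (w : L2) : Φ t (projAnn 2 w) = projAnn 2 (Λ t w) := by
  obtain ⟨g0, -, g⟩ := hΦ
  obtain ⟨c, hc, hs⟩ := g (projAnn 2 w)
  rw [← hc t, hu c hs t]
  apply hp
  rw [hc 0, g0]

lemma lin_unique {f : ℝ → ℝ} {a : ℝ} (h : ∀ t, HasDerivAt f a t) (t : ℝ) : f t = f 0 + t * a := by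
  have h1 : ∀ t, HasDerivAt (fun t => f t - t * a) 0 t := by
    intro t
    exact ((h t).fun_sub ((hasDerivAt_id t).mul_const a)).congr_deriv (by ring)
  have h2 := is_const_of_deriv_eq_zero (fun t => (h1 t).differentiableAt) (fun t => (h1 t).deriv) t 0
  simp only [zero_mul, sub_zero] at h2
  linarith

lemma coord1 (i : Fin 2) (w : L2) : HasFDerivAt (fun w : L2 => w.1 i)
    ((ContinuousLinearMap.proj (R := ℝ) (φ := fun _ : Fin 2 => ℝ) i).comp (ContinuousLinearMap.fst ℝ (Fin 2 → ℝ) (Fin 2 → ℝ))) w :=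
  ((ContinuousLinearMap.proj (R := ℝ) (φ := fun _ : Fin 2 => ℝ) i).comp (ContinuousLinearMap.fst ℝ (Fin 2 → ℝ) (Fin 2 → ℝ))).hasFDerivAt (x := w)
lemma coord2 (i : Fin 2) (w : L2) : HasFDerivAt (fun w : L2 => w.2 i)
    ((ContinuousLinearMap.proj (R := ℝ) (φ := fun _ : Fin 2 => ℝ) i).comp (ContinuousLinearMap.snd ℝ (Fin 2 → ℝ) (Fin 2 → ℝ))) w :=
  ((ContinuousLinearMap.proj (R := ℝ) (φ := fun _ : Fin 2 => ℝ) i).comp (ContinuousLinearMap.snd ℝ (Fin 2 → ℝ) (Fin 2 → ℝ))).hasFDerivAt (x := w)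

lemma Hstar_proj : Hstar ∘ projAnn 2 =
    fun w : L2 => (1 / 2) * ((w.2 0) ^ 2 + (w.2 1) ^ 2) + Real.cos (2 * π * w.1 0) := by
  funext w
  simp only [Function.comp, Hstar, projAnn, cosC_coe]

lemma cos2_deriv (x : ℝ) : HasDerivAt (fun x => Real.cos (2 * π * x)) (-(2 * π * Real.sin (2 * π * x))) x :=
  (((hasDerivAt_id x).const_mul (2 * π)).cos).congr_deriv (by simp; ring)

lemma Hstar_fderiv (w v : L2) : fderiv ℝ (Hstar ∘ projAnn 2) w v =
    w.2 0 * v.2 0 + w.2 1 * v.2 1 - 2 * π * Real.sin (2 * π * w.1 0) * v.1 0 := by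
  rw [Hstar_proj]
  have h := ((((coord2 0 w).pow 2).add ((coord2 1 w).pow 2)).const_mul (1 / 2)).add
    ((cos2_deriv (w.1 0)).comp_hasFDerivAt w (coord1 0 w))
  have h' : HasFDerivAt (fun w : L2 => (1 / 2) * ((w.2 0) ^ 2 + (w.2 1) ^ 2) + Real.cos (2 * π * w.1 0)) _ w := h
  rw [h'.fderiv]
  simp
  ring

lemma fq_proj {σ : ℝ} {q : ℕ} (hν : Even (nuExp σ q)) : (fun z => (q : ℝ)⁻¹ * fqFun σ q z) ∘ projAnn 2 =
    fun w : L2 => (q:ℝ)⁻¹ * (sA (nuExp σ q) (w.1 0) * (-(π)⁻¹ * yB (w.1 1))) := by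
  funext w
  simp only [Function.comp, fqFun, projAnn, sinHalf_coe hν, ← AddCircle.coe_add, sin2C_coe, yB]

lemma fq_fderiv {σ : ℝ} {q : ℕ} (hν : Even (nuExp σ q)) (w v : L2) :
    fderiv ℝ ((fun z => (q : ℝ)⁻¹ * fqFun σ q z) ∘ projAnn 2) w v =
    - kk1 q (nuExp σ q) (w.1 0) (w.1 1) * v.1 0 - kk2 q (nuExp σ q) (w.1 0) (w.1 1) * v.1 1 := by
  rw [fq_proj hν]
  have h := ((((sA_deriv (nuExp σ q) (w.1 0)).comp_hasFDerivAt w (coord1 0 w))).mul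
    (((yB_deriv (w.1 1)).comp_hasFDerivAt w (coord1 1 w)).const_mul (-(π)⁻¹))).const_mul ((q:ℝ)⁻¹)
  have h' : HasFDerivAt (fun w : L2 => (q:ℝ)⁻¹ * (sA (nuExp σ q) (w.1 0) * (-(π)⁻¹ * yB (w.1 1)))) _ w := h
  rw [h'.fderiv]
  have hp : π * π⁻¹ = 1 := mul_inv_cancel₀ Real.pi_ne_zero
  simp [kk1, kk2, yD, yB']
  linear_combination (- (q:ℝ)⁻¹ * (sA (nuExp σ q) (w.1 0) * (2 * Real.cos (2 * π * (w.1 1 + 6⁻¹)) * v.1 1)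
    + sA1 (nuExp σ q) (w.1 0) * yB (w.1 1) * v.1 0)) * hp

lemma Sol_star (c : ℝ → L2) : Sol Hstar c ↔
    (∀ t, HasDerivAt (fun s => ((c s).1 0, (c s).2 0)) (pV ((c t).1 0, (c t).2 0)) t) ∧
    (∀ t, HasDerivAt (fun s => (c s).1 1) ((c t).2 1) t) ∧ (∀ t, HasDerivAt (fun s => (c s).2 1) 0 t) := by
  simp only [Sol, Hstar_fderiv, Fin.forall_fin_two]
  simp
  constructor
  · intro h
    refine ⟨fun t => ?_, fun t => (h t).2.1, fun t => (h t).2.2⟩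
    exact (h t).1.1.prodMk (h t).1.2
  · rintro ⟨h1, h2, h3⟩ t
    have a := hasFDerivAt_fst.comp_hasDerivAt t (h1 t)
    have b := hasFDerivAt_snd.comp_hasDerivAt t (h1 t)
    exact ⟨⟨a, b⟩, h2 t, h3 t⟩

lemma Sol_pert {σ : ℝ} {q : ℕ} (hν : Even (nuExp σ q)) (c : ℝ → L2) :
    Sol (fun z => (q : ℝ)⁻¹ * fqFun σ q z) c ↔
    ∀ t, (HasDerivAt (fun s => (c s).1 0) 0 t ∧
      HasDerivAt (fun s => (c s).2 0) (kk1 q (nuExp σ q) ((c t).1 0) ((c t).1 1)) t) ∧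
      (HasDerivAt (fun s => (c s).1 1) 0 t ∧
      HasDerivAt (fun s => (c s).2 1) (kk2 q (nuExp σ q) ((c t).1 0) ((c t).1 1)) t) := by
  simp only [Sol, fq_fderiv hν, Fin.forall_fin_two]
  simp

def Ls (t : ℝ) (w : L2) : L2 :=
  (![(pF t (w.1 0, w.2 0)).1, w.1 1 + t * w.2 1], ![(pF t (w.1 0, w.2 0)).2, w.2 1])
def Lp (q ν : ℕ) (t : ℝ) (w : L2) : L2 :=
  (w.1, ![w.2 0 + t * kk1 q ν (w.1 0) (w.1 1), w.2 1 + t * kk2 q ν (w.1 0) (w.1 1)])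

lemma proj_eq_iff (w w' : L2) : projAnn 2 w = projAnn 2 w' ↔
    (∃ m : ℤ, w.1 0 = w'.1 0 + m) ∧ (∃ n : ℤ, w.1 1 = w'.1 1 + n) ∧ w.2 0 = w'.2 0 ∧ w.2 1 = w'.2 1 := by
  simp only [projAnn, Prod.mk.injEq, funext_iff, Fin.forall_fin_two, coe_eq_iff]
  tauto

lemma L2_ext {w w' : L2} (h1 : w.1 0 = w'.1 0) (h2 : w.1 1 = w'.1 1) (h3 : w.2 0 = w'.2 0)
    (h4 : w.2 1 = w'.2 1) : w = w' := by
  ext i <;> fin_cases i <;> assumption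

lemma Ls_proj (t : ℝ) (w w' : L2) (h : projAnn 2 w = projAnn 2 w') :
    projAnn 2 (Ls t w) = projAnn 2 (Ls t w') := by
  rw [proj_eq_iff] at h ⊢
  obtain ⟨⟨m, hm⟩, ⟨n, hn⟩, h3, h4⟩ := h
  have e : ((w.1 0, w.2 0) : ℝ × ℝ) = (w'.1 0, w'.2 0) + ((m:ℝ), 0) := by
    ext <;> simp [hm, h3]
  simp only [Ls, e, pF_add_int]
  refine ⟨⟨m, by simp⟩, ⟨n, ?_⟩, by simp, by simp [h4]⟩
  simp [hn, h4]; ring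

lemma Lp_proj {q ν : ℕ} (hν : Even ν) (h1 : 1 ≤ ν) (t : ℝ) (w w' : L2) (h : projAnn 2 w = projAnn 2 w') :
    projAnn 2 (Lp q ν t w) = projAnn 2 (Lp q ν t w') := by
  rw [proj_eq_iff] at h ⊢
  obtain ⟨⟨m, hm⟩, ⟨n, hn⟩, h3, h4⟩ := h
  have hk := kk_period (q := q) hν h1 (w'.1 0) (w'.1 1) m n
  refine ⟨⟨m, hm⟩, ⟨n, hn⟩, ?_, ?_⟩
  · simp [Lp, hm, hn, hk.1, h3]
  · simp [Lp, hm, hn, hk.2, h4]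

lemma Ls_sol (w : L2) : Sol Hstar (fun t => Ls t w) := by
  rw [Sol_star]
  refine ⟨fun t => ?_, fun t => ?_, fun t => ?_⟩
  · simpa [Ls] using pF_deriv (w.1 0, w.2 0) t
  · simp only [Ls]
    simpa using ((hasDerivAt_id t).mul_const (w.2 1)).const_add (w.1 1)
  · simpa [Ls] using hasDerivAt_const t (w.2 1)

lemma Lp_sol {σ : ℝ} {q : ℕ} (hν : Even (nuExp σ q)) (w : L2) :
    Sol (fun z => (q : ℝ)⁻¹ * fqFun σ q z) (fun t => Lp q (nuExp σ q) t w) := by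
  rw [Sol_pert hν]
  intro t
  simp only [Lp]
  refine ⟨⟨hasDerivAt_const _ _, ?_⟩, hasDerivAt_const _ _, ?_⟩
  · simpa using ((hasDerivAt_id t).mul_const (kk1 q (nuExp σ q) (w.1 0) (w.1 1))).const_add (w.2 0)
  · simpa using ((hasDerivAt_id t).mul_const (kk2 q (nuExp σ q) (w.1 0) (w.1 1))).const_add (w.2 1)

lemma Ls_uniq (c : ℝ → L2) (hc : Sol Hstar c) (t : ℝ) : c t = Ls t (c 0) := by
  rw [Sol_star] at hc
  obtain ⟨h1, h2, h3⟩ := hc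
  have e1 := pF_eq h1 t
  have e3 : ∀ t, (c t).2 1 = (c 0).2 1 := fun t => by simpa using lin_unique h3 t
  have e2 := lin_unique (a := (c 0).2 1) (fun t => by rw [← e3 t]; exact h2 t) t
  refine L2_ext ?_ ?_ ?_ ?_
  · simp [Ls, ← e1]
  · simpa [Ls] using e2
  · simp [Ls, ← e1]
  · simpa [Ls] using e3 t

lemma Lp_uniq {σ : ℝ} {q : ℕ} (hν : Even (nuExp σ q)) (c : ℝ → L2)
    (hc : Sol (fun z => (q : ℝ)⁻¹ * fqFun σ q z) c) (t : ℝ) : c t = Lp q (nuExp σ q) t (c 0) := by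
  rw [Sol_pert hν] at hc
  have e0 : ∀ t, (c t).1 0 = (c 0).1 0 := fun t => by simpa using lin_unique (fun t => (hc t).1.1) t
  have e1 : ∀ t, (c t).1 1 = (c 0).1 1 := fun t => by simpa using lin_unique (fun t => (hc t).2.1) t
  simp only [e0, e1] at hc
  have e2 := lin_unique (fun t => (hc t).1.2) t
  have e3 := lin_unique (fun t => (hc t).2.2) t
  refine L2_ext ?_ ?_ ?_ ?_
  · simp [Lp, e0]
  · simp [Lp, e1]
  · simpa [Lp] using e2
  · simpa [Lp] using e3

lemma star_exists : ∃ Φs, IsHamFlow 2 Hstar Φs := by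
  refine flow_exists (Λ := Ls) ?_ ?_ Ls_proj Ls_sol
  · intro w; refine L2_ext ?_ ?_ ?_ ?_ <;> simp [Ls, pF_zero]
  · intro s t w
    refine L2_ext ?_ ?_ ?_ ?_ <;> simp [Ls, pF_add]
    ring

lemma pert_exists {σ : ℝ} {q : ℕ} (hν : Even (nuExp σ q)) (h1 : 1 ≤ nuExp σ q) :
    ∃ Φp, IsHamFlow 2 (fun z => (q : ℝ)⁻¹ * fqFun σ q z) Φp := by
  refine flow_exists (Λ := Lp q (nuExp σ q)) ?_ ?_ (Lp_proj hν h1) (Lp_sol hν)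
  · intro w; refine L2_ext ?_ ?_ ?_ ?_ <;> simp [Lp]
  · intro s t w
    refine L2_ext ?_ ?_ ?_ ?_ <;> simp [Lp]
    · ring
    · ring

def toL (z : E4) : L2 := (![z.1.1, z.2.1], ![z.1.2, z.2.2])

lemma Fm_toL (q ν : ℕ) (z : E4) : Lp q ν 1 (Ls 1 (toL z)) = toL (Fm q ν z) := by
  refine L2_ext ?_ ?_ ?_ ?_ <;> simp [Lp, Ls, toL, Fm, Kick, Gm]

lemma maps_lift {σ : ℝ} {q : ℕ} (hν : Even (nuExp σ q)) (h1 : 1 ≤ nuExp σ q)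
    {Φs Φp : ℝ → Ann 2 → Ann 2} (hs : IsHamFlow 2 Hstar Φs)
    (hp : IsHamFlow 2 (fun z => (q : ℝ)⁻¹ * fqFun σ q z) Φp) (z : E4) :
    (Φp 1 ∘ Φs 1) (projAnn 2 (toL z)) = projAnn 2 (toL (Fm q (nuExp σ q) z)) := by
  rw [Function.comp, flow_unique Ls_proj Ls_uniq hs, flow_unique (Lp_proj hν h1) (Lp_uniq hν) hp, Fm_toL]

/-! Final assembly -/
def sig0 : ℝ := Real.log 2 / (40 * π)
def dd0 : ℝ := Real.exp (-(Real.log 2 / 20))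

lemma nu_bounds {q : ℕ} (hq : 1 ≤ q) :
    20 * Real.log q ≤ nuExp sig0 q * Real.log 2 ∧
      nuExp sig0 q * Real.log 2 ≤ 20 * Real.log q + 2 * Real.log 2 := by
  have l2 : 0 < Real.log 2 := Real.log_pos (by norm_num)
  have hL : 0 ≤ Real.log q := Real.log_natCast_nonneg q
  have e : 4 * Real.pi * sig0 = Real.log 2 / 10 := by
    rw [sig0]; field_simp; norm_num
  have hx : Real.log q / (Real.log 2 / 10) * Real.log 2 = 10 * Real.log q := by field_simp
  have hx0 : 0 ≤ Real.log q / (Real.log 2 / 10) := by positivity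
  rw [nuExp, e]
  set x := Real.log q / (Real.log 2 / 10)
  have h1 := Nat.lt_floor_add_one (x + 1)
  have h2 := Nat.floor_le (a := x + 1) (by linarith)
  push_cast
  constructor <;> nlinarith

lemma nu_even (σ : ℝ) (q : ℕ) : Even (nuExp σ q) := by
  rw [nuExp]; exact even_two_mul _

lemma nu_facts {q : ℕ} (hq : 10000 ≤ q) :
    12 ≤ nuExp sig0 q ∧ nuExp sig0 q ≤ q ∧ ((2:ℝ) ^ nuExp sig0 q)⁻¹ ≤ ((q:ℝ)⁻¹) ^ 20 ∧
      (q:ℝ)⁻¹ / 2 ≤ dd0 ^ nuExp sig0 q ∧ dd0 ^ nuExp sig0 q ≤ 1 := by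
  obtain ⟨h1, h2⟩ := nu_bounds (q := q) (by omega)
  have l2 : 0.6931471803 < Real.log 2 := Real.log_two_gt_d9
  have hq' : (10000:ℝ) ≤ q := by exact_mod_cast hq
  have q0 : (0:ℝ) < q := by linarith
  have hlog2 : Real.log 2 ≤ Real.log q := Real.log_le_log (by norm_num) (by linarith)
  refine ⟨?_, ?_, ?_, ?_, ?_⟩
  · have : (12:ℝ) ≤ nuExp sig0 q := by nlinarith
    exact_mod_cast this
  · have hs : Real.log q ≤ 2 * √q := by
      have a : Real.log (√q) ≤ √q := by
        have := Real.log_le_sub_one_of_pos (Real.sqrt_pos.mpr q0); linarith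
      have b : Real.log (√q) = Real.log q / 2 := Real.log_sqrt q0.le
      linarith
    have h100 : 100 ≤ √(q:ℝ) := by
      apply Real.le_sqrt_of_sq_le; linarith
    have hsq : √(q:ℝ) * √q = q := Real.mul_self_sqrt q0.le
    have : (nuExp sig0 q : ℝ) ≤ q := by
      have k : (nuExp sig0 q : ℝ) * Real.log 2 ≤ q * Real.log 2 := by nlinarith
      exact le_of_mul_le_mul_right k (by linarith)
    exact_mod_cast this
  · rw [inv_pow]
    apply inv_anti₀ (by positivity)
    apply (Real.log_le_log_iff (by positivity) (by positivity)).mp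
    rw [Real.log_pow, Real.log_pow]
    push_cast
    exact h1
  · rw [dd0, ← Real.exp_nat_mul]
    have : (q:ℝ)⁻¹ / 2 = Real.exp (-Real.log q - Real.log 2) := by
      rw [Real.exp_sub, Real.exp_neg, Real.exp_log q0, Real.exp_log (by norm_num)]
    rw [this]
    apply Real.exp_le_exp.mpr
    nlinarith
  · apply pow_le_one₀ (Real.exp_pos _).le
    apply Real.exp_le_one_iff.mpr
    linarith

lemma T1_dist_le (x y : ℝ) (n : ℤ) : dist (x : T1) (y : T1) ≤ |x - (y + n)| := by
  have h : (y : T1) = ((y + n : ℝ) : T1) := ((coe_eq_iff (y + n) y).mpr ⟨n, rfl⟩).symm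
  rw [h, dist_eq_norm, ← AddCircle.coe_sub, AddCircle.norm_eq]
  have := round_le (x - (y + n)) 0
  simpa using this

lemma final_dist (q : ℕ) (k j : ℤ) (w : E4) (r : ℝ)
    (h : ‖w - ((1/2 + (k:ℝ), 2), ((j : ℝ), ((k:ℝ)+1)/q))‖ ≤ r) :
    dist (projAnn 2 (toL w)) (xiPt q k) ≤ r := by
  have r0 : 0 ≤ r := (norm_nonneg _).trans h
  obtain ⟨⟨a, b⟩, c, e⟩ := w
  have h' := h
  simp only [Prod.mk_sub_mk, Prod.norm_mk, Real.norm_eq_abs, sup_le_iff] at h'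
  obtain ⟨⟨h1, h2⟩, h3, h4⟩ := h'
  rw [Prod.dist_eq]
  refine max_le ((dist_pi_le_iff r0).mpr ?_) ((dist_pi_le_iff r0).mpr ?_)
  · intro i
    fin_cases i
    · exact (T1_dist_le a (1/2) k).trans h1
    · refine (T1_dist_le c 0 j).trans ?_
      rw [zero_add]; exact h3
  · intro i
    fin_cases i
    · exact h2
    · show |e - (q:ℝ)⁻¹ * ((k:ℝ) + 1)| ≤ r
      rw [show (q:ℝ)⁻¹ * ((k:ℝ) + 1) = ((k:ℝ)+1)/q by ring]; exact h4

/-- The Lochak–Marco proposition: there are a width `σ > 0`, an integer `q₀` and a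
constant `0 < d < 1` such that for all `q ≥ q₀` the map `𝓕_q = Φ^{q⁻¹f_q} ∘ 𝓕_*` has a
point `ζ_q` whose bi-infinite orbit shadows the wandering sequence `(ξ_{q,k})_{k∈ℤ}`:
`|𝓕_q^{kq}(ζ_q) − ξ_{q,k}| ≤ d^{ν(q,σ)}` for all `k ∈ ℤ`.  In particular
`|𝓕_q^{3q²}(ζ_q) − ζ_q| ≥ 3 − 2d^{ν(q,σ)} ≥ 1`. -/
theorem lochak_marco :
    ∃ σ : ℝ, 0 < σ ∧ ∃ q₀ : ℕ, ∃ d : ℝ, 0 < d ∧ d < 1 ∧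
      ∀ q : ℕ, q₀ ≤ q →
        (∃ Φs : ℝ → Ann 2 → Ann 2, IsHamFlow 2 Hstar Φs) ∧
        (∃ Φp : ℝ → Ann 2 → Ann 2,
          IsHamFlow 2 (fun z => (q : ℝ)⁻¹ * fqFun σ q z) Φp) ∧
        ∀ Φs : ℝ → Ann 2 → Ann 2, IsHamFlow 2 Hstar Φs →
        ∀ Φp : ℝ → Ann 2 → Ann 2, IsHamFlow 2 (fun z => (q : ℝ)⁻¹ * fqFun σ q z) Φp →
          ∃ Z : ℤ → Ann 2,
            (∀ k : ℤ, (Φp 1 ∘ Φs 1) (Z k) = Z (k + 1)) ∧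
            (∀ k : ℤ, dist (Z (k * q)) (xiPt q k) ≤ d ^ (nuExp σ q)) ∧
            1 ≤ 3 - 2 * d ^ (nuExp σ q) ∧
            3 - 2 * d ^ (nuExp σ q) ≤ dist (Z (3 * (q : ℤ) * q)) (Z 0) := by
  obtain ⟨Q, hQ⟩ := lifted
  have l2 : 0 < Real.log 2 := Real.log_pos (by norm_num)
  refine ⟨sig0, by rw [sig0]; positivity, max Q 10000, dd0, Real.exp_pos _, ?_, ?_⟩
  · rw [dd0, ← Real.exp_zero]; apply Real.exp_lt_exp.mpr; linarith
  intro q hq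
  have hq1 : Q ≤ q := (le_max_left _ _).trans hq
  have hq2 : 10000 ≤ q := (le_max_right _ _).trans hq
  obtain ⟨n1, n2, n3, n4, n5⟩ := nu_facts hq2
  have hev := nu_even sig0 q
  have h1 : 1 ≤ nuExp sig0 q := by omega
  refine ⟨star_exists, pert_exists hev h1, ?_⟩
  intro Φs hs Φp hp
  obtain ⟨Zl, hZ, hk⟩ := hQ q (nuExp sig0 q) hq1 n1 hev n2 n3
  refine ⟨fun n => projAnn 2 (toL (Zl n)), ?_, ?_, by linarith, ?_⟩
  · intro k
    rw [maps_lift hev h1 hs hp, hZ]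
  · intro k
    exact final_dist q k (jj k) _ _ ((hk k).trans n4)
  · have a := final_dist q (3 * q) _ _ _ (hk (3 * q))
    have b := final_dist q 0 _ _ _ (hk 0)
    rw [zero_mul] at b
    have q0 : (q:ℝ) ≠ 0 := by
      have : q ≠ 0 := by omega
      exact_mod_cast this
    have c : (3:ℝ) ≤ dist (xiPt q (3 * q)) (xiPt q 0) := by
      have e1 : dist ((xiPt q (3 * q)).2 1) ((xiPt q 0).2 1) ≤ dist (xiPt q (3 * q)) (xiPt q 0) :=
        (dist_le_pi_dist _ _ _).trans (le_max_right _ _)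
      refine le_trans ?_ e1
      have e2 : (xiPt q (3 * q)).2 1 = (q:ℝ)⁻¹ * (3 * q + 1) := by
        simp [xiPt]
      have e3 : (xiPt q 0).2 1 = (q:ℝ)⁻¹ * (0 + 1) := by
        simp [xiPt]
      rw [e2, e3, Real.dist_eq]
      have e4 : (q:ℝ)⁻¹ * (3 * q + 1) - (q:ℝ)⁻¹ * (0 + 1) = 3 := by field_simp; ring
      rw [e4]
      norm_num
    have t1 := dist_triangle4 (xiPt q (3 * q)) (projAnn 2 (toL (Zl (3 * q * q))))
      (projAnn 2 (toL (Zl 0))) (xiPt q 0)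
    rw [dist_comm (xiPt q (3 * q)) (projAnn 2 _)] at t1
    show 3 - 2 * dd0 ^ nuExp sig0 q ≤
      dist (projAnn 2 (toL (Zl (3 * q * q)))) (projAnn 2 (toL (Zl 0)))
    linarith
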